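/- arXiv:1904.03212 — 5 statements merged into one kernel-verified Lean document; each statement's English description precedes it below -/
import Mathlib

section
/- (Lemma 2) Let A, B ∈ Matrix (Fin n) (Fin n) ℂ have sectoral decompositions A = Rᴴ * D_A * R and B = Sᴴ * D_B * S with R, S invertible, D_A k k = exp(i α k), D_B k k = exp(i β k), where α, β : Fin n → ℝ are antitone (nonincreasing) and α k ∈ (θ₁, θ₁ + π), β k ∈ (θ₂, θ₂ + π) for all k, for some θ₁, θ₂ ∈ ℝ. Let λ : Fin n → ℂ be an enumeration with multiplicity of the eigenvalues of A * B (i.e., the characteristic polynomial of A*B equals ∏ k (X − C(λ k))). Then each λ k is nonzero, and letting γ k be the unique real in (θ₁ + θ₂, θ₁ + θ₂ + 2π) with λ k = ‖λ k‖ * exp(i γ k), the vector γ is majorized by α + β: for every Finset s ⊆ Fin n, ∑_{i∈s} γ i ≤ ∑_{i : (i : ℕ) < s.card} (α i + β i), and ∑_i γ i = ∑_i α i + ∑_i β i. -/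
open Matrix Polynomial
open scoped Real

/-
For an accretive matrix (`Re ⟨x, M x⟩ > 0` for `x ≠ 0`), and for a product of two such, no
eigenvalue lies on `(-∞, 0]`, so the sum of the principal logarithms of the eigenvalues is a
continuous branch of `log det`. Accretive matrices form a convex set, hence by connectedness this
branch is additive on products of two accretive matrices, and the sum of the phases of an accretive
matrix is invariant under congruence.

Rotate `A` and `B` so that both become accretive. Any `k` eigenvalues of `A * B` are those of its
action `L` on an invariant subspace, spanned by the columns of `Y` say, and
`L = (Zᴴ * A * Z) * (Yᴴ * B * Y)` for a suitable `Z`. By additivity the phases of `L` sum to those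
of the two compressions, and a `k`-dimensional compression of a sectoral matrix has phase sum at
most the sum of its `k` largest phases.
-/

section CharpolyRoots

theorem roots_prod_X_sub_C_comp {ι R : Type*} [Fintype ι] [CommRing R] [IsDomain R] (f : ι → R) :
    (∏ i, (X - C (f i))).roots = Finset.univ.val.map f := by
  rw [← roots_multiset_prod_X_sub_C (Finset.univ.val.map f), Multiset.map_map]
  rfl

variable {m K : Type*} [Fintype m] [DecidableEq m] [Field K]

theorem ne_zero_of_mem_roots_charpoly {M : Matrix m m K} (hM : IsUnit M) {z : K}
    (hz : z ∈ M.charpoly.roots) : z ≠ 0 := by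
  rintro rfl
  rw [isUnit_iff_isUnit_det, isUnit_iff_ne_zero, det_eq_sign_charpoly_coeff,
    coeff_zero_eq_eval_zero, (isRoot_of_mem_roots hz).eq_zero, mul_zero] at hM
  exact hM rfl

variable [IsAlgClosed K]

theorem card_roots_charpoly (M : Matrix m m K) : M.charpoly.roots.card = Fintype.card m := by
  rw [IsAlgClosed.card_roots_eq_natDegree, charpoly_natDegree_eq_dim]

theorem det_smul_one_add_smul (M : Matrix m m K) (a b : K) :
    det (a • (1 : Matrix m m K) + b • M) = (M.charpoly.roots.map fun z => a + b * z).prod := by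
  obtain rfl | hb := eq_or_ne b 0
  · simp [card_roots_charpoly]
  have hfactor : a • (1 : Matrix m m K) + b • M = (-b) • (scalar m (-a / b) - M) := by
    rw [smul_sub, scalar_apply, ← smul_one_eq_diagonal, smul_smul, neg_smul, sub_neg_eq_add]
    congr 2
    field_simp
  rw [hfactor, det_smul, ← eval_charpoly,
    (IsAlgClosed.splits _).eval_eq_prod_roots_of_monic (charpoly_monic M),
    ← card_roots_charpoly M,
    ← Multiset.prod_replicate, ← Multiset.map_const', ← Multiset.prod_map_mul]
  refine congrArg Multiset.prod (Multiset.map_congr rfl fun z _ => ?_)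
  field_simp
  ring

theorem roots_charpoly_smul (c : K) (M : Matrix m m K) :
    (c • M).charpoly.roots = M.charpoly.roots.map (c * ·) := by
  have h : (c • M).charpoly = ((M.charpoly.roots.map (c * ·)).map fun z => X - C z).prod := by
    refine Polynomial.funext fun t => ?_
    rw [eval_charpoly, scalar_apply, ← smul_one_eq_diagonal, sub_eq_add_neg, ← neg_smul,
      det_smul_one_add_smul, eval_multiset_prod]
    simp [Multiset.map_map, sub_eq_add_neg]
  rw [h, roots_multiset_prod_X_sub_C]

end CharpolyRoots

section LogDet

variable {m : Type*} [Fintype m] [DecidableEq m]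

/-- The sum of the principal logarithms of the eigenvalues of `M`, counted with algebraic
multiplicity: the branch of `log (det M)` whose imaginary part is the sum of the phases of `M`. -/
noncomputable def logDet (M : Matrix m m ℂ) : ℂ :=
  (M.charpoly.roots.map Complex.log).sum

theorem logDet_im (M : Matrix m m ℂ) : (logDet M).im = (M.charpoly.roots.map Complex.arg).sum := by
  refine (map_multiset_sum Complex.imAddGroupHom _).trans ?_
  simp only [Multiset.map_map, Function.comp_def, Complex.coe_imAddGroupHom, Complex.log_im]

theorem logDet_diagonal (d : m → ℂ) : logDet (diagonal d) = ∑ i, Complex.log (d i) := by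
  rw [logDet, charpoly_diagonal, roots_prod_X_sub_C_comp, Multiset.map_map]
  rfl

theorem logDet_one : logDet (1 : Matrix m m ℂ) = 0 := by
  simp [← diagonal_one, logDet_diagonal]

theorem exp_logDet {M : Matrix m m ℂ} (hM : IsUnit M) : Complex.exp (logDet M) = M.det := by
  rw [logDet, Complex.exp_multiset_sum, Multiset.map_map, det_eq_prod_roots_charpoly]
  conv_rhs => rw [← Multiset.map_id M.charpoly.roots]
  exact congrArg Multiset.prod (Multiset.map_congr rfl fun z hz =>
    Complex.exp_log (ne_zero_of_mem_roots_charpoly hM hz))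

open scoped ComplexOrder in
theorem logDet_im_of_posDef {P : Matrix m m ℂ} (hP : P.PosDef) : (logDet P).im = 0 := by
  rw [logDet_im, hP.1.roots_charpoly_eq_eigenvalues, Multiset.map_map]
  refine Multiset.sum_eq_zero fun x hx => ?_
  obtain ⟨i, -, rfl⟩ := Multiset.mem_map.1 hx
  exact Complex.arg_ofReal_of_nonneg (hP.eigenvalues_pos i).le

theorem mem_slitPlane_of_mem_roots_charpoly {M : Matrix m m ℂ}
    (hM : spectrum ℂ M ⊆ Complex.slitPlane) {z : ℂ} (hz : z ∈ M.charpoly.roots) :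
    z ∈ Complex.slitPlane :=
  hM (mem_spectrum_iff_isRoot_charpoly.2 (isRoot_of_mem_roots hz))

theorem one_sub_add_mul_mem_slitPlane (s : unitInterval) {z : ℂ} (hz : z ∈ Complex.slitPlane) :
    1 - (s : ℂ) + s * z ∈ Complex.slitPlane := by
  simpa using Complex.starConvex_one_slitPlane hz (unitInterval.one_minus_nonneg s) s.2.1
    (sub_add_cancel 1 (s : ℝ))

-- The logarithms sum to a lift of `(s, M) ↦ det ((1 - s) + s M)` through `exp` that is continuous
-- in `s` and constant at `s = 0`; such a lift through a covering map is jointly continuous.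
theorem continuousOn_logDet :
    ContinuousOn (logDet (m := m)) {M | spectrum ℂ M ⊆ Complex.slitPlane} := by
  have hslit (s : unitInterval) (M : {M : Matrix m m ℂ | spectrum ℂ M ⊆ Complex.slitPlane})
      (z : ℂ) (hz : z ∈ M.1.charpoly.roots) : 1 - (s : ℂ) + s * z ∈ Complex.slitPlane :=
    one_sub_add_mul_mem_slitPlane s (mem_slitPlane_of_mem_roots_charpoly M.2 hz)
  let G (p : unitInterval × {M : Matrix m m ℂ | spectrum ℂ M ⊆ Complex.slitPlane}) : ℂ :=
    (p.2.1.charpoly.roots.map fun z => Complex.log (1 - (p.1 : ℂ) + p.1 * z)).sum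
  let f (p : unitInterval × {M : Matrix m m ℂ | spectrum ℂ M ⊆ Complex.slitPlane}) : ℂ :=
    det ((1 - (p.1 : ℂ)) • (1 : Matrix m m ℂ) + (p.1 : ℂ) • p.2.1)
  have hexp (p) : Complex.exp (G p) = f p := by
    rw [Complex.exp_multiset_sum, Multiset.map_map]
    refine (congrArg Multiset.prod (Multiset.map_congr rfl fun z hz => ?_)).trans
      (det_smul_one_add_smul p.2.1 _ _).symm
    exact Complex.exp_log (Complex.slitPlane_ne_zero (hslit p.1 p.2 z hz))
  have hf : Continuous f := by fun_prop
  have hG : Continuous G :=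
    Complex.isCoveringMap_exp.isLocalHomeomorph.continuous_lift
      Complex.isCoveringMap_exp.isSeparatedMap
      (f := ⟨fun p => ⟨f p, hexp p ▸ Complex.exp_ne_zero _⟩, by fun_prop⟩)
      (funext fun p => Subtype.ext (hexp p))
      (by simpa [G] using continuous_const)
      fun M => continuous_multiset_sum _ fun z hz =>
        Continuous.clog (by fun_prop) fun s => hslit s M z hz
  rw [continuousOn_iff_continuous_domRestrict]
  refine (hG.comp (Continuous.prodMk_right 1)).congr fun M => ?_
  simp [G, logDet]

end LogDet

section Accretive

open scoped ComplexOrder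

variable {m k : Type*} [Fintype m] [Fintype k]

/-- A matrix is accretive (strictly) if its numerical range lies in the open right half-plane,
equivalently if its Hermitian part is positive definite. -/
def IsAccretive (M : Matrix m m ℂ) : Prop :=
  ∀ x : m → ℂ, x ≠ 0 → 0 < (star x ⬝ᵥ M *ᵥ x).re

theorem convex_setOf_isAccretive : Convex ℝ {M : Matrix m m ℂ | IsAccretive M} := by
  intro A hA B hB a b ha hb hab x hx
  simpa [add_mulVec, smul_mulVec] using
    convex_Ioi (0 : ℝ) (hA x hx) (hB x hx) ha hb hab

theorem IsAccretive.of_posDef {P : Matrix m m ℂ} (hP : P.PosDef) : IsAccretive P :=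
  fun _ hx => (Complex.pos_iff.1 (hP.dotProduct_mulVec_pos hx)).1

theorem star_dotProduct_conjTranspose_mul_mul (Y : Matrix m k ℂ) (M : Matrix m m ℂ) (x : k → ℂ) :
    star x ⬝ᵥ (Yᴴ * M * Y) *ᵥ x = star (Y *ᵥ x) ⬝ᵥ M *ᵥ (Y *ᵥ x) := by
  rw [← mulVec_mulVec, ← mulVec_mulVec, dotProduct_mulVec, ← star_mulVec]

theorem IsAccretive.conjTranspose_mul_mul {M : Matrix m m ℂ} (hM : IsAccretive M)
    {Y : Matrix m k ℂ} (hY : Function.Injective Y.mulVec) : IsAccretive (Yᴴ * M * Y) := by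
  intro x hx
  rw [star_dotProduct_conjTranspose_mul_mul]
  exact hM _ fun h => hx (hY (h.trans (mulVec_zero Y).symm))

variable [DecidableEq m]

theorem IsAccretive.one : IsAccretive (1 : Matrix m m ℂ) := .of_posDef .one

theorem IsAccretive.isUnit {M : Matrix m m ℂ} (hM : IsAccretive M) : IsUnit M := by
  rw [isUnit_iff_isUnit_det, isUnit_iff_ne_zero]
  intro h
  obtain ⟨v, hv, hMv⟩ := exists_mulVec_eq_zero_iff.2 h
  simpa [hMv] using hM v hv

-- For an eigenvector `v`, the number `⟨B v, A B v⟩ = z * conj ⟨v, B v⟩` excludes `z ≤ 0`.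
theorem IsAccretive.spectrum_mul_subset_slitPlane {A B : Matrix m m ℂ} (hA : IsAccretive A)
    (hB : IsAccretive B) : spectrum ℂ (A * B) ⊆ Complex.slitPlane := by
  intro z hz
  rw [← spectrum_toLin', ← Module.End.hasEigenvalue_iff_mem_spectrum] at hz
  obtain ⟨v, hv⟩ := hz.exists_hasEigenvector
  have hABv : (A * B) *ᵥ v = z • v := hv.apply_eq_smul
  have hBv : B *ᵥ v ≠ 0 := fun h =>
    hv.2 (mulVec_injective_of_isUnit hB.isUnit (h.trans (mulVec_zero B).symm))
  have hquad : star (B *ᵥ v) ⬝ᵥ A *ᵥ (B *ᵥ v) = z * star (star v ⬝ᵥ B *ᵥ v) := by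
    rw [mulVec_mulVec, hABv, dotProduct_smul, smul_eq_mul, star_dotProduct]
  have hpos : 0 < (z * star (star v ⬝ᵥ B *ᵥ v)).re := hquad ▸ hA _ hBv
  rw [Complex.mem_slitPlane_iff]
  by_contra! hle
  rw [Complex.mul_re, hle.2, zero_mul, sub_zero, Complex.star_def, Complex.conj_re] at hpos
  exact hpos.not_ge (mul_nonpos_of_nonpos_of_nonneg hle.1 (hB v hv.2).le)

theorem IsAccretive.spectrum_subset_slitPlane {A : Matrix m m ℂ} (hA : IsAccretive A) :
    spectrum ℂ A ⊆ Complex.slitPlane := by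
  simpa using hA.spectrum_mul_subset_slitPlane .one

theorem IsAccretive.logDet_mul {A B : Matrix m m ℂ} (hA : IsAccretive A) (hB : IsAccretive B) :
    logDet (A * B) = logDet A + logDet B := by
  let s : Set (Matrix m m ℂ × Matrix m m ℂ) := {M | IsAccretive M} ×ˢ {M | IsAccretive M}
  have hs : IsPreconnected s :=
    (convex_setOf_isAccretive.prod convex_setOf_isAccretive).isPreconnected
  have hmul : ContinuousOn (fun p => logDet (p.1 * p.2)) s :=
    continuousOn_logDet.comp (by fun_prop) fun p hp => hp.1.spectrum_mul_subset_slitPlane hp.2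
  have hadd : ContinuousOn (fun p => logDet p.1 + logDet p.2) s :=
    (continuousOn_logDet.comp continuousOn_fst fun p hp => hp.1.spectrum_subset_slitPlane).add
      (continuousOn_logDet.comp continuousOn_snd fun p hp => hp.2.spectrum_subset_slitPlane)
  have hexp (p) (hp : p ∈ s) :
      Complex.exp (logDet (p.1 * p.2)) = Complex.exp (logDet p.1 + logDet p.2) := by
    rw [Complex.exp_add, exp_logDet (hp.1.isUnit.mul hp.2.isUnit), exp_logDet hp.1.isUnit,
      exp_logDet hp.2.isUnit, det_mul]
  have heq : s.EqOn (fun p => logDet (p.1 * p.2)) (fun p => logDet p.1 + logDet p.2) :=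
    Complex.isCoveringMap_exp.eqOn_of_comp_eqOn hs hmul hadd
      (fun p hp => Subtype.ext (hexp p hp)) (a := (1, 1)) ⟨.one, .one⟩ (by simp [logDet_one])
  exact heq (x := (A, B)) ⟨hA, hB⟩

theorem IsAccretive.logDet_im_conjTranspose_mul_mul {C G : Matrix m m ℂ} (hC : IsAccretive C)
    (hG : IsUnit G) : (logDet (Gᴴ * C * G)).im = (logDet C).im := by
  have hP : (G * Gᴴ).PosDef := by
    simpa using PosDef.one.mul_mul_conjTranspose_same (vecMul_injective_of_isUnit hG)
  have hcyclic : logDet (Gᴴ * C * G) = logDet (C * (G * Gᴴ)) := by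
    rw [logDet, Matrix.mul_assoc, charpoly_mul_comm, Matrix.mul_assoc, logDet]
  rw [hcyclic, hC.logDet_mul (.of_posDef hP), Complex.add_im, logDet_im_of_posDef hP, add_zero]

end Accretive

section Deflation

variable {K : Type*} [Field K] {n : ℕ}

theorem exists_isUnit_vecMul_eq_single {w x : Fin (n + 1) → K} (h : w ⬝ᵥ x ≠ 0) :
    ∃ G : Matrix (Fin (n + 1)) (Fin (n + 1)) K,
      IsUnit G ∧ G.col 0 = x ∧ w ᵥ* G = Pi.single 0 (w ⬝ᵥ x) := by
  let N : Submodule K (Fin (n + 1) → K) := LinearMap.ker (dotProductBilin K K w)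
  have hxN : ∀ c : K, ∀ y ∈ N, c • x + y = 0 → c = 0 := by
    intro c y hy hxy
    have hw : c * (w ⬝ᵥ x) + w ⬝ᵥ y = 0 := by
      rw [← smul_eq_mul, ← dotProduct_smul, ← dotProduct_add, hxy, dotProduct_zero]
    rw [show w ⬝ᵥ y = 0 from hy, add_zero] at hw
    exact (mul_eq_zero.1 hw).resolve_right h
  have hspan : ∀ z : Fin (n + 1) → K, ∃ c : K, z + c • x ∈ N := fun z =>
    ⟨-(w ⬝ᵥ z) / (w ⬝ᵥ x), by
      change w ⬝ᵥ (z + _ • x) = 0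
      rw [dotProduct_add, dotProduct_smul, smul_eq_mul, div_mul_cancel₀ _ h, add_neg_cancel]⟩
  have hrank : Module.finrank K N = n := by
    have hw : dotProductBilin K K w ≠ 0 := fun hw => h (congrArg (fun f => f x) hw)
    have := Module.Dual.finrank_ker_add_one_of_ne_zero hw
    rwa [Module.finrank_fin_fun, add_left_inj] at this
  let b := Module.finBasisOfFinrankEq K N hrank
  let B := Module.Basis.mkFinCons x b hxN hspan
  have hB : ⇑B = Fin.cons x ((↑) ∘ b) := Module.Basis.coe_mkFinCons ..
  refine ⟨.of fun i j => B j i, ?_, by ext i; simp [hB], ?_⟩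
  · rw [← linearIndependent_cols_iff_isUnit]
    exact B.linearIndependent
  · ext j
    change w ⬝ᵥ B j = _
    cases j using Fin.cases with
    | zero => simp [hB]
    | succ j =>
      rw [hB, Fin.cons_succ, Pi.single_eq_of_ne (Fin.succ_ne_zero j)]
      exact (b j).2

theorem charpoly_eq_mul_charpoly_submatrix_succ {R : Type*} [CommRing R]
    {M : Matrix (Fin (n + 1)) (Fin (n + 1)) R} {r : R} (hM : M.row 0 = Pi.single 0 r) :
    M.charpoly = (X - C r) * (M.submatrix Fin.succ Fin.succ).charpoly := by
  have hentry (j : Fin (n + 1)) : M 0 j = (Pi.single 0 r : Fin (n + 1) → R) j := congrFun hM j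
  have hsub : M.charmatrix.submatrix Fin.succ Fin.succ =
      (M.submatrix Fin.succ Fin.succ).charmatrix := by
    ext i j : 2
    simp [charmatrix_apply, diagonal_apply]
  rw [charpoly, det_succ_row_zero, Fin.sum_univ_succ, Finset.sum_eq_zero, add_zero]
  · simp [hsub, charpoly, Fin.succAbove_zero, hentry]
  · intro j _
    simp [charmatrix_apply_ne _ _ _ (Fin.succ_ne_zero j).symm, hentry]

theorem roots_charpoly_eq_cons {R : Type*} [CommRing R] [IsDomain R]
    {M : Matrix (Fin (n + 1)) (Fin (n + 1)) R} {r : R} (hM : M.row 0 = Pi.single 0 r) :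
    M.charpoly.roots = r ::ₘ (M.submatrix Fin.succ Fin.succ).charpoly.roots := by
  rw [charpoly_eq_mul_charpoly_submatrix_succ hM,
    roots_mul (mul_ne_zero (X_sub_C_ne_zero r) (charpoly_monic _).ne_zero), roots_X_sub_C,
    Multiset.singleton_add]

theorem exists_vecMul_eq_smul_of_mem_roots_charpoly {m : Type*} [Fintype m] [DecidableEq m]
    {M : Matrix m m K} {μ : K} (hμ : μ ∈ M.charpoly.roots) : ∃ w ≠ 0, w ᵥ* M = μ • w := by
  have hdet : (scalar m μ - M).det = 0 := by
    rw [← eval_charpoly]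
    exact isRoot_of_mem_roots hμ
  obtain ⟨w, hw, hwM⟩ := exists_vecMul_eq_zero_iff.2 hdet
  refine ⟨w, hw, ?_⟩
  rw [vecMul_sub, sub_eq_zero, scalar_apply, ← smul_one_eq_diagonal, vecMul_smul, vecMul_one] at hwM
  exact hwM.symm

theorem mulVec_injective_submatrix_id {m k : Type*} [Fintype m] [DecidableEq m] [Fintype k]
    {G : Matrix m m K} (hG : IsUnit G) {e : k → m} (he : Function.Injective e) :
    Function.Injective (G.submatrix id e).mulVec :=
  mulVec_injective_iff.2 ((linearIndependent_cols_iff_isUnit.2 hG).comp e he)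

theorem mulVec_injective_mul {R l m k : Type*} [Semiring R] [Fintype m] [Fintype k]
    {P : Matrix l m R} {Q : Matrix m k R} (hP : Function.Injective P.mulVec)
    (hQ : Function.Injective Q.mulVec) : Function.Injective (P * Q).mulVec := by
  simpa only [Function.comp_def, mulVec_mulVec] using hP.comp hQ

theorem exists_mul_eq_mul_of_mem_roots_charpoly {M : Matrix (Fin (n + 1)) (Fin (n + 1)) K} {μ : K}
    (hμ : μ ∈ M.charpoly.roots) :
    ∃ (P : Matrix (Fin (n + 1)) (Fin n) K) (N : Matrix (Fin n) (Fin n) K),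
      Function.Injective P.mulVec ∧ M * P = P * N ∧
        M.charpoly.roots = μ ::ₘ N.charpoly.roots := by
  obtain ⟨w, hw, hwM⟩ := exists_vecMul_eq_smul_of_mem_roots_charpoly hμ
  obtain ⟨i, hi⟩ := Function.ne_iff.1 hw
  have hwi : w ⬝ᵥ Pi.single i 1 ≠ 0 := by simpa using hi
  obtain ⟨G, hG, -, hwG⟩ := exists_isUnit_vecMul_eq_single hwi
  have hGG : G * G⁻¹ = 1 := mul_nonsing_inv G ((isUnit_iff_isUnit_det G).1 hG)
  set M' := G⁻¹ * M * G with hM'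
  have hMG : M * G = G * M' := by
    rw [hM', ← Matrix.mul_assoc, ← Matrix.mul_assoc, hGG, Matrix.one_mul]
  have hrow : M'.row 0 = Pi.single 0 μ := by
    have hwM' : (w ᵥ* G) ᵥ* M' = μ • (w ᵥ* G) := by
      rw [vecMul_vecMul, ← hMG, ← vecMul_vecMul, hwM, smul_vecMul]
    rw [hwG, single_vecMul, ← Pi.single_smul, smul_eq_mul, mul_comm, ← smul_eq_mul,
      Pi.single_smul] at hwM'
    exact smul_right_injective _ hwi hwM'
  have hchar : M'.charpoly = M.charpoly := by
    lift G to (Matrix (Fin (n + 1)) (Fin (n + 1)) K)ˣ using hG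
    exact charpoly_units_conj' G M
  refine ⟨G.submatrix id Fin.succ, M'.submatrix Fin.succ Fin.succ, ?_, ?_, ?_⟩
  · exact mulVec_injective_submatrix_id hG (Fin.succ_injective n)
  · ext i j
    have h := congrFun₂ hMG i j.succ
    rw [mul_apply, mul_apply, Fin.sum_univ_succ (fun l => G i l * _)] at h
    have h0 : M' 0 j.succ = 0 := by simpa using congrFun hrow j.succ
    simpa [mul_apply, h0] using h
  · rw [← hchar, roots_charpoly_eq_cons hrow]

theorem exists_mul_eq_mul_of_le_roots_charpoly (M : Matrix (Fin n) (Fin n) K) {t : Multiset K}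
    (ht : t ≤ M.charpoly.roots) :
    ∃ (k : ℕ) (Y : Matrix (Fin n) (Fin k) K) (L : Matrix (Fin k) (Fin k) K),
      Function.Injective Y.mulVec ∧ M * Y = Y * L ∧ L.charpoly.roots = t := by
  induction n with
  | zero =>
    obtain rfl : t = 0 := by simpa using ht
    exact ⟨0, 1, M, Function.injective_of_subsingleton _, by simp, by simp⟩
  | succ n ih =>
    obtain rfl | hlt := ht.eq_or_lt
    · exact ⟨n + 1, 1, M, mulVec_injective_of_isUnit isUnit_one, by simp, rfl⟩
    · obtain ⟨μ, hμ⟩ := Multiset.lt_iff_cons_le.1 hlt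
      obtain ⟨P, N, hP, hMP, hN⟩ := exists_mul_eq_mul_of_mem_roots_charpoly
        (Multiset.mem_of_le hμ (Multiset.mem_cons_self μ t))
      rw [hN, Multiset.cons_le_cons_iff] at hμ
      obtain ⟨k, Y, L, hY, hNY, hL⟩ := ih N hμ
      refine ⟨k, P * Y, L, mulVec_injective_mul hP hY, ?_, hL⟩
      rw [← Matrix.mul_assoc, hMP, Matrix.mul_assoc, hNY, Matrix.mul_assoc]

end Deflation

section Compression

-- With `V = A⁻¹ * Y` and `E = Yᴴ * V` one has `Vᴴ * A * V = Eᴴ` and `E * L = Yᴴ * B * Y`, so that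
-- `Z = V * (E⁻¹)ᴴ` gives `Zᴴ * A * Z = E⁻¹`.
theorem IsAccretive.exists_eq_compression_mul_compression {m k : Type*} [Fintype m] [Fintype k]
    {A B : Matrix m m ℂ} {Y : Matrix m k ℂ} {L : Matrix k k ℂ}
    (hA : IsAccretive A) (hY : Function.Injective Y.mulVec) (hL : A * B * Y = Y * L) :
    ∃ Z : Matrix m k ℂ,
      Function.Injective Z.mulVec ∧ L = (Zᴴ * A * Z) * (Yᴴ * B * Y) := by
  classical
  have hAdet : IsUnit A.det := (isUnit_iff_isUnit_det A).1 hA.isUnit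
  obtain ⟨V, hV⟩ : ∃ V, V = A⁻¹ * Y := ⟨_, rfl⟩
  obtain ⟨E, hE⟩ : ∃ E, E = Yᴴ * V := ⟨_, rfl⟩
  have hAV : A * V = Y := hV ▸ mul_nonsing_inv_cancel_left A Y hAdet
  have hVinj : Function.Injective V.mulVec :=
    hV ▸ mulVec_injective_mul (mulVec_injective_of_isUnit (isUnit_nonsing_inv_iff.2 hA.isUnit)) hY
  have hVAV : Vᴴ * A * V = Eᴴ := by
    rw [Matrix.mul_assoc, hAV, hE, conjTranspose_mul, conjTranspose_conjTranspose]
  have hEunit : IsUnit E := by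
    rw [← isUnit_conjTranspose, ← hVAV]
    exact (hA.conjTranspose_mul_mul hVinj).isUnit
  have hEdet : IsUnit E.det := (isUnit_iff_isUnit_det E).1 hEunit
  have hEL : E * L = Yᴴ * B * Y := by
    rw [hE, hV, Matrix.mul_assoc, Matrix.mul_assoc, ← hL, Matrix.mul_assoc A,
      nonsing_inv_mul_cancel_left A _ hAdet, Matrix.mul_assoc]
  have hZAZ : (V * (E⁻¹)ᴴ)ᴴ * A * (V * (E⁻¹)ᴴ) = E⁻¹ :=
    calc (V * (E⁻¹)ᴴ)ᴴ * A * (V * (E⁻¹)ᴴ) = E⁻¹ * (Vᴴ * A * V) * (E⁻¹)ᴴ := by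
          simp only [conjTranspose_mul, conjTranspose_conjTranspose, Matrix.mul_assoc]
      _ = E⁻¹ * (E⁻¹ * E)ᴴ := by rw [hVAV, Matrix.mul_assoc, conjTranspose_mul]
      _ = E⁻¹ := by rw [nonsing_inv_mul E hEdet, conjTranspose_one, Matrix.mul_one]
  refine ⟨V * (E⁻¹)ᴴ, mulVec_injective_mul hVinj (mulVec_injective_of_isUnit ?_), ?_⟩
  · rwa [isUnit_conjTranspose, isUnit_nonsing_inv_iff]
  · rw [hZAZ, ← hEL, nonsing_inv_mul_cancel_left E L hEdet]

theorem IsAccretive.exists_logDet_im_eq_arg_add {k : ℕ} {C : Matrix (Fin (k + 1)) (Fin (k + 1)) ℂ}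
    (hC : IsAccretive C) {x : Fin (k + 1) → ℂ} (hx : x ≠ 0) :
    ∃ P : Matrix (Fin (k + 1)) (Fin k) ℂ, Function.Injective P.mulVec ∧
      (logDet C).im = Complex.arg (star x ⬝ᵥ C *ᵥ x) + (logDet (Pᴴ * C * P)).im := by
  have hquad : star x ᵥ* C ⬝ᵥ x ≠ 0 := by
    rw [← dotProduct_mulVec]
    intro h
    simpa [h] using hC x hx
  obtain ⟨G, hG, hGx, hGC⟩ := exists_isUnit_vecMul_eq_single hquad
  have hrow : (Gᴴ * C * G).row 0 = Pi.single 0 (star x ⬝ᵥ C *ᵥ x) := by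
    rw [dotProduct_mulVec, ← hGC, ← hGx]
    rfl
  refine ⟨G.submatrix id Fin.succ, mulVec_injective_submatrix_id hG (Fin.succ_injective k), ?_⟩
  rw [← hC.logDet_im_conjTranspose_mul_mul hG, logDet_im, roots_charpoly_eq_cons hrow,
    Multiset.map_cons, Multiset.sum_cons, ← logDet_im]
  rfl

theorem star_dotProduct_diagonal_mulVec {m : Type*} [Fintype m] [DecidableEq m] (d y : m → ℂ) :
    star y ⬝ᵥ diagonal d *ᵥ y = ∑ i, (Complex.normSq (y i) : ℂ) * d i := by
  refine Finset.sum_congr rfl fun i _ => ?_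
  rw [mulVec_diagonal, Complex.normSq_eq_conj_mul_self, Pi.star_apply, Complex.star_def]
  ring

theorem isAccretive_diagonal {m : Type*} [Fintype m] [DecidableEq m] {d : m → ℂ}
    (hd : ∀ i, 0 < (d i).re) : IsAccretive (diagonal d) := by
  intro x hx
  obtain ⟨j, hj⟩ := Function.ne_iff.1 hx
  rw [star_dotProduct_diagonal_mulVec, Complex.re_sum]
  simp only [Complex.re_ofReal_mul]
  exact Finset.sum_pos' (fun i _ => mul_nonneg (Complex.normSq_nonneg _) (hd i).le)
    ⟨j, Finset.mem_univ _, mul_pos (Complex.normSq_pos.2 hj) (hd j)⟩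

theorem isAccretive_diagonal_exp_mul_I {m : Type*} [Fintype m] [DecidableEq m] {α : m → ℝ}
    (hα : ∀ i, α i ∈ Set.Ioo (-(π / 2)) (π / 2)) :
    IsAccretive (diagonal fun i => Complex.exp (α i * Complex.I)) :=
  isAccretive_diagonal fun i => by
    rw [Complex.exp_ofReal_mul_I_re]
    exact Real.cos_pos_of_mem_Ioo (hα i)

theorem norm_mul_sin_arg_sub (z : ℂ) (b : ℝ) :
    ‖z‖ * Real.sin (z.arg - b) = z.im * Real.cos b - z.re * Real.sin b := by
  rw [Real.sin_sub, mul_sub, ← mul_assoc, ← mul_assoc, Complex.norm_mul_sin_arg,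
    Complex.norm_mul_cos_arg]

theorem arg_sum_ofReal_mul_exp_le {ι : Type*} {s : Finset ι} {w α : ι → ℝ} {b : ℝ}
    (hw : ∀ i ∈ s, 0 ≤ w i) (hα : ∀ i ∈ s, α i ∈ Set.Ioo (-(π / 2)) (π / 2))
    (hαb : ∀ i ∈ s, w i ≠ 0 → α i ≤ b) (hb : b ∈ Set.Ioo (-(π / 2)) (π / 2))
    (hre : 0 < (∑ i ∈ s, (w i : ℂ) * Complex.exp (α i * Complex.I)).re) :
    (∑ i ∈ s, (w i : ℂ) * Complex.exp (α i * Complex.I)).arg ≤ b := by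
  set z := ∑ i ∈ s, (w i : ℂ) * Complex.exp (α i * Complex.I) with hz
  have hsin : z.im * Real.cos b - z.re * Real.sin b = ∑ i ∈ s, w i * Real.sin (α i - b) := by
    simp only [hz, Complex.im_sum, Complex.re_sum, Complex.im_ofReal_mul, Complex.re_ofReal_mul,
      Complex.exp_ofReal_mul_I_im, Complex.exp_ofReal_mul_I_re, Finset.sum_mul,
      ← Finset.sum_sub_distrib, Real.sin_sub]
    exact Finset.sum_congr rfl fun i _ => by ring
  have hle : ∑ i ∈ s, w i * Real.sin (α i - b) ≤ 0 := by
    refine Finset.sum_nonpos fun i hi => ?_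
    obtain h | h := eq_or_ne (w i) 0
    · simp [h]
    · refine mul_nonpos_of_nonneg_of_nonpos (hw i hi) (Real.sin_nonpos_of_nonpos_of_neg_pi_le ?_ ?_)
      · linarith [hαb i hi h]
      · linarith [(hα i hi).1, hb.2]
  rw [← hsin, ← norm_mul_sin_arg_sub] at hle
  have hz0 : z ≠ 0 := fun h => by simp [h] at hre
  have harg : z.arg < π / 2 := (abs_lt.1 (Complex.abs_arg_lt_pi_div_two_iff.2 (.inl hre))).2
  by_contra! hlt
  refine hle.not_gt (mul_pos (norm_pos_iff.2 hz0) (Real.sin_pos_of_pos_of_lt_pi ?_ ?_))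
  · linarith
  · linarith [hb.1]

theorem exists_ne_zero_mulVec_eq_zero_of_lt {K : Type*} [Field K] {n k : ℕ} (hk : k ≤ n)
    (Y : Matrix (Fin n) (Fin (k + 1)) K) :
    ∃ x ≠ 0, ∀ i : Fin n, (i : ℕ) < k → (Y *ᵥ x) i = 0 := by
  let T := (Y.submatrix (Fin.castLE hk) id).mulVecLin
  obtain ⟨x, hxT, hx⟩ := (Submodule.ne_bot_iff _).1
    (LinearMap.ker_ne_bot_of_finrank_lt (f := T) (by simp))
  exact ⟨x, hx, fun i hi => congrFun (LinearMap.mem_ker.1 hxT) ⟨i, hi⟩⟩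

-- Peel off a vector `x` for which `Y *ᵥ x` vanishes in the first `k` coordinates: its quadratic
-- form only involves phases that are at most the `k`-th one.
theorem logDet_im_conjTranspose_mul_diagonal_exp_mul_le {n k : ℕ} (hk : k ≤ n) {α : Fin n → ℝ}
    (hα : Antitone α) (hαmem : ∀ i, α i ∈ Set.Ioo (-(π / 2)) (π / 2))
    {Y : Matrix (Fin n) (Fin k) ℂ} (hY : Function.Injective Y.mulVec) :
    (logDet (Yᴴ * diagonal (fun i => Complex.exp (α i * Complex.I)) * Y)).im ≤
      ∑ j : Fin k, α (Fin.castLE hk j) := by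
  induction k with
  | zero => simp [logDet_im]
  | succ k ih =>
    have hC := (isAccretive_diagonal_exp_mul_I hαmem).conjTranspose_mul_mul hY
    obtain ⟨x, hx, hYx⟩ := exists_ne_zero_mulVec_eq_zero_of_lt (k.le_succ.trans hk) Y
    obtain ⟨P, hP, hCP⟩ := hC.exists_logDet_im_eq_arg_add hx
    have hlast : Complex.arg (star x ⬝ᵥ
        (Yᴴ * diagonal (fun i => Complex.exp (α i * Complex.I)) * Y) *ᵥ x) ≤
        α (Fin.castLE hk (Fin.last k)) := by
      have hre := hC x hx
      rw [star_dotProduct_conjTranspose_mul_mul, star_dotProduct_diagonal_mulVec] at hre ⊢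
      refine arg_sum_ofReal_mul_exp_le (fun i _ => Complex.normSq_nonneg _) (fun i _ => hαmem i)
        (fun i _ hi => hα ?_) (hαmem _) hre
      by_contra! hlt
      exact hi (by rw [hYx i hlt, map_zero])
    rw [Fin.sum_univ_castSucc, hCP, add_comm]
    refine add_le_add (le_of_eq_of_le ?_ (ih (k.le_succ.trans hk) (mulVec_injective_mul hY hP)))
      hlast
    simp only [conjTranspose_mul, Matrix.mul_assoc]

end Compression

section Sectoral

variable {m : Type*} [Fintype m] [DecidableEq m]

/-- `A` admits a sectoral decomposition with phases `α`. The diagonal unitary factor is encoded by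
its phases, which are arbitrary reals here; a sector is imposed on them where it is needed. -/
def IsSectoral (A : Matrix m m ℂ) (α : m → ℝ) : Prop :=
  ∃ R : Matrix m m ℂ, IsUnit R ∧ A = Rᴴ * diagonal (fun i => Complex.exp (α i * Complex.I)) * R

theorem isSectoral_of_isDiag {A D R : Matrix m m ℂ} {α : m → ℝ} (hR : IsUnit R) (hD : D.IsDiag)
    (hDα : ∀ k, D k k = Complex.exp (α k * Complex.I)) (hA : A = Rᴴ * D * R) :
    IsSectoral A α :=
  ⟨R, hR, by rw [hA, ← funext hDα]; exact congrArg (Rᴴ * · * R) hD.diagonal_diag.symm⟩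

theorem IsSectoral.exp_smul {A : Matrix m m ℂ} {α : m → ℝ} (hA : IsSectoral A α) (θ : ℝ) :
    IsSectoral (Complex.exp (θ * Complex.I) • A) (fun k => α k + θ) := by
  obtain ⟨R, hR, rfl⟩ := hA
  refine ⟨R, hR, ?_⟩
  have hphase (k : m) : Complex.exp ((α k + θ : ℝ) * Complex.I) =
      Complex.exp (θ * Complex.I) * Complex.exp (α k * Complex.I) := by
    rw [← Complex.exp_add, ← add_mul, add_comm (α k), Complex.ofReal_add]
  rw [funext hphase, ← Matrix.smul_mul, ← Matrix.mul_smul, ← diagonal_smul]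
  rfl

theorem IsSectoral.isUnit {A : Matrix m m ℂ} {α : m → ℝ} (hA : IsSectoral A α) :
    IsUnit A := by
  obtain ⟨R, hR, rfl⟩ := hA
  refine ((isUnit_conjTranspose R).2 hR |>.mul ?_).mul hR
  rw [isUnit_diagonal, Pi.isUnit_iff]
  exact fun i => (Complex.exp_ne_zero _).isUnit

theorem IsSectoral.isAccretive {A : Matrix m m ℂ} {α : m → ℝ} (hA : IsSectoral A α)
    (hα : ∀ k, α k ∈ Set.Ioo (-(π / 2)) (π / 2)) : IsAccretive A := by
  obtain ⟨R, hR, rfl⟩ := hA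
  exact (isAccretive_diagonal_exp_mul_I hα).conjTranspose_mul_mul (mulVec_injective_of_isUnit hR)

theorem IsSectoral.logDet_im_eq_sum {A : Matrix m m ℂ} {α : m → ℝ} (hA : IsSectoral A α)
    (hα : ∀ k, α k ∈ Set.Ioo (-(π / 2)) (π / 2)) : (logDet A).im = ∑ k, α k := by
  obtain ⟨R, hR, rfl⟩ := hA
  rw [(isAccretive_diagonal_exp_mul_I hα).logDet_im_conjTranspose_mul_mul hR, logDet_diagonal,
    Complex.im_sum]
  refine Finset.sum_congr rfl fun k _ => ?_
  rw [Complex.log_im, Complex.exp_mul_I, Complex.arg_cos_add_sin_mul_I]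
  constructor <;> linarith [(hα k).1, (hα k).2, Real.pi_pos]

theorem IsSectoral.logDet_im_conjTranspose_mul_mul_le {n k : ℕ} (hk : k ≤ n)
    {A : Matrix (Fin n) (Fin n) ℂ} {α : Fin n → ℝ} (hA : IsSectoral A α) (hα : Antitone α)
    (hαmem : ∀ i, α i ∈ Set.Ioo (-(π / 2)) (π / 2)) {Y : Matrix (Fin n) (Fin k) ℂ}
    (hY : Function.Injective Y.mulVec) :
    (logDet (Yᴴ * A * Y)).im ≤ ∑ j : Fin k, α (Fin.castLE hk j) := by
  obtain ⟨R, hR, rfl⟩ := hA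
  refine le_of_eq_of_le ?_ (logDet_im_conjTranspose_mul_diagonal_exp_mul_le hk hα hαmem
    (mulVec_injective_mul (mulVec_injective_of_isUnit hR) hY))
  simp only [conjTranspose_mul, Matrix.mul_assoc]

end Sectoral

section Majorization

theorem sum_castLE_eq_sum_filter_lt {M : Type*} [AddCommMonoid M] {n k : ℕ} (hk : k ≤ n)
    (g : Fin n → M) :
    ∑ j : Fin k, g (Fin.castLE hk j) = ∑ i ∈ {i : Fin n | (i : ℕ) < k}, g i :=
  Finset.sum_bij (fun j _ => Fin.castLE hk j) (fun j _ => by simp)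
    (fun _ _ _ _ h => Fin.castLE_injective hk h)
    (fun i hi => ⟨⟨i, (Finset.mem_filter.1 hi).2⟩, Finset.mem_univ _, rfl⟩) fun _ _ => rfl

/-- The argument of `z` in the window `(θ - π, θ + π]` centred at `θ`. -/
noncomputable def argAround (θ : ℝ) (z : ℂ) : ℝ :=
  θ + Complex.arg (Complex.exp ((-θ : ℝ) * Complex.I) * z)

theorem argAround_mul_exp {r θ φ : ℝ} (hr : 0 < r) (hφ : φ ∈ Set.Ioc (θ - π) (θ + π)) :
    argAround θ (r * Complex.exp (φ * Complex.I)) = φ := by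
  have hrot : Complex.exp ((-θ : ℝ) * Complex.I) * (r * Complex.exp (φ * Complex.I)) =
      r * Complex.exp ((φ - θ : ℝ) * Complex.I) := by
    rw [mul_left_comm, ← Complex.exp_add, ← add_mul, ← Complex.ofReal_add, neg_add_eq_sub]
  rw [argAround, hrot, Complex.exp_mul_I, Complex.arg_mul_cos_add_sin_mul_I hr, add_sub_cancel]
  constructor <;> linarith [hφ.1, hφ.2]

theorem sum_map_argAround (θ : ℝ) (t : Multiset ℂ) :
    (t.map (argAround θ)).sum =
      t.card * θ + ((t.map (Complex.exp ((-θ : ℝ) * Complex.I) * ·)).map Complex.arg).sum := by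
  unfold argAround
  simp only [Multiset.sum_map_add, Multiset.map_const', Multiset.sum_replicate,
    nsmul_eq_mul, Multiset.map_map, Function.comp_def]

theorem exp_smul_mul_exp_smul {m : Type*} [Fintype m] (θ₁ θ₂ : ℝ) (A B : Matrix m m ℂ) :
    (Complex.exp ((-θ₁ : ℝ) * Complex.I) • A) * (Complex.exp ((-θ₂ : ℝ) * Complex.I) • B) =
      Complex.exp ((-(θ₁ + θ₂) : ℝ) * Complex.I) • (A * B) := by
  rw [smul_mul_smul_comm, ← Complex.exp_add, ← add_mul, ← Complex.ofReal_add, neg_add]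

variable {n : ℕ} {A B : Matrix (Fin n) (Fin n) ℂ} {α β : Fin n → ℝ}

theorem IsSectoral.sum_map_arg_le_of_le_roots_charpoly_mul (hA : IsSectoral A α)
    (hB : IsSectoral B β) (hα : Antitone α) (hβ : Antitone β)
    (hαmem : ∀ i, α i ∈ Set.Ioo (-(π / 2)) (π / 2)) (hβmem : ∀ i, β i ∈ Set.Ioo (-(π / 2)) (π / 2))
    {t : Multiset ℂ} (ht : t ≤ (A * B).charpoly.roots) :
    (t.map Complex.arg).sum ≤ ∑ i ∈ {i : Fin n | (i : ℕ) < t.card}, (α i + β i) := by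
  have hcard := Multiset.card_le_card ht
  obtain ⟨k, Y, L, hY, hLY, rfl⟩ := exists_mul_eq_mul_of_le_roots_charpoly _ ht
  simp only [card_roots_charpoly, Fintype.card_fin] at hcard ⊢
  have hA' := hA.isAccretive hαmem
  obtain ⟨Z, hZ, hL⟩ := hA'.exists_eq_compression_mul_compression hY hLY
  calc (L.charpoly.roots.map Complex.arg).sum
      = (logDet (Zᴴ * A * Z)).im + (logDet (Yᴴ * B * Y)).im := by
        rw [← logDet_im, hL, (hA'.conjTranspose_mul_mul hZ).logDet_mul
          ((hB.isAccretive hβmem).conjTranspose_mul_mul hY), Complex.add_im]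
    _ ≤ ∑ j : Fin k, α (Fin.castLE hcard j) + ∑ j : Fin k, β (Fin.castLE hcard j) :=
        add_le_add (hA.logDet_im_conjTranspose_mul_mul_le hcard hα hαmem hZ)
          (hB.logDet_im_conjTranspose_mul_mul_le hcard hβ hβmem hY)
    _ = ∑ i ∈ {i : Fin n | (i : ℕ) < k}, (α i + β i) := by
        rw [← Finset.sum_add_distrib, ← sum_castLE_eq_sum_filter_lt hcard]

theorem IsSectoral.sum_map_argAround_le_of_le_roots_charpoly_mul {θ₁ θ₂ : ℝ} (hA : IsSectoral A α)
    (hB : IsSectoral B β) (hα : Antitone α) (hβ : Antitone β)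
    (hαmem : ∀ i, α i ∈ Set.Ioo (θ₁ - π / 2) (θ₁ + π / 2))
    (hβmem : ∀ i, β i ∈ Set.Ioo (θ₂ - π / 2) (θ₂ + π / 2))
    {t : Multiset ℂ} (ht : t ≤ (A * B).charpoly.roots) :
    (t.map (argAround (θ₁ + θ₂))).sum ≤
      ∑ i ∈ {i : Fin n | (i : ℕ) < t.card}, (α i + β i) := by
  have hcard : t.card ≤ n := by simpa [card_roots_charpoly] using Multiset.card_le_card ht
  have h := (hA.exp_smul (-θ₁)).sum_map_arg_le_of_le_roots_charpoly_mul (hB.exp_smul (-θ₂))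
    (hα.add_const _) (hβ.add_const _) (fun i => ?_) (fun i => ?_)
    (t := t.map (Complex.exp ((-(θ₁ + θ₂) : ℝ) * Complex.I) * ·)) ?_
  · have hshift :
        ∑ i ∈ {i : Fin n | (i : ℕ) < t.card}, ((α i + -θ₁) + (β i + -θ₂)) =
          ∑ i ∈ {i : Fin n | (i : ℕ) < t.card}, (α i + β i) - t.card * (θ₁ + θ₂) := by
      rw [Finset.sum_congr rfl fun i _ => show (α i + -θ₁) + (β i + -θ₂) =
        (α i + β i) - (θ₁ + θ₂) by ring, Finset.sum_sub_distrib, Finset.sum_const,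
        Fin.card_filter_val_lt, min_eq_right hcard, nsmul_eq_mul]
    rw [Multiset.card_map, hshift] at h
    rw [sum_map_argAround]
    linarith
  · constructor <;> linarith [(hαmem i).1, (hαmem i).2]
  · constructor <;> linarith [(hβmem i).1, (hβmem i).2]
  · rw [exp_smul_mul_exp_smul, roots_charpoly_smul]
    exact Multiset.map_le_map ht

theorem IsSectoral.sum_map_argAround_roots_charpoly_mul {m : Type*} [Fintype m] [DecidableEq m]
    {θ₁ θ₂ : ℝ} {A B : Matrix m m ℂ} {α β : m → ℝ} (hA : IsSectoral A α) (hB : IsSectoral B β)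
    (hαmem : ∀ i, α i ∈ Set.Ioo (θ₁ - π / 2) (θ₁ + π / 2))
    (hβmem : ∀ i, β i ∈ Set.Ioo (θ₂ - π / 2) (θ₂ + π / 2)) :
    ((A * B).charpoly.roots.map (argAround (θ₁ + θ₂))).sum = ∑ i, α i + ∑ i, β i := by
  have hαmem' (i) : α i + -θ₁ ∈ Set.Ioo (-(π / 2)) (π / 2) := by
    constructor <;> linarith [(hαmem i).1, (hαmem i).2]
  have hβmem' (i) : β i + -θ₂ ∈ Set.Ioo (-(π / 2)) (π / 2) := by
    constructor <;> linarith [(hβmem i).1, (hβmem i).2]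
  have hA' := hA.exp_smul (-θ₁)
  have hB' := hB.exp_smul (-θ₂)
  have h := congrArg Complex.im ((hA'.isAccretive hαmem').logDet_mul (hB'.isAccretive hβmem'))
  rw [exp_smul_mul_exp_smul, Complex.add_im, hA'.logDet_im_eq_sum hαmem',
    hB'.logDet_im_eq_sum hβmem', logDet_im, roots_charpoly_smul] at h
  rw [sum_map_argAround, h, card_roots_charpoly, Finset.sum_add_distrib, Finset.sum_add_distrib,
    Finset.sum_const, Finset.sum_const, Finset.card_univ, nsmul_eq_mul, nsmul_eq_mul]
  ring

end Majorization

/-- Lemma 2: the phases of the eigenvalues of a product `A * B` of two cramped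
(sectorally decomposed) matrices are majorized by the sum of the phases of `A` and the
phases of `B`. -/
theorem angle_eigenvalues_mul_majorized {n : ℕ}
    (θ₁ θ₂ : ℝ) (α β : Fin n → ℝ)
    (hα : Antitone α) (hβ : Antitone β)
    (hαmem : ∀ k, α k ∈ Set.Ioo θ₁ (θ₁ + π)) (hβmem : ∀ k, β k ∈ Set.Ioo θ₂ (θ₂ + π))
    (A B R S DA DB : Matrix (Fin n) (Fin n) ℂ)
    (hR : IsUnit R) (hS : IsUnit S) (hDA : DA.IsDiag) (hDB : DB.IsDiag)
    (hDAk : ∀ k, DA k k = Complex.exp ((α k : ℂ) * Complex.I))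
    (hDBk : ∀ k, DB k k = Complex.exp ((β k : ℂ) * Complex.I))
    (hA : A = R.conjTranspose * DA * R) (hB : B = S.conjTranspose * DB * S)
    (lam : Fin n → ℂ)
    (hlam : (A * B).charpoly = ∏ k, (X - Polynomial.C (lam k))) :
    (∀ k, lam k ≠ 0) ∧
    ∀ γ : Fin n → ℝ,
      (∀ k, γ k ∈ Set.Ioo (θ₁ + θ₂) (θ₁ + θ₂ + 2 * π) ∧
        lam k = (‖lam k‖ : ℂ) * Complex.exp ((γ k : ℂ) * Complex.I)) →
      (∀ s : Finset (Fin n),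
        ∑ i ∈ s, γ i ≤ ∑ i ∈ Finset.univ.filter (fun i : Fin n => (i : ℕ) < s.card),
          (α i + β i)) ∧
      ∑ i, γ i = ∑ i, α i + ∑ i, β i := by
  have hAα := isSectoral_of_isDiag hR hDA hDAk hA
  have hBβ := isSectoral_of_isDiag hS hDB hDBk hB
  have hroots := (congrArg roots hlam).trans (roots_prod_X_sub_C_comp lam)
  have hne (k) : lam k ≠ 0 := ne_zero_of_mem_roots_charpoly (hAα.isUnit.mul hBβ.isUnit)
    (hroots ▸ Multiset.mem_map_of_mem lam (Finset.mem_univ_val k))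
  refine ⟨hne, fun γ hγ => ?_⟩
  have hαmem' (k) : α k ∈ Set.Ioo (θ₁ + π / 2 - π / 2) (θ₁ + π / 2 + π / 2) := by
    simpa [add_assoc] using hαmem k
  have hβmem' (k) : β k ∈ Set.Ioo (θ₂ + π / 2 - π / 2) (θ₂ + π / 2 + π / 2) := by
    simpa [add_assoc] using hβmem k
  have hγ_eq (k) : argAround (θ₁ + π / 2 + (θ₂ + π / 2)) (lam k) = γ k := by
    rw [(hγ k).2]
    refine argAround_mul_exp (norm_pos_iff.2 (hne k)) ⟨?_, ?_⟩ <;>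
      linarith [(hγ k).1.1, (hγ k).1.2]
  have hsum (s : Finset (Fin n)) :
      ((s.val.map lam).map (argAround (θ₁ + π / 2 + (θ₂ + π / 2)))).sum = ∑ k ∈ s, γ k := by
    rw [Multiset.map_map, ← funext hγ_eq]
    rfl
  refine ⟨fun s => ?_, ?_⟩
  · have hle := hroots ▸ Multiset.map_le_map (Finset.val_le_iff.2 s.subset_univ)
    simpa only [hsum, Multiset.card_map, Finset.card_val] using
      hAα.sum_map_argAround_le_of_le_roots_charpoly_mul hBβ hα hβ hαmem' hβmem' hle
  · rw [← hsum, ← hroots, hAα.sum_map_argAround_roots_charpoly_mul hBβ hαmem' hβmem']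
end

section
/- (KYP lemma) Let A ∈ Matrix (Fin n) (Fin n) ℂ have no eigenvalue on the imaginary axis (for every ω ∈ ℝ, det(ω•Complex.I•1 − A) ≠ 0), let B ∈ Matrix (Fin n) (Fin m) ℂ, and let M ∈ Matrix (Fin n ⊕ Fin m) (Fin n ⊕ Fin m) ℂ be Hermitian. For ω ∈ ℝ let F(ω) ∈ Matrix (Fin n ⊕ Fin m) (Fin m) ℂ be the vertical concatenation of (ω•I•1 − A)⁻¹ * B on top of the identity 1. Then the following are equivalent: (a) for all ω ∈ ℝ the Hermitian matrix −(F(ω)ᴴ * M * F(ω)) is positive definite, and the m×m lower-right block M₂₂ = (fun i j => M (Sum.inr i) (Sum.inr j)) satisfies (−M₂₂).PosDef; (b) there exists a Hermitian X ∈ Matrix (Fin n) (Fin n) ℂ such that −(M + Matrix.fromBlocks (Aᴴ*X + X*A) (X*B) (Bᴴ*X) 0) is positive definite. -/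
open Matrix
open scoped ComplexOrder

/-- The frequency-response matrix `F(ω) = [((jω)I - A)⁻¹ B ; I]` appearing in the
KYP lemma: the vertical concatenation of `(ω • j • 1 - A)⁻¹ * B` on top of the identity. -/
noncomputable def kypF {n m : ℕ} (A : Matrix (Fin n) (Fin n) ℂ)
    (B : Matrix (Fin n) (Fin m) ℂ) (ω : ℝ) : Matrix (Fin n ⊕ Fin m) (Fin m) ℂ :=
  Matrix.fromRows (((ω : ℂ) • Complex.I • (1 : Matrix (Fin n) (Fin n) ℂ) - A)⁻¹ * B)
    (1 : Matrix (Fin m) (Fin m) ℂ)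

/-!
Write `C = [A B]` and `J = [1 0]`, so that the linear matrix inequality in `X` reads
`M + Cᴴ X J + Jᴴ X C ≺ 0`. By Hahn–Banach separation over the compact convex set of density
matrices, it is solvable unless there is a density matrix `Z` with `C Z Jᴴ + J Z Cᴴ = 0` and
`0 ≤ Re tr (M Z)`. Factor such a `Z` as `W Wᴴ`. The relation yields a skew-adjoint map `K` on
the range of `(J W)ᴴ` with `C W = J W K` there; diagonalising `K` splits `Z` into rank-one terms
`w wᴴ` with `J w = 0` or `C w = i ω J w`. These `w` are exactly the vectors in the range of
`[0; 1]` or of some `F(ω)`, on which the frequency-domain inequality makes `wᴴ M w` negative, a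
contradiction. Conversely `wᴴ (Cᴴ X J + Jᴴ X C) w = 0` for all such `w`, so a solution `X` forces
`wᴴ M w < 0`.
-/

section DensityMatrix

variable {𝕜 N : Type*} [RCLike 𝕜] [Fintype N]

theorem posDef_neg_iff_re_dotProduct_mulVec_neg {P : Matrix N N 𝕜} (hP : P.IsHermitian) :
    (-P).PosDef ↔ ∀ w ≠ 0, RCLike.re (star w ⬝ᵥ P *ᵥ w) < 0 := by
  refine ⟨fun h w hw => ?_, fun h => .of_dotProduct_mulVec_pos hP.neg fun w hw => ?_⟩
  · simpa [neg_mulVec] using h.re_dotProduct_pos hw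
  · exact RCLike.pos_iff.mpr
      ⟨by simpa [neg_mulVec] using h w hw, hP.neg.im_star_dotProduct_mulVec_self w⟩

theorem trace_mul_vecMulVec_self_star (P : Matrix N N 𝕜) (w : N → 𝕜) :
    (P * vecMulVec w (star w)).trace = star w ⬝ᵥ P *ᵥ w := by
  rw [mul_vecMulVec, trace_vecMulVec, dotProduct_comm]

theorem re_trace_mul_conjTranspose_self (W : Matrix N N 𝕜) :
    RCLike.re (W * Wᴴ).trace = ∑ i, ∑ j, ‖W i j‖ ^ 2 := by
  simp only [trace, diag_apply, mul_apply, conjTranspose_apply, RCLike.star_def, RCLike.mul_conj,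
    map_sum]
  norm_cast

open scoped MatrixOrder in
theorem exists_eq_mul_conjTranspose_of_posSemidef {Z : Matrix N N 𝕜} (hZ : Z.PosSemidef) :
    ∃ W : Matrix N N 𝕜, Z = W * Wᴴ := by
  classical
  have hsqrt : (CFC.sqrt Z)ᴴ = CFC.sqrt Z := (CFC.sqrt_nonneg Z).posSemidef.isHermitian
  exact ⟨CFC.sqrt Z, by rw [hsqrt, CFC.sqrt_mul_sqrt_self Z hZ.nonneg]⟩

variable (𝕜 N) in
/-- The density matrices: positive semidefinite matrices of unit trace. They form a compact convex
base of the cone of positive semidefinite matrices. -/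
def densityMatrices : Set (Matrix N N 𝕜) :=
  {Z | Z.PosSemidef ∧ Z.trace = 1}

theorem convex_densityMatrices : Convex ℝ (densityMatrices 𝕜 N) := by
  rintro Y ⟨hY, hY1⟩ Z ⟨hZ, hZ1⟩ a b ha hb hab
  refine ⟨(hY.smul ha).add (hZ.smul hb), ?_⟩
  rw [trace_add, trace_smul, trace_smul, hY1, hZ1, ← add_smul, hab, one_smul]

theorem densityMatrices_eq_image :
    densityMatrices 𝕜 N = (fun W => W * Wᴴ) '' {W : Matrix N N 𝕜 | (W * Wᴴ).trace = 1} := by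
  ext Z
  constructor
  · rintro ⟨hZ, hZ1⟩
    obtain ⟨W, rfl⟩ := exists_eq_mul_conjTranspose_of_posSemidef hZ
    exact ⟨W, hZ1, rfl⟩
  · rintro ⟨W, hW, rfl⟩
    exact ⟨posSemidef_self_mul_conjTranspose W, hW⟩

open scoped Matrix.Norms.Elementwise in
theorem isCompact_trace_mul_conjTranspose_eq_one :
    IsCompact {W : Matrix N N 𝕜 | (W * Wᴴ).trace = 1} := by
  have : ProperSpace (Matrix N N 𝕜) := FiniteDimensional.proper 𝕜 _
  refine (isCompact_closedBall 0 1).of_isClosed_subset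
    (isClosed_eq (by fun_prop) continuous_const) fun W hW => ?_
  have hsum : ∑ i, ∑ j, ‖W i j‖ ^ 2 = 1 := by
    rw [← re_trace_mul_conjTranspose_self, hW.out, RCLike.one_re]
  refine mem_closedBall_zero_iff.mpr ((norm_le_iff zero_le_one).mpr fun i j => ?_)
  refine (sq_le_one_iff₀ (norm_nonneg _)).mp ?_
  calc ‖W i j‖ ^ 2 ≤ ∑ j, ‖W i j‖ ^ 2 :=
        Finset.single_le_sum (f := fun j => ‖W i j‖ ^ 2) (fun _ _ => by positivity)
          (Finset.mem_univ j)
    _ ≤ ∑ i, ∑ j, ‖W i j‖ ^ 2 :=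
        Finset.single_le_sum (f := fun i => ∑ j, ‖W i j‖ ^ 2) (fun _ _ => by positivity)
          (Finset.mem_univ i)
    _ = 1 := hsum

theorem isCompact_densityMatrices : IsCompact (densityMatrices 𝕜 N) := by
  rw [densityMatrices_eq_image]
  exact isCompact_trace_mul_conjTranspose_eq_one.image (by fun_prop)

theorem inv_smul_vecMulVec_mem_densityMatrices {w : N → 𝕜} (hw : w ≠ 0) :
    (RCLike.re (star w ⬝ᵥ w))⁻¹ • vecMulVec w (star w) ∈ densityMatrices 𝕜 N := by
  obtain ⟨hre, him⟩ := RCLike.pos_iff.mp (dotProduct_star_self_pos_iff.mpr hw)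
  refine ⟨(posSemidef_vecMulVec_self_star w).smul (inv_pos.mpr hre).le, ?_⟩
  have hreal : star w ⬝ᵥ w = (RCLike.re (star w ⬝ᵥ w) : 𝕜) := RCLike.ext (by simp) (by simp [him])
  rw [trace_smul, trace_vecMulVec, dotProduct_comm w, hreal, RCLike.ofReal_re,
    RCLike.real_smul_eq_coe_mul, ← RCLike.ofReal_mul, inv_mul_cancel₀ hre.ne', RCLike.ofReal_one]

theorem posDef_neg_of_forall_densityMatrices {P : Matrix N N 𝕜} (hP : P.IsHermitian)
    (h : ∀ Z ∈ densityMatrices 𝕜 N, RCLike.re (P * Z).trace < 0) : (-P).PosDef := by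
  refine (posDef_neg_iff_re_dotProduct_mulVec_neg hP).mpr fun w hw => ?_
  have hre := (RCLike.pos_iff.mp (dotProduct_star_self_pos_iff.mpr hw)).1
  have hneg := h _ (inv_smul_vecMulVec_mem_densityMatrices hw)
  rw [mul_smul_comm, trace_smul, trace_mul_vecMulVec_self_star, RCLike.smul_re] at hneg
  exact (pos_iff_neg_of_mul_neg hneg).mp (inv_pos.mpr hre)

end DensityMatrix

section Duality

theorem exists_continuousLinearMap_add_lt_zero {E V : Type*}
    [AddCommGroup E] [Module ℝ E] [TopologicalSpace E]
    [AddCommGroup V] [Module ℝ V] [TopologicalSpace V] [IsTopologicalAddGroup V]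
    [ContinuousSMul ℝ V] [LocallyConvexSpace ℝ V] [T1Space V]
    {K : Set E} (hK : Convex ℝ K) (hKc : IsCompact K) (T : E →L[ℝ] V) (c : E →L[ℝ] ℝ)
    (h : ∀ z ∈ K, T z = 0 → c z < 0) :
    ∃ g : V →L[ℝ] ℝ, ∀ z ∈ K, c z + g (T z) < 0 := by
  have hdisj : Disjoint (T.prod c '' K) ({0} ×ˢ Set.Ici 0) := by
    rw [Set.disjoint_left]
    rintro _ ⟨z, hz, rfl⟩ ⟨hT, hc⟩
    exact (h z hz hT).not_ge hc
  obtain ⟨f, u, v, hu, huv, hv⟩ := geometric_hahn_banach_compact_closed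
    (hK.linear_image (T.prod c).toLinearMap) (hKc.image (T.prod c).continuous)
    ((convex_singleton 0).prod (convex_Ici 0)) (isClosed_singleton.prod isClosed_Ici) hdisj
  have hf (x : V) (t : ℝ) : f (x, t) = f (x, 0) + t * f (0, 1) := by
    rw [← smul_eq_mul, ← map_smul, ← map_add]
    simp
  have hv0 : v < 0 := by simpa [Prod.mk_zero_zero] using hv (0, 0) (by simp)
  have hf1 : 0 ≤ f (0, 1) := by
    by_contra! hneg
    have := hv (0, v / f (0, 1)) ⟨rfl, (div_pos_of_neg_of_neg hv0 hneg).le⟩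
    rw [hf] at this
    simp [Prod.mk_zero_zero, hneg.ne] at this
  -- The weight `f (0, 1)` of `c` may vanish; adding a small `ε` keeps strictness as `c` is bounded.
  obtain ⟨k, hk⟩ := hKc.bddAbove_image c.continuous.continuousOn
  obtain ⟨ε, hε, hkε⟩ := exists_pos_mul_lt (neg_pos.mpr (huv.trans hv0)) k
  have hpos : 0 < f (0, 1) + ε := by linarith
  refine ⟨(f (0, 1) + ε)⁻¹ • f.comp (.inl ℝ V ℝ), fun z hz => ?_⟩
  have hfz : f (T z, 0) + c z * f (0, 1) < u := hf (T z) (c z) ▸ hu _ ⟨z, hz, rfl⟩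
  have hcz : c z * ε ≤ k * ε := mul_le_mul_of_nonneg_right (hk ⟨z, hz, rfl⟩) hε.le
  calc c z + (f (0, 1) + ε)⁻¹ * f (T z, 0)
      = (f (0, 1) + ε)⁻¹ * (f (T z, 0) + c z * f (0, 1) + c z * ε) := by
        field_simp
        ring
    _ < 0 := mul_neg_of_pos_of_neg (inv_pos.mpr hpos) (by linarith)

variable {𝕜 p : Type*} [RCLike 𝕜] [Fintype p]

theorem exists_isHermitian_re_trace_mul_eq (g : Matrix p p 𝕜 →ₗ[ℝ] ℝ) :
    ∃ X : Matrix p p 𝕜, X.IsHermitian ∧ ∀ Y, Y.IsHermitian → RCLike.re (X * Y).trace = g Y := by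
  let H := selfAdjoint.submodule ℝ (Matrix p p 𝕜)
  let pairing : H →ₗ[ℝ] Module.Dual ℝ H := LinearMap.mk₂ ℝ
    (fun X Y => RCLike.re ((X : Matrix p p 𝕜) * (Y : Matrix p p 𝕜)).trace)
    (by simp [Matrix.add_mul]) (by simp [RCLike.smul_re])
    (by simp [Matrix.mul_add]) (by simp [RCLike.smul_re])
  have hinj : Function.Injective pairing := by
    refine (injective_iff_map_eq_zero pairing).mpr fun X hX => ?_
    have hre : RCLike.re ((X : Matrix p p 𝕜) * Xᴴ).trace = 0 := by
      rw [show (X : Matrix p p 𝕜)ᴴ = X from X.2]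
      exact LinearMap.congr_fun hX X
    have him := (RCLike.nonneg_iff.mp (posSemidef_self_mul_conjTranspose X.1).trace_nonneg).2
    exact Subtype.ext (trace_mul_conjTranspose_self_eq_zero_iff.mp
      (RCLike.ext (by simpa using hre) (by simpa using him)))
  have hsurj : Function.Surjective pairing :=
    (LinearMap.injective_iff_surjective_of_finrank_eq_finrank Subspace.dual_finrank_eq.symm).mp hinj
  obtain ⟨X, hX⟩ := hsurj (g ∘ₗ H.subtype)
  exact ⟨X, X.2, fun Y hY => LinearMap.congr_fun hX ⟨Y, hY⟩⟩

variable {N : Type*}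

/-- The Lyapunov operator `X ↦ Cᴴ X J + Jᴴ X C` of the matrix pencil `C - s J`, which is the
usual `X ↦ Aᴴ X + X A` for the pencil `A - s 1`. -/
def pencilLyapunov (C J : Matrix p N 𝕜) : Matrix p p 𝕜 →ₗ[ℝ] Matrix N N 𝕜 where
  toFun X := Cᴴ * X * J + Jᴴ * X * C
  map_add' X Y := by
    simp only [Matrix.mul_add, Matrix.add_mul]
    abel
  map_smul' a X := by simp

theorem pencilLyapunov_apply (C J : Matrix p N 𝕜) (X : Matrix p p 𝕜) :
    pencilLyapunov C J X = Cᴴ * X * J + Jᴴ * X * C := rfl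

theorem isHermitian_pencilLyapunov (C J : Matrix p N 𝕜) {X : Matrix p p 𝕜} (hX : X.IsHermitian) :
    (pencilLyapunov C J X).IsHermitian := by
  simp [IsHermitian, pencilLyapunov_apply, hX.eq, Matrix.mul_assoc, add_comm]

variable [Fintype N]

theorem trace_pencilLyapunov_mul (C J : Matrix p N 𝕜) (X : Matrix p p 𝕜) (Z : Matrix N N 𝕜) :
    (pencilLyapunov C J X * Z).trace = (X * pencilLyapunov Cᴴ Jᴴ Z).trace := by
  have hcycle (S T : Matrix p N 𝕜) : (Sᴴ * X * T * Z).trace = (X * (T * Z * Sᴴ)).trace := by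
    rw [Matrix.mul_assoc, Matrix.mul_assoc, trace_mul_comm]
    simp only [Matrix.mul_assoc]
  simp only [pencilLyapunov_apply, conjTranspose_conjTranspose, Matrix.add_mul, Matrix.mul_add,
    trace_add, hcycle]
  exact add_comm _ _

theorem exists_isHermitian_posDef_neg_add_pencilLyapunov (C J : Matrix p N 𝕜) {M : Matrix N N 𝕜}
    (hM : M.IsHermitian)
    (h : ∀ Z ∈ densityMatrices 𝕜 N, pencilLyapunov Cᴴ Jᴴ Z = 0 → RCLike.re (M * Z).trace < 0) :
    ∃ X : Matrix p p 𝕜, X.IsHermitian ∧ (-(M + pencilLyapunov C J X)).PosDef := by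
  have : LocallyConvexSpace ℝ (Matrix p p 𝕜) :=
    inferInstanceAs (LocallyConvexSpace ℝ (p → p → 𝕜))
  let L : Matrix N N 𝕜 →L[ℝ] Matrix p p 𝕜 := (pencilLyapunov Cᴴ Jᴴ).toContinuousLinearMap
  let c : Matrix N N 𝕜 →L[ℝ] ℝ := LinearMap.toContinuousLinearMap
    (RCLike.reLm ∘ₗ traceLinearMap N ℝ 𝕜 ∘ₗ LinearMap.mulLeft ℝ M)
  obtain ⟨g, hg⟩ := exists_continuousLinearMap_add_lt_zero (K := densityMatrices 𝕜 N)
    convex_densityMatrices isCompact_densityMatrices L c h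
  obtain ⟨X, hX, hXg⟩ := exists_isHermitian_re_trace_mul_eq g.toLinearMap
  refine ⟨X, hX, posDef_neg_of_forall_densityMatrices
    (hM.add (isHermitian_pencilLyapunov C J hX)) fun Z hZ => ?_⟩
  rw [Matrix.add_mul, trace_add, map_add, trace_pencilLyapunov_mul,
    hXg _ (isHermitian_pencilLyapunov _ _ hZ.1.isHermitian)]
  exact hg Z hZ

end Duality

section SkewAdjoint

open LinearMap
open scoped InnerProductSpace

variable {𝕜 E V : Type*} [RCLike 𝕜]
  [NormedAddCommGroup E] [InnerProductSpace 𝕜 E] [FiniteDimensional 𝕜 E]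
  [NormedAddCommGroup V] [InnerProductSpace 𝕜 V] [FiniteDimensional 𝕜 V]

theorem exists_skewAdjoint_comp_eq_on_range_adjoint {F G : E →ₗ[𝕜] V}
    (h : G ∘ₗ adjoint F + F ∘ₗ adjoint G = 0) :
    ∃ K : range (adjoint F) →ₗ[𝕜] range (adjoint F),
      (∀ r, F (K r) = G r) ∧ ∀ a b, ⟪K a, b⟫_𝕜 = -⟪a, K b⟫_𝕜 := by
  have hGF (y : V) : G (adjoint F y) = -F (adjoint G y) :=
    eq_neg_of_add_eq_zero_left (LinearMap.congr_fun h y)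
  have hsolve (r : range (adjoint F)) : ∃ s : range (adjoint F), F s = G r := by
    obtain ⟨_, y, rfl⟩ := r
    have hmem : G (adjoint F y) ∈ range (F ∘ₗ adjoint F) := by
      rw [range_self_comp_adjoint, hGF]
      exact neg_mem (mem_range_self F _)
    obtain ⟨z, hz⟩ := hmem
    exact ⟨⟨adjoint F z, mem_range_self _ z⟩, hz⟩
  have hinj : ker (F.domRestrict (range (adjoint F))) = ⊥ := by
    rw [ker_eq_bot']
    rintro ⟨_, y, rfl⟩ hy
    have hzero : ⟪adjoint F y, adjoint F y⟫_𝕜 = 0 := by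
      rw [adjoint_inner_right, show F (adjoint F y) = 0 from hy, inner_zero_left]
    exact Subtype.ext (inner_self_eq_zero.mp hzero)
  obtain ⟨L, hL⟩ := exists_leftInverse_of_injective _ hinj
  have hFL (r : range (adjoint F)) : F (L (G r)) = G r := by
    obtain ⟨s, hs⟩ := hsolve r
    rw [← hs, show L (F s) = s from LinearMap.congr_fun hL s]
  refine ⟨L ∘ₗ G.domRestrict _, hFL, ?_⟩
  rintro a ⟨_, z, rfl⟩
  obtain ⟨y, hy⟩ := a.2
  calc ⟪(L (G a) : E), adjoint F z⟫_𝕜 = ⟪G a, z⟫_𝕜 := by rw [adjoint_inner_right, hFL]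
    _ = -⟪adjoint G y, adjoint F z⟫_𝕜 := by
        rw [← hy, hGF, inner_neg_left, adjoint_inner_right]
    _ = -⟪y, G (adjoint F z)⟫_𝕜 := by rw [adjoint_inner_left]
    _ = -⟪(a : E), L (G (adjoint F z))⟫_𝕜 := by
        rw [← hy, adjoint_inner_left, hFL ⟨_, mem_range_self _ z⟩]

end SkewAdjoint

section ImaginaryAxis

open LinearMap
open scoped InnerProductSpace

variable {E V : Type*} [NormedAddCommGroup E] [InnerProductSpace ℂ E] [FiniteDimensional ℂ E]
  [NormedAddCommGroup V] [InnerProductSpace ℂ V] [FiniteDimensional ℂ V]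

theorem exists_orthonormalBasis_apply_eq_imaginary_smul {K : E →ₗ[ℂ] E}
    (hK : ∀ a b, ⟪K a, b⟫_ℂ = -⟪a, K b⟫_ℂ) :
    ∃ e : OrthonormalBasis (Fin (Module.finrank ℂ E)) ℂ E,
      ∀ i, ∃ ω : ℝ, K (e i) = ((ω : ℂ) * Complex.I) • e i := by
  have hsymm : (Complex.I • K).IsSymmetric := fun a b => by
    simp [inner_smul_left, inner_smul_right, hK]
  refine ⟨hsymm.eigenvectorBasis rfl, fun i => ⟨-hsymm.eigenvalues rfl i, ?_⟩⟩
  let e := hsymm.eigenvectorBasis rfl i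
  calc K e = -Complex.I • (Complex.I • K) e := by simp [smul_smul]
    _ = ((-hsymm.eigenvalues rfl i : ℝ) * Complex.I) • e := by
        rw [hsymm.apply_eigenvectorBasis, smul_smul]
        simp [e, mul_comm]

theorem exists_orthonormalBasis_apply_eq_zero_or_eq_imaginary_smul {F G : E →ₗ[ℂ] V}
    (h : G ∘ₗ adjoint F + F ∘ₗ adjoint G = 0) :
    ∃ (ι : Type) (_ : Fintype ι) (b : OrthonormalBasis ι ℂ E),
      ∀ k, F (b k) = 0 ∨ ∃ ω : ℝ, G (b k) = ((ω : ℂ) * Complex.I) • F (b k) := by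
  obtain ⟨K, hFK, hK⟩ := exists_skewAdjoint_comp_eq_on_range_adjoint h
  obtain ⟨e, he⟩ := exists_orthonormalBasis_apply_eq_imaginary_smul hK
  let b := (e.prod (stdOrthonormalBasis ℂ (range (adjoint F))ᗮ)).map
    (range (adjoint F)).orthogonalDecomposition.symm
  refine ⟨_, inferInstance, b, Sum.rec (fun i => .inr ?_) fun j => .inl ?_⟩
  · obtain ⟨ω, hω⟩ := he i
    have hb : b (.inl i) = e i := by simp [b]
    exact ⟨ω, by rw [hb, ← hFK, hω, Submodule.coe_smul, map_smul]⟩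
  · have hb : b (.inr j) = stdOrthonormalBasis ℂ (range (adjoint F))ᗮ j := by simp [b]
    have hmem : b (.inr j) ∈ (range (adjoint F))ᗮ := hb ▸ Submodule.coe_mem _
    have horth := (Submodule.mem_orthogonal _ _).mp hmem _ (mem_range_self _ (F (b (.inr j))))
    rwa [adjoint_inner_left, inner_self_eq_zero] at horth

variable {N p : Type*} [Fintype N]

/-- `w` is annihilated by the pencil `C - s J` at some point `s` of the extended imaginary axis;
at `s = ∞` the pencil degenerates to `J`. -/
def IsImaginaryAxisMode (C J : Matrix p N ℂ) (w : N → ℂ) : Prop :=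
  J *ᵥ w = 0 ∨ ∃ ω : ℝ, C *ᵥ w = ((ω : ℂ) * Complex.I) • J *ᵥ w

theorem sum_vecMulVec_star_orthonormalBasis {ι : Type*} [Fintype ι] [DecidableEq N]
    (b : OrthonormalBasis ι ℂ (EuclideanSpace ℂ N)) :
    ∑ k, vecMulVec (b k).ofLp (star (b k).ofLp) = 1 := by
  ext i j
  have hparseval := b.sum_inner_mul_inner (EuclideanSpace.single i 1) (EuclideanSpace.single j 1)
  simpa [Matrix.sum_apply, vecMulVec_apply, EuclideanSpace.inner_single_left,
    EuclideanSpace.inner_single_right, one_apply, eq_comm, Pi.single_apply] using hparseval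

theorem exists_eq_sum_vecMulVec_of_pencilLyapunov_eq_zero [Finite p] {C J : Matrix p N ℂ}
    {Z : Matrix N N ℂ} (hZ : Z.PosSemidef) (h : pencilLyapunov Cᴴ Jᴴ Z = 0) :
    ∃ (ι : Type) (_ : Fintype ι) (v : ι → N → ℂ),
      (∀ k, IsImaginaryAxisMode C J (v k)) ∧ Z = ∑ k, vecMulVec (v k) (star (v k)) := by
  classical
  have := Fintype.ofFinite p
  obtain ⟨W, rfl⟩ := exists_eq_mul_conjTranspose_of_posSemidef hZ
  have hskew : (C * W) * (J * W)ᴴ + (J * W) * (C * W)ᴴ = 0 := by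
    simpa [pencilLyapunov_apply, Matrix.mul_assoc] using h
  obtain ⟨ι, _, b, hb⟩ := exists_orthonormalBasis_apply_eq_zero_or_eq_imaginary_smul
    (F := (J * W).toEuclideanLin) (G := (C * W).toEuclideanLin) (by
      rw [← toEuclideanLin_conjTranspose_eq_adjoint, ← toEuclideanLin_conjTranspose_eq_adjoint,
        ← toLpLin_mul, ← toLpLin_mul, ← map_add, hskew, map_zero])
  refine ⟨ι, inferInstance, fun k => W *ᵥ (b k).ofLp, fun k => ?_, ?_⟩
  · simp only [IsImaginaryAxisMode, mulVec_mulVec]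
    exact (hb k).imp (congrArg WithLp.ofLp) fun ⟨ω, hω⟩ => ⟨ω, congrArg WithLp.ofLp hω⟩
  · calc W * Wᴴ = W * (∑ k, vecMulVec (b k).ofLp (star (b k).ofLp)) * Wᴴ := by
          rw [sum_vecMulVec_star_orthonormalBasis, Matrix.mul_one]
      _ = ∑ k, vecMulVec (W *ᵥ (b k).ofLp) (star (W *ᵥ (b k).ofLp)) := by
          simp only [Matrix.mul_sum, Matrix.sum_mul, mul_vecMulVec, vecMulVec_mul, star_mulVec]

theorem star_dotProduct_pencilLyapunov_mulVec_self [Fintype p] {C J : Matrix p N ℂ} {w : N → ℂ}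
    (hw : IsImaginaryAxisMode C J w) (X : Matrix p p ℂ) :
    star w ⬝ᵥ pencilLyapunov C J X *ᵥ w = 0 := by
  have hform : star w ⬝ᵥ pencilLyapunov C J X *ᵥ w =
      star (C *ᵥ w) ⬝ᵥ X *ᵥ J *ᵥ w + star (J *ᵥ w) ⬝ᵥ X *ᵥ C *ᵥ w := by
    simp only [pencilLyapunov_apply, add_mulVec, dotProduct_add, star_mulVec, ← dotProduct_mulVec,
      mulVec_mulVec, Matrix.mul_assoc]
  obtain hJ | ⟨ω, hω⟩ := hw
  · simp [hform, hJ]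
  · simp [hform, hω, mulVec_smul]

theorem kyp_lemma_general [Fintype p] (C J : Matrix p N ℂ) {M : Matrix N N ℂ}
    (hM : M.IsHermitian) :
    (∀ w ≠ 0, IsImaginaryAxisMode C J w → (star w ⬝ᵥ M *ᵥ w).re < 0) ↔
      ∃ X : Matrix p p ℂ, X.IsHermitian ∧ (-(M + pencilLyapunov C J X)).PosDef := by
  constructor
  · intro h
    refine exists_isHermitian_posDef_neg_add_pencilLyapunov C J hM fun Z ⟨hZ, htrace⟩ hCJ => ?_
    obtain ⟨ι, _, v, hv, rfl⟩ := exists_eq_sum_vecMulVec_of_pencilLyapunov_eq_zero hZ hCJ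
    have hnonpos (k : ι) : (star (v k) ⬝ᵥ M *ᵥ v k).re ≤ 0 := by
      obtain hk | hk := eq_or_ne (v k) 0
      · simp [hk]
      · exact (h _ hk (hv k)).le
    obtain ⟨k, hk⟩ : ∃ k, v k ≠ 0 := by
      by_contra! hzero
      simp [hzero] at htrace
    simp only [Matrix.mul_sum, trace_sum, trace_mul_vecMulVec_self_star, map_sum]
    exact Finset.sum_neg' (fun k _ => hnonpos k) ⟨k, Finset.mem_univ k, h _ hk (hv k)⟩
  · rintro ⟨X, hX, hneg⟩ w hw hmode
    have hre := (posDef_neg_iff_re_dotProduct_mulVec_neg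
      (hM.add (isHermitian_pencilLyapunov C J hX))).mp hneg w hw
    rwa [add_mulVec, dotProduct_add, star_dotProduct_pencilLyapunov_mulVec_self hmode, add_zero]
      at hre

end ImaginaryAxis

section FrequencyResponse

variable {𝕜 N κ : Type*} [RCLike 𝕜] [Fintype N] [Fintype κ]

theorem posDef_neg_conjTranspose_mul_mul_iff {M : Matrix N N 𝕜} (hM : M.IsHermitian)
    {T : Matrix N κ 𝕜} (hT : Function.Injective T.mulVec) :
    (-(Tᴴ * M * T)).PosDef ↔
      ∀ w ≠ 0, w ∈ Set.range T.mulVec → RCLike.re (star w ⬝ᵥ M *ᵥ w) < 0 := by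
  have hform (y : κ → 𝕜) : star y ⬝ᵥ (Tᴴ * M * T) *ᵥ y = star (T *ᵥ y) ⬝ᵥ M *ᵥ T *ᵥ y := by
    rw [star_mulVec, ← dotProduct_mulVec, mulVec_mulVec, mulVec_mulVec]
  rw [posDef_neg_iff_re_dotProduct_mulVec_neg (isHermitian_conjTranspose_mul_mul T hM)]
  simp only [hform]
  constructor
  · rintro h _ hw ⟨y, rfl⟩
    exact h y (by rintro rfl; simp at hw)
  · intro h y hy
    exact h _ (fun h0 => hy (hT (by rw [h0, mulVec_zero]))) ⟨y, rfl⟩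

variable {n m : Type*}

theorem mulVec_injective_fromRows_one [Fintype m] [DecidableEq m] (R : Matrix n m 𝕜) :
    Function.Injective (fromRows R (1 : Matrix m m 𝕜)).mulVec := fun y z hyz => by
  simpa [fromRows_mulVec] using congrArg (· ∘ Sum.inr) hyz

theorem mem_range_mulVec_fromRows_one_iff [Fintype m] [DecidableEq m] (R : Matrix n m 𝕜)
    {w : n ⊕ m → 𝕜} :
    w ∈ Set.range (fromRows R (1 : Matrix m m 𝕜)).mulVec ↔
      w ∘ Sum.inl = R *ᵥ (w ∘ Sum.inr) := by
  constructor
  · rintro ⟨y, rfl⟩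
    simp [fromRows_mulVec]
  · intro h
    exact ⟨w ∘ Sum.inr, by rw [fromRows_mulVec, one_mulVec, ← h, Sum.elim_comp_inl_inr]⟩

theorem submatrix_inr_inr_eq_conjTranspose_mul_mul [Fintype n] [Fintype m] [DecidableEq m]
    (M : Matrix (n ⊕ m) (n ⊕ m) 𝕜) :
    M.submatrix Sum.inr Sum.inr =
      (fromRows (0 : Matrix n m 𝕜) (1 : Matrix m m 𝕜))ᴴ * M *
        fromRows (0 : Matrix n m 𝕜) (1 : Matrix m m 𝕜) := by
  rw [← fromBlocks_toBlocks M, conjTranspose_fromRows_eq_fromCols_conjTranspose,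
    fromCols_mul_fromBlocks, fromCols_mul_fromRows]
  ext
  simp

theorem pencilLyapunov_fromCols [Fintype n] [DecidableEq n] (A X : Matrix n n 𝕜)
    (B : Matrix n m 𝕜) :
    pencilLyapunov (fromCols A B) (fromCols 1 0) X =
      fromBlocks (Aᴴ * X + X * A) (X * B) (Bᴴ * X) 0 := by
  rw [pencilLyapunov_apply, conjTranspose_fromCols_eq_fromRows_conjTranspose,
    conjTranspose_fromCols_eq_fromRows_conjTranspose, fromRows_mul _ _ X, fromRows_mul _ _ X,
    fromRows_mul_fromCols, fromRows_mul_fromCols, fromBlocks_add]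
  simp

end FrequencyResponse

section KypPencil

variable {n m : ℕ} {A : Matrix (Fin n) (Fin n) ℂ} {B : Matrix (Fin n) (Fin m) ℂ}

theorem mem_range_mulVec_kypF_iff {ω : ℝ}
    (hω : ((ω : ℂ) • Complex.I • (1 : Matrix (Fin n) (Fin n) ℂ) - A).det ≠ 0)
    {w : Fin n ⊕ Fin m → ℂ} :
    w ∈ Set.range (kypF A B ω).mulVec ↔
      fromCols A B *ᵥ w = ((ω : ℂ) * Complex.I) • fromCols 1 0 *ᵥ w := by
  set R := (ω : ℂ) • Complex.I • (1 : Matrix (Fin n) (Fin n) ℂ) - A with hR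
  have hdet : IsUnit R.det := isUnit_iff_ne_zero.mpr hω
  have hresolvent : w ∘ Sum.inl = (R⁻¹ * B) *ᵥ (w ∘ Sum.inr) ↔
      R *ᵥ (w ∘ Sum.inl) = B *ᵥ (w ∘ Sum.inr) := by
    constructor <;> intro h
    · rw [h, mulVec_mulVec, mul_nonsing_inv_cancel_left _ _ hdet]
    · rw [← mulVec_mulVec, ← h, mulVec_mulVec, nonsing_inv_mul _ hdet, one_mulVec]
  rw [kypF, mem_range_mulVec_fromRows_one_iff, hresolvent, fromCols_mulVec, fromCols_mulVec,
    one_mulVec, zero_mulVec, add_zero, hR, sub_mulVec, smul_smul, smul_mulVec, one_mulVec,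
    sub_eq_iff_eq_add', eq_comm]

theorem isImaginaryAxisMode_fromCols_iff
    (hA : ∀ ω : ℝ, ((ω : ℂ) • Complex.I • (1 : Matrix (Fin n) (Fin n) ℂ) - A).det ≠ 0)
    {w : Fin n ⊕ Fin m → ℂ} :
    IsImaginaryAxisMode (fromCols A B) (fromCols 1 0) w ↔
      w ∈ Set.range (fromRows 0 1 : Matrix (Fin n ⊕ Fin m) (Fin m) ℂ).mulVec ∨
        ∃ ω : ℝ, w ∈ Set.range (kypF A B ω).mulVec := by
  simp only [mem_range_mulVec_kypF_iff (hA _), mem_range_mulVec_fromRows_one_iff]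
  simp [IsImaginaryAxisMode, fromCols_mulVec]

theorem posDef_neg_kypF_and_posDef_neg_submatrix_iff
    (hA : ∀ ω : ℝ, ((ω : ℂ) • Complex.I • (1 : Matrix (Fin n) (Fin n) ℂ) - A).det ≠ 0)
    {M : Matrix (Fin n ⊕ Fin m) (Fin n ⊕ Fin m) ℂ} (hM : M.IsHermitian) :
    ((∀ ω : ℝ, (-((kypF A B ω)ᴴ * M * kypF A B ω)).PosDef) ∧
        (-(M.submatrix Sum.inr Sum.inr)).PosDef) ↔
      ∀ w ≠ 0, IsImaginaryAxisMode (fromCols A B) (fromCols 1 0) w →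
        (star w ⬝ᵥ M *ᵥ w).re < 0 := by
  rw [submatrix_inr_inr_eq_conjTranspose_mul_mul,
    posDef_neg_conjTranspose_mul_mul_iff hM (mulVec_injective_fromRows_one _)]
  simp only [isImaginaryAxisMode_fromCols_iff hA, kypF,
    posDef_neg_conjTranspose_mul_mul_iff hM (mulVec_injective_fromRows_one _)]
  constructor
  · rintro ⟨hF, hM₂₂⟩ w hw (h | ⟨ω, h⟩)
    · exact hM₂₂ w hw h
    · exact hF ω w hw h
  · intro h
    exact ⟨fun ω w hw hr => h w hw (.inr ⟨ω, hr⟩), fun w hw hr => h w hw (.inl hr)⟩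

end KypPencil

/-- KYP lemma: equivalence between a strict frequency-domain inequality over the whole
imaginary axis (including `ω = ∞`, encoded by the lower-right block condition) and the
solvability of a linear matrix inequality. -/
theorem kyp_lemma {n m : ℕ}
    (A : Matrix (Fin n) (Fin n) ℂ) (B : Matrix (Fin n) (Fin m) ℂ)
    (M : Matrix (Fin n ⊕ Fin m) (Fin n ⊕ Fin m) ℂ) (hM : M.IsHermitian)
    (hA : ∀ ω : ℝ, ((ω : ℂ) • Complex.I • (1 : Matrix (Fin n) (Fin n) ℂ) - A).det ≠ 0) :
    ((∀ ω : ℝ, (-((kypF A B ω).conjTranspose * M * kypF A B ω)).PosDef) ∧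
      (-(M.submatrix Sum.inr Sum.inr)).PosDef) ↔
    ∃ X : Matrix (Fin n) (Fin n) ℂ, X.IsHermitian ∧
      (-(M + Matrix.fromBlocks (A.conjTranspose * X + X * A) (X * B)
          (B.conjTranspose * X) 0)).PosDef := by
  simp only [← pencilLyapunov_fromCols, posDef_neg_kypF_and_posDef_neg_submatrix_iff hA hM]
  exact kyp_lemma_general (fromCols A B) (fromCols 1 0) hM
end

section
/- (Generalized KYP lemma for the nonnegative imaginary axis) Let A ∈ Matrix (Fin n) (Fin n) ℂ have no eigenvalue of the form ω*Complex.I with ω ≥ 0, let B ∈ Matrix (Fin n) (Fin m) ℂ, and let M ∈ Matrix (Fin n ⊕ Fin m) (Fin n ⊕ Fin m) ℂ be Hermitian. For ω ≥ 0 let F(ω) be the vertical concatenation of (ω•I•1 − A)⁻¹ * B on top of the identity. Then the following are equivalent: (a) for all ω ≥ 0 the matrix −(F(ω)ᴴ * M * F(ω)) is positive definite, and the lower-right m×m block M₂₂ of M satisfies (−M₂₂).PosDef; (b) there exist Hermitian matrices X, Y ∈ Matrix (Fin n) (Fin n) ℂ with Y positive definite such that, writing K = Matrix.fromBlocks A B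 1 0 and P = Matrix.fromBlocks 0 (X + Complex.I•Y) (X − Complex.I•Y) 0, the matrix −(Kᴴ * P * K + M) is positive definite. -/
open Matrix
open scoped ComplexOrder

/-!
The linear matrix inequality asks the convex cone of all `Kᴴ(Σ ⊗ X + Ψ ⊗ Y)K` to contain some `L`
with `L + M` negative definite. By Hahn–Banach, if it does not then there is a nonzero `W ≥ 0` with
`tr(WM) ≥ 0` and `tr(WL) ≥ 0` on the cone. Factor `W = VVᴴ`, let `H` be the upper block of `V` and
write `AH + BV₂ = jG`: nonnegativity on the cone says exactly that `HGᴴ ≥ 0`. Then `G = (G + H)Q`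
for some Hermitian `Q` with `0 ≤ Q ≤ 1`, so in an eigenbasis of `Q` the columns of `G` and `H` are
pairwise nonnegative multiples of common vectors. Hence, after a unitary change of `V`, every
column `(x, w)` of `V` satisfies `Ax + Bw = jωx` for some `0 ≤ ω ≤ ∞`, where the quadratic form of
`M` is negative, so `tr(WM) < 0`, a contradiction. Conversely, the form of `Kᴴ(Σ ⊗ X + Ψ ⊗ Y)K` at
such an `(x, w)` is `2ω xᴴYx ≥ 0` (and `0` when `ω = ∞`), so a solution of the linear matrix
inequality makes the form of `M` negative there.
-/

section AffinePositivity

variable {K : Type*} [Field K] [LinearOrder K] [IsStrictOrderedRing K] {a b : K}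

theorem nonneg_of_forall_pos_nonneg_add_mul (h : ∀ t > 0, 0 ≤ a + t * b) : 0 ≤ b := by
  by_contra! hb
  have := h ((|a| + 1) / -b) (div_pos (by positivity) (neg_pos.mpr hb))
  rw [div_neg, neg_mul, div_mul_cancel₀ _ hb.ne] at this
  linarith [le_abs_self a]

theorem nonneg_of_forall_pos_nonneg_mul_add (h : ∀ t > 0, 0 ≤ t * a + b) : 0 ≤ b := by
  refine nonneg_of_forall_pos_nonneg_add_mul (a := a) fun t ht ↦ ?_
  have := mul_nonneg ht.le (h t⁻¹ (inv_pos.mpr ht))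
  rwa [mul_add, mul_inv_cancel_left₀ ht.ne'] at this

end AffinePositivity

section MatrixInequalities

variable {𝕜 N : Type*} [RCLike 𝕜] [Fintype N]

variable (𝕜 N) in
/-- The matrices with positive definite Hermitian part. They form an open convex subset of the
space of all square matrices, whose Hermitian members are the positive definite matrices. -/
def strictlyAccretive : Set (Matrix N N 𝕜) :=
  {Z | ∀ v ≠ 0, 0 < RCLike.re (star v ⬝ᵥ (Z *ᵥ v))}

theorem mem_strictlyAccretive_iff_forall_norm_eq_one {Z : Matrix N N 𝕜} :
    Z ∈ strictlyAccretive 𝕜 N ↔ ∀ v, ‖v‖ = 1 → 0 < RCLike.re (star v ⬝ᵥ (Z *ᵥ v)) := by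
  refine ⟨fun h v hv ↦ h v (norm_ne_zero_iff.mp (by simp [hv])), fun h v hv ↦ ?_⟩
  have hpos : 0 < ‖v‖⁻¹ := inv_pos.mpr (norm_pos_iff.mpr hv)
  have hunit := h (‖v‖⁻¹ • v) (by simp [norm_smul, norm_ne_zero_iff.mpr hv])
  simpa [mulVec_smul, RCLike.smul_re, hpos] using hunit

theorem isOpen_strictlyAccretive : IsOpen (strictlyAccretive 𝕜 N) := by
  refine isOpen_iff_eventually.mpr fun Z hZ ↦ ?_
  simp only [mem_strictlyAccretive_iff_forall_norm_eq_one, ← mem_sphere_zero_iff_norm] at hZ ⊢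
  refine (isCompact_sphere 0 1).eventually_forall_of_forall_eventually fun v hv ↦ ?_
  have hcont : Continuous fun p : Matrix N N 𝕜 × (N → 𝕜) ↦
      RCLike.re (star p.2 ⬝ᵥ (p.1 *ᵥ p.2)) := by fun_prop
  exact hcont.continuousAt.eventually (lt_mem_nhds (hZ v hv))

theorem convex_strictlyAccretive : Convex ℝ (strictlyAccretive 𝕜 N) := by
  refine convex_iff_forall_pos.mpr fun Z hZ Z' hZ' a b ha hb _ v hv ↦ ?_
  simpa [add_mulVec, smul_mulVec, RCLike.smul_re] using
    add_pos (mul_pos ha (hZ v hv)) (mul_pos hb (hZ' v hv))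

theorem posDef_iff_isHermitian_and_mem_strictlyAccretive {Z : Matrix N N 𝕜} :
    Z.PosDef ↔ Z.IsHermitian ∧ Z ∈ strictlyAccretive 𝕜 N :=
  ⟨fun h ↦ ⟨h.isHermitian, fun _ hv ↦ h.re_dotProduct_pos hv⟩, fun ⟨hZ, h⟩ ↦
    .of_dotProduct_mulVec_pos hZ fun v hv ↦
      RCLike.pos_iff.mpr ⟨h v hv, hZ.im_star_dotProduct_mulVec_self v⟩⟩

theorem posDef_neg_iff_forall_re_dotProduct_neg {M : Matrix N N 𝕜} (hM : M.IsHermitian) :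
    (-M).PosDef ↔ ∀ v ≠ 0, RCLike.re (star v ⬝ᵥ (M *ᵥ v)) < 0 := by
  simp [posDef_iff_isHermitian_and_mem_strictlyAccretive, hM.neg, strictlyAccretive, neg_mulVec]

theorem posSemidef_of_forall_posDef_re_trace_mul_nonneg {W : Matrix N N 𝕜} (hW : W.IsHermitian)
    (h : ∀ Q : Matrix N N 𝕜, Q.PosDef → 0 ≤ RCLike.re (W * Q).trace) : W.PosSemidef := by
  classical
  refine .of_dotProduct_mulVec_nonneg hW fun v ↦
    RCLike.nonneg_iff.mpr ⟨?_, hW.im_star_dotProduct_mulVec_self v⟩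
  refine nonneg_of_forall_pos_nonneg_mul_add (a := RCLike.re W.trace) fun t ht ↦ ?_
  have hQ : (t • (1 : Matrix N N 𝕜) + vecMulVec v (star v)).PosDef :=
    (PosDef.one.smul ht).add_posSemidef (posSemidef_vecMulVec_self_star v)
  simpa [Matrix.mul_add, RCLike.smul_re, mul_vecMulVec, trace_vecMulVec, dotProduct_comm]
    using h _ hQ

theorem exists_trace_mul_eq {m n R : Type*} [Fintype m] [Fintype n] [CommSemiring R]
    (f : Matrix m n R →ₗ[R] R) : ∃ W : Matrix n m R, ∀ Z, f Z = (W * Z).trace := by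
  classical
  refine ⟨of fun j i ↦ f (single i j 1), fun Z ↦ ?_⟩
  induction Z using Matrix.induction_on' with
  | h_zero => simp
  | h_add Z Z' hZ hZ' => rw [map_add, hZ, hZ', Matrix.mul_add, trace_add]
  | h_std_basis i j x =>
    have : single i j x = x • single i j 1 := by simp
    rw [trace_mul_single, this, map_smul]
    simp [mul_comm]

theorem re_trace_add_conjTranspose_mul (W : Matrix N N 𝕜) {Z : Matrix N N 𝕜}
    (hZ : Z.IsHermitian) :
    RCLike.re ((W + Wᴴ) * Z).trace = 2 * RCLike.re (W * Z).trace := by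
  have : (Wᴴ * Z).trace = star (W * Z).trace := by
    rw [← trace_conjTranspose, conjTranspose_mul, hZ.eq, trace_mul_comm]
  rw [Matrix.add_mul, trace_add, this, map_add, RCLike.star_def, RCLike.conj_re, two_mul]

open scoped Pointwise in
theorem exists_isHermitian_forall_re_trace_mul_pos {S : Set (Matrix N N 𝕜)} (hS : Convex ℝ S)
    (hherm : ∀ L ∈ S, L.IsHermitian) (hneg : ∀ L ∈ S, ¬ (-L).PosDef) :
    ∃ W : Matrix N N 𝕜, W.IsHermitian ∧
      ∀ L ∈ S, ∀ Q : Matrix N N 𝕜, Q.PosDef → 0 < RCLike.re (W * (L + Q)).trace := by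
  have hzero : (0 : Matrix N N 𝕜) ∉ S + strictlyAccretive 𝕜 N := by
    rintro ⟨L, hL, Z, hZ, hLZ⟩
    obtain rfl := eq_neg_of_add_eq_zero_right hLZ
    exact hneg L hL (posDef_iff_isHermitian_and_mem_strictlyAccretive.mpr ⟨(hherm L hL).neg, hZ⟩)
  obtain ⟨f, hf⟩ := RCLike.geometric_hahn_banach_point_open (𝕜 := 𝕜)
    (hS.add convex_strictlyAccretive) isOpen_strictlyAccretive.add_left hzero
  obtain ⟨W, hW⟩ := exists_trace_mul_eq f.toLinearMap
  refine ⟨W + Wᴴ, isHermitian_add_transpose_self W, fun L hL Q hQ ↦ ?_⟩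
  have hsep := hf _ (Set.add_mem_add hL
    (posDef_iff_isHermitian_and_mem_strictlyAccretive.mp hQ).2)
  rw [re_trace_add_conjTranspose_mul W ((hherm L hL).add hQ.isHermitian), ← hW]
  simpa using hsep

theorem exists_posSemidef_forall_re_trace_mul_nonneg {K : ConvexCone ℝ (Matrix N N 𝕜)}
    (hne : (K : Set (Matrix N N 𝕜)).Nonempty) (hK : ∀ L ∈ K, L.IsHermitian)
    {M : Matrix N N 𝕜} (hM : M.IsHermitian) (hneg : ∀ L ∈ K, ¬ (-(L + M)).PosDef) :
    ∃ W : Matrix N N 𝕜, W.PosSemidef ∧ W ≠ 0 ∧ 0 ≤ RCLike.re (W * M).trace ∧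
      ∀ L ∈ K, 0 ≤ RCLike.re (W * L).trace := by
  classical
  obtain ⟨W, hW, hpos⟩ := exists_isHermitian_forall_re_trace_mul_pos
    (S := (· + M) '' (K : Set (Matrix N N 𝕜))) (by simpa [add_comm] using K.convex.translate M)
    (Set.forall_mem_image.mpr fun L hL ↦ (hK L hL).add hM) (Set.forall_mem_image.mpr hneg)
  have hscaled (L) (hL : L ∈ K) (Q : Matrix N N 𝕜) (hQ : Q.PosDef) (s t : ℝ) (hs : 0 < s)
      (ht : 0 < t) : 0 < s * RCLike.re (W * L).trace + RCLike.re (W * M).trace +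
        t * RCLike.re (W * Q).trace := by
    simpa [Matrix.mul_add, RCLike.smul_re] using
      hpos _ (Set.mem_image_of_mem _ (K.smul_mem hs hL)) _ (hQ.smul ht)
  obtain ⟨L₀, hL₀⟩ := hne
  refine ⟨W, posSemidef_of_forall_posDef_re_trace_mul_nonneg hW fun Q hQ ↦ ?_, ?_, ?_,
    fun L hL ↦ ?_⟩
  · exact nonneg_of_forall_pos_nonneg_add_mul fun t ht ↦ (hscaled L₀ hL₀ Q hQ 1 t one_pos ht).le
  · rintro rfl
    simpa using hscaled L₀ hL₀ 1 .one 1 1 one_pos one_pos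
  · refine nonneg_of_forall_pos_nonneg_mul_add
      (a := RCLike.re (W * L₀).trace + RCLike.re (W * 1).trace) fun t ht ↦ ?_
    linarith [hscaled L₀ hL₀ 1 .one t t ht ht]
  · refine nonneg_of_forall_pos_nonneg_add_mul
      (a := RCLike.re (W * M).trace + RCLike.re (W * 1).trace) fun t ht ↦ ?_
    linarith [hscaled L hL 1 .one t 1 ht one_pos]

end MatrixInequalities

section RankOneDecomposition

theorem trace_mul_mul_conjTranspose {p q r R : Type*} [Fintype p] [Fintype q] [Fintype r]
    [NonUnitalCommSemiring R] [Star R] (Z : Matrix p q R) (V : Matrix q r R) (U : Matrix p r R) :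
    (Z * (V * Uᴴ)).trace = ∑ k, star (U.col k) ⬝ᵥ (Z *ᵥ V.col k) := by
  rw [← Matrix.mul_assoc, trace_mul_comm]
  rfl

variable {𝕜 n r : Type*} [RCLike 𝕜] [Fintype r]

theorem exists_eq_mul_conjTranspose_of_posSemidef_s15 {S : Matrix r r 𝕜} (hS : S.PosSemidef) :
    ∃ V : Matrix r r 𝕜, S = V * Vᴴ := by
  classical
  open scoped MatrixOrder in
  exact CStarAlgebra.nonneg_iff_eq_mul_star_self.mp hS.nonneg

theorem exists_isHermitian_generalizedInverse {S : Matrix r r 𝕜} (hS : S.IsHermitian) :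
    ∃ T : Matrix r r 𝕜, T.IsHermitian ∧ S * T * S = S ∧ T * S * T = T := by
  classical
  have hcont (f : ℝ → ℝ) : ContinuousOn f (spectrum ℝ S) := S.finite_real_spectrum.continuousOn f
  have hmul (f g h : ℝ → ℝ) : cfc f S * cfc g S * cfc h S = cfc (fun x ↦ f x * g x * h x) S := by
    rw [cfc_mul _ _ S (hcont _) (hcont _), cfc_mul _ _ S (hcont _) (hcont _)]
  have hid : cfc (fun x : ℝ ↦ x) S = S := cfc_id' ℝ S hS
  have hSTS := hmul (fun x ↦ x) (·⁻¹) (fun x ↦ x)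
  have hTST := hmul (·⁻¹) (fun x ↦ x) (·⁻¹)
  have hinv (x : ℝ) : x⁻¹ * x * x⁻¹ = x⁻¹ := by simpa using mul_inv_mul_cancel x⁻¹
  simp only [mul_inv_mul_cancel, hinv, hid] at hSTS hTST
  exact ⟨cfc (·⁻¹ : ℝ → ℝ) S, cfc_predicate _ S, hSTS, hTST⟩

theorem exists_isHermitian_add_mul_eq [Finite n] {G H : Matrix n r 𝕜}
    (hHG : (H * Gᴴ).PosSemidef) :
    ∃ Q : Matrix r r 𝕜, Q.IsHermitian ∧ (Q - Q * Q).PosSemidef ∧ (G + H) * Q = G := by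
  classical
  have := Fintype.ofFinite n
  -- Solve `(G + H) Q = G` through the normal equations, whose matrix `S = (G + H) Gᴴ` is Hermitian.
  set S := G * Gᴴ + H * Gᴴ with hSdef
  have hS : S.IsHermitian := (isHermitian_mul_conjTranspose_self G).add hHG.isHermitian
  obtain ⟨T, hT, hSTS, hTST⟩ := exists_isHermitian_generalizedInverse hS
  refine ⟨Gᴴ * T * G, isHermitian_conjTranspose_mul_mul G hT, ?_, ?_⟩
  · have hcompress : Gᴴ * T * G - Gᴴ * T * G * (Gᴴ * T * G) = (T * G)ᴴ * (H * Gᴴ) * (T * G) :=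
      calc Gᴴ * T * G - Gᴴ * T * G * (Gᴴ * T * G)
          = Gᴴ * (T * S * T) * G - Gᴴ * T * (G * Gᴴ) * T * G := by
            simp only [hTST, Matrix.mul_assoc]
        _ = (T * G)ᴴ * (H * Gᴴ) * (T * G) := by
            simp only [hSdef, conjTranspose_mul, hT.eq, Matrix.mul_assoc, Matrix.mul_add,
              Matrix.add_mul, add_sub_cancel_left]
    exact hcompress ▸ hHG.conjTranspose_mul_mul_same _
  · have hkernel : (1 - S * T) * G = 0 := by
      have hsum : ((1 - S * T) * G) * ((1 - S * T) * G)ᴴ +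
          (1 - S * T) * (H * Gᴴ) * (1 - S * T)ᴴ = 0 :=
        calc _ = (1 - S * T) * S * (1 - S * T)ᴴ := by
              simp only [hSdef, conjTranspose_mul, Matrix.mul_assoc, Matrix.mul_add,
                Matrix.add_mul]
          _ = 0 := by rw [Matrix.sub_mul, hSTS, Matrix.one_mul, sub_self, Matrix.zero_mul]
      have htrace : ((1 - S * T) * G * ((1 - S * T) * G)ᴴ).trace = 0 :=
        ((add_eq_zero_iff_of_nonneg (posSemidef_self_mul_conjTranspose _).trace_nonneg
          (hHG.mul_mul_conjTranspose_same _).trace_nonneg).mp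
            (by rw [← trace_add, hsum, trace_zero])).1
      exact trace_mul_conjTranspose_self_eq_zero_iff.mp htrace
    calc (G + H) * (Gᴴ * T * G) = S * T * G := by
          simp only [hSdef, Matrix.mul_assoc, Matrix.add_mul]
      _ = G := by rw [eq_comm, ← sub_eq_zero, ← hkernel, Matrix.sub_mul, Matrix.one_mul]

theorem eigenvalues_mem_Icc_of_posSemidef_sub_mul_self [DecidableEq r] {Q : Matrix r r 𝕜}
    (hQ : Q.IsHermitian) (hQQ : (Q - Q * Q).PosSemidef) (k : r) :
    hQ.eigenvalues k ∈ Set.Icc (0 : ℝ) 1 := by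
  set d := hQ.eigenvalues k
  set u : r → 𝕜 := ⇑(hQ.eigenvectorBasis k)
  have hnorm : star u ⬝ᵥ u = 1 := by
    rw [dotProduct_comm, ← EuclideanSpace.inner_eq_star_dotProduct, inner_self_eq_norm_sq_to_K,
      hQ.eigenvectorBasis.orthonormal.1 k]
    simp
  have hQu : Q *ᵥ u = d • u := hQ.mulVec_eigenvectorBasis k
  have hform : 0 ≤ d - d * d := by
    simpa [sub_mulVec, ← mulVec_mulVec, mulVec_smul, hQu, hnorm, dotProduct_sub, RCLike.smul_re]
      using hQQ.re_dotProduct_nonneg u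
  constructor <;> nlinarith

theorem exists_unitary_forall_sameRay_col [Finite n] [DecidableEq r] {G H : Matrix n r 𝕜}
    (hHG : (H * Gᴴ).PosSemidef) :
    ∃ U ∈ unitaryGroup r 𝕜, ∀ k, SameRay ℝ ((H * U).col k) ((G * U).col k) := by
  obtain ⟨Q, hQ, hQQ, hGQ⟩ := exists_isHermitian_add_mul_eq hHG
  refine ⟨hQ.eigenvectorUnitary, hQ.eigenvectorUnitary.2, fun k ↦ ?_⟩
  set u : r → 𝕜 := ⇑(hQ.eigenvectorBasis k)
  set d := hQ.eigenvalues k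
  obtain ⟨hd₀, hd₁⟩ : 0 ≤ d ∧ d ≤ 1 := eigenvalues_mem_Icc_of_posSemidef_sub_mul_self hQ hQQ k
  have hG : G *ᵥ u = d • ((G + H) *ᵥ u) := by
    rw [← mulVec_smul, ← hQ.mulVec_eigenvectorBasis, mulVec_mulVec, hGQ]
  have hH : H *ᵥ u = (1 - d) • ((G + H) *ᵥ u) := by
    rw [sub_smul, one_smul, ← hG, add_mulVec, add_sub_cancel_left]
  change SameRay ℝ (H *ᵥ u) (G *ᵥ u)
  rw [hG, hH]
  exact (SameRay.rfl.nonneg_smul_left (sub_nonneg.mpr hd₁)).nonneg_smul_right hd₀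

end RankOneDecomposition

section FrequencyVectors

variable {n m : Type*} [Fintype n] [Fintype m]

/-- The vectors `v = (x, w)` with `A x + B w = jω x` for some frequency `0 ≤ ω ≤ ∞`, on which the
frequency-domain inequality is imposed. Writing `A x + B w = j y`, the condition `y = ω x` is
encoded as `SameRay ℝ x y`, so that `x = 0` covers `ω = ∞`. -/
def kypFrequencyVectors (A : Matrix n n ℂ) (B : Matrix n m ℂ) : Set (n ⊕ m → ℂ) :=
  {v | ∃ y, A *ᵥ (v ∘ Sum.inl) + B *ᵥ (v ∘ Sum.inr) = Complex.I • y ∧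
    SameRay ℝ (v ∘ Sum.inl) y}

variable {A : Matrix n n ℂ} {B : Matrix n m ℂ}

theorem sumElim_mem_kypFrequencyVectors_iff {x : n → ℂ} {w : m → ℂ} :
    Sum.elim x w ∈ kypFrequencyVectors A B ↔
      x = 0 ∨ ∃ ω : ℝ, 0 ≤ ω ∧ A *ᵥ x + B *ᵥ w = ((ω : ℂ) * Complex.I) • x := by
  simp only [kypFrequencyVectors, Set.mem_ofPred_eq, Sum.elim_comp_inl, Sum.elim_comp_inr]
  constructor
  · rintro ⟨y, hy, hxy⟩
    refine or_iff_not_imp_left.mpr fun hx ↦ ?_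
    obtain ⟨ω, hω, rfl⟩ := hxy.exists_nonneg_left hx
    exact ⟨ω, hω, by rw [hy, mul_comm, mul_smul, Complex.coe_smul]⟩
  · rintro (rfl | ⟨ω, hω, h⟩)
    · exact ⟨-Complex.I • (B *ᵥ w), by simp [smul_smul], SameRay.zero_left _⟩
    · refine ⟨ω • x, ?_, SameRay.sameRay_nonneg_smul_right x hω⟩
      rw [h, mul_comm, mul_smul, Complex.coe_smul]

theorem forall_mem_kypFrequencyVectors_neg_iff {M : Matrix (n ⊕ m) (n ⊕ m) ℂ}
    (hM : M.IsHermitian) :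
    (∀ v ∈ kypFrequencyVectors A B, v ≠ 0 → (star v ⬝ᵥ (M *ᵥ v)).re < 0) ↔
      (∀ ω : ℝ, 0 ≤ ω → ∀ x w, A *ᵥ x + B *ᵥ w = ((ω : ℂ) * Complex.I) • x →
        Sum.elim x w ≠ 0 → (star (Sum.elim x w) ⬝ᵥ (M *ᵥ Sum.elim x w)).re < 0) ∧
      (-(M.submatrix Sum.inr Sum.inr)).PosDef := by
  have hform (w : m → ℂ) : star w ⬝ᵥ (M.submatrix Sum.inr Sum.inr *ᵥ w) =
      star (Sum.elim (0 : n → ℂ) w) ⬝ᵥ (M *ᵥ Sum.elim 0 w) := by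
    simp [dotProduct, mulVec]
  rw [posDef_neg_iff_forall_re_dotProduct_neg (hM.submatrix _)]
  simp only [hform]
  constructor
  · refine fun h ↦ ⟨fun ω hω x w hxw ↦
      h _ (sumElim_mem_kypFrequencyVectors_iff.mpr (.inr ⟨ω, hω, hxw⟩)), fun w hw ↦
      h _ (sumElim_mem_kypFrequencyVectors_iff.mpr (.inl rfl)) fun h₀ ↦ hw ?_⟩
    exact congrArg (· ∘ Sum.inr) h₀
  · rintro ⟨hfin, hinf⟩ v hv hv₀
    obtain ⟨x, w, rfl⟩ : ∃ x w, v = Sum.elim x w := ⟨_, _, (Sum.elim_comp_inl_inr v).symm⟩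
    obtain rfl | ⟨ω, hω, hxw⟩ := sumElim_mem_kypFrequencyVectors_iff.mp hv
    · exact hinf w fun hw ↦ hv₀ (by simp [hw])
    · exact hfin ω hω x w hxw hv₀

end FrequencyVectors

section FrequencyResponse

variable {n m : ℕ} {A : Matrix (Fin n) (Fin n) ℂ} {B : Matrix (Fin n) (Fin m) ℂ} {ω : ℝ}

theorem kypF_mulVec_eq_sumElim_iff
    (hA : ((ω : ℂ) • Complex.I • (1 : Matrix (Fin n) (Fin n) ℂ) - A).det ≠ 0)
    {x : Fin n → ℂ} {w : Fin m → ℂ} :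
    kypF A B ω *ᵥ w = Sum.elim x w ↔ A *ᵥ x + B *ᵥ w = ((ω : ℂ) * Complex.I) • x := by
  set R := (ω : ℂ) • Complex.I • (1 : Matrix (Fin n) (Fin n) ℂ) - A with hR
  have hunit : IsUnit R.det := isUnit_iff_ne_zero.mpr hA
  have hsolve : R⁻¹ *ᵥ (B *ᵥ w) = x ↔ B *ᵥ w = R *ᵥ x := by
    constructor
    · rintro rfl
      rw [mulVec_mulVec, mul_nonsing_inv _ hunit, one_mulVec]
    · intro h
      rw [h, mulVec_mulVec, nonsing_inv_mul _ hunit, one_mulVec]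
  rw [kypF, ← hR, fromRows_mulVec, one_mulVec, ← mulVec_mulVec, Sum.elim_eq_iff,
    and_iff_left rfl, hsolve, hR, sub_mulVec, smul_mulVec, smul_mulVec, one_mulVec, smul_smul,
    eq_sub_iff_add_eq']

theorem posDef_neg_kypF_iff {M : Matrix (Fin n ⊕ Fin m) (Fin n ⊕ Fin m) ℂ} (hM : M.IsHermitian)
    (hA : ((ω : ℂ) • Complex.I • (1 : Matrix (Fin n) (Fin n) ℂ) - A).det ≠ 0) :
    (-((kypF A B ω)ᴴ * M * kypF A B ω)).PosDef ↔
      ∀ x w, A *ᵥ x + B *ᵥ w = ((ω : ℂ) * Complex.I) • x → Sum.elim x w ≠ 0 →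
        (star (Sum.elim x w) ⬝ᵥ (M *ᵥ Sum.elim x w)).re < 0 := by
  have hform (w : Fin m → ℂ) : star w ⬝ᵥ (((kypF A B ω)ᴴ * M * kypF A B ω) *ᵥ w) =
      star (kypF A B ω *ᵥ w) ⬝ᵥ (M *ᵥ (kypF A B ω *ᵥ w)) := by
    rw [star_mulVec, ← dotProduct_mulVec, mulVec_mulVec, mulVec_mulVec, Matrix.mul_assoc]
  rw [posDef_neg_iff_forall_re_dotProduct_neg (isHermitian_conjTranspose_mul_mul _ hM)]
  simp only [hform]
  constructor
  · intro h x w hxw hne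
    rw [← kypF_mulVec_eq_sumElim_iff hA] at hxw
    rw [← hxw] at hne ⊢
    exact h w fun hw ↦ hne (by rw [hw, mulVec_zero])
  · intro h w hw
    have hsplit : kypF A B ω *ᵥ w = Sum.elim ((kypF A B ω *ᵥ w) ∘ Sum.inl) w := by
      simp [kypF, fromRows_mulVec]
    rw [hsplit]
    exact h _ w ((kypF_mulVec_eq_sumElim_iff hA).mp hsplit) fun h₀ ↦
      hw (congrArg (· ∘ Sum.inr) h₀)

end FrequencyResponse

section KYPTerm

variable {n m : Type*} [Fintype n] [DecidableEq n]

/-- The term `Kᴴ (Σ ⊗ X + Ψ ⊗ Y) K` of the KYP matrix inequality, with `K = [A B; I 0]`. -/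
noncomputable def kypTerm (A : Matrix n n ℂ) (B : Matrix n m ℂ) (X Y : Matrix n n ℂ) :
    Matrix (n ⊕ m) (n ⊕ m) ℂ :=
  (fromBlocks A B (1 : Matrix n n ℂ) 0)ᴴ *
    fromBlocks 0 (X + Complex.I • Y) (X - Complex.I • Y) 0 *
    fromBlocks A B (1 : Matrix n n ℂ) 0

variable {A : Matrix n n ℂ} {B : Matrix n m ℂ} {X Y : Matrix n n ℂ}

theorem kypTerm_add (X' Y' : Matrix n n ℂ) :
    kypTerm A B (X + X') (Y + Y') = kypTerm A B X Y + kypTerm A B X' Y' := by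
  simp only [kypTerm, ← Matrix.mul_add, ← Matrix.add_mul, fromBlocks_add, smul_add, add_zero,
    add_add_add_comm, add_sub_add_comm]

theorem kypTerm_smul (t : ℝ) : kypTerm A B (t • X) (t • Y) = t • kypTerm A B X Y := by
  rw [kypTerm, kypTerm, ← Matrix.smul_mul, ← Matrix.mul_smul, fromBlocks_smul, smul_add, smul_sub,
    smul_zero, smul_comm t Complex.I]

theorem isHermitian_kypTerm (hX : X.IsHermitian) (hY : Y.IsHermitian) :
    (kypTerm A B X Y).IsHermitian := by
  refine isHermitian_conjTranspose_mul_mul _ (isHermitian_fromBlocks_iff.mpr ?_)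
  simp [IsHermitian, hX.eq, hY.eq, sub_eq_add_neg]

variable (A B) in
/-- The convex cone of all KYP terms with `X` Hermitian and `Y` positive definite. -/
noncomputable def kypCone : ConvexCone ℝ (Matrix (n ⊕ m) (n ⊕ m) ℂ) where
  carrier := {L | ∃ X Y, X.IsHermitian ∧ Y.PosDef ∧ kypTerm A B X Y = L}
  smul_mem' := by
    rintro t ht _ ⟨X, Y, hX, hY, rfl⟩
    exact ⟨t • X, t • Y, hX.smul (.all t), hY.smul ht, kypTerm_smul t⟩
  add_mem' := by
    rintro _ ⟨X, Y, hX, hY, rfl⟩ _ ⟨X', Y', hX', hY', rfl⟩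
    exact ⟨X + X', Y + Y', hX.add hX', hY.add hY', kypTerm_add X' Y'⟩

variable [Fintype m]

theorem dotProduct_kypTerm_mulVec {v : n ⊕ m → ℂ} {y : n → ℂ}
    (hy : A *ᵥ (v ∘ Sum.inl) + B *ᵥ (v ∘ Sum.inr) = Complex.I • y) :
    star v ⬝ᵥ (kypTerm A B X Y *ᵥ v) =
      star y ⬝ᵥ (Y *ᵥ (v ∘ Sum.inl)) + star (v ∘ Sum.inl) ⬝ᵥ (Y *ᵥ y) +
        Complex.I * (star (v ∘ Sum.inl) ⬝ᵥ (X *ᵥ y) - star y ⬝ᵥ (X *ᵥ (v ∘ Sum.inl))) := by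
  set K := fromBlocks A B (1 : Matrix n n ℂ) 0
  have hKv : K *ᵥ v = Sum.elim (Complex.I • y) (v ∘ Sum.inl) := by
    simp [K, fromBlocks_mulVec, hy]
  calc star v ⬝ᵥ (kypTerm A B X Y *ᵥ v)
      = star (K *ᵥ v) ⬝ᵥ (fromBlocks 0 (X + Complex.I • Y) (X - Complex.I • Y) 0 *ᵥ (K *ᵥ v)) := by
        rw [star_mulVec, ← dotProduct_mulVec, mulVec_mulVec, mulVec_mulVec, kypTerm,
          Matrix.mul_assoc]
    _ = _ := by
        simp only [hKv, fromBlocks_mulVec, Sum.elim_comp_inl, Sum.elim_comp_inr, zero_mulVec,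
          dotProduct_zero, add_zero, Function.star_sumElim, sumElim_dotProduct_sumElim, star_smul,
          RCLike.star_def, Complex.conj_I, add_mulVec, sub_mulVec, smul_mulVec, mulVec_smul,
          dotProduct_add, dotProduct_sub, dotProduct_smul, smul_dotProduct, smul_eq_mul]
        linear_combination (-(star y ⬝ᵥ (Y *ᵥ (v ∘ Sum.inl))) -
          star (v ∘ Sum.inl) ⬝ᵥ (Y *ᵥ y)) * Complex.I_mul_I

theorem re_dotProduct_kypTerm_mulVec_nonneg (hY : Y.PosSemidef) {v : n ⊕ m → ℂ}
    (hv : v ∈ kypFrequencyVectors A B) : 0 ≤ (star v ⬝ᵥ (kypTerm A B X Y *ᵥ v)).re := by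
  obtain ⟨y, hy, hray⟩ := hv
  rw [dotProduct_kypTerm_mulVec hy]
  generalize v ∘ Sum.inl = x at hray
  by_cases hx : x = 0
  · simp [hx]
  obtain ⟨ω, hω, rfl⟩ := hray.exists_nonneg_left hx
  have hYx : 0 ≤ (star x ⬝ᵥ (Y *ᵥ x)).re := hY.re_dotProduct_nonneg x
  simpa [mulVec_smul] using add_nonneg (mul_nonneg hω hYx) (mul_nonneg hω hYx)

theorem re_dotProduct_neg_of_posDef_neg_kypTerm_add {M : Matrix (n ⊕ m) (n ⊕ m) ℂ}
    (hY : Y.PosSemidef) (hneg : (-(kypTerm A B X Y + M)).PosDef) {v : n ⊕ m → ℂ}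
    (hv : v ∈ kypFrequencyVectors A B) (hv₀ : v ≠ 0) : (star v ⬝ᵥ (M *ᵥ v)).re < 0 := by
  have hsum : 0 < (star v ⬝ᵥ (-(kypTerm A B X Y + M) *ᵥ v)).re := hneg.re_dotProduct_pos hv₀
  rw [neg_mulVec, add_mulVec, dotProduct_neg, dotProduct_add, Complex.neg_re,
    Complex.add_re] at hsum
  linarith [re_dotProduct_kypTerm_mulVec_nonneg (X := X) hY hv]

theorem trace_kypTerm_mul_mul_conjTranspose {r : Type*} [Fintype r] {V : Matrix (n ⊕ m) r ℂ}
    {G : Matrix n r ℂ} (hG : A * V.toRows₁ + B * V.toRows₂ = Complex.I • G) :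
    (kypTerm A B X Y * (V * Vᴴ)).trace =
      (Y * (V.toRows₁ * Gᴴ + (V.toRows₁ * Gᴴ)ᴴ)).trace +
        Complex.I * (X * ((V.toRows₁ * Gᴴ)ᴴ - V.toRows₁ * Gᴴ)).trace := by
  simp only [conjTranspose_mul, conjTranspose_conjTranspose, Matrix.mul_add, Matrix.mul_sub,
    trace_add, trace_sub, trace_mul_mul_conjTranspose, ← Finset.sum_add_distrib,
    ← Finset.sum_sub_distrib, Finset.mul_sum]
  exact Finset.sum_congr rfl fun k _ ↦
    dotProduct_kypTerm_mulVec (congrArg (fun Z : Matrix n r ℂ ↦ Z.col k) hG)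

end KYPTerm

section Duality

theorem posSemidef_of_forall_re_trace_nonneg {n : Type*} [Fintype n] {P : Matrix n n ℂ}
    (h : ∀ X Y : Matrix n n ℂ, X.IsHermitian → Y.PosDef →
      0 ≤ ((Y * (P + Pᴴ)).trace + Complex.I * (X * (Pᴴ - P)).trace).re) : P.PosSemidef := by
  classical
  have hP : P.IsHermitian := by
    set D := Complex.I • (Pᴴ - P) with hD
    have hDherm : D.IsHermitian := by
      simp [IsHermitian, hD, sub_eq_add_neg, add_comm]
    have htrace : 0 ≤ -(D * Dᴴ).trace.re := by
      refine nonneg_of_forall_pos_nonneg_add_mul (a := (P + Pᴴ).trace.re) fun t _ ↦ ?_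
      calc 0 ≤ ((1 * (P + Pᴴ)).trace + Complex.I * ((-t • D) * (Pᴴ - P)).trace).re :=
            h _ 1 (hDherm.smul (.all _)) .one
        _ = ((P + Pᴴ).trace + ((-t • D) * D).trace).re := by
            rw [Matrix.one_mul, hD, Matrix.mul_smul, trace_smul, smul_eq_mul]
        _ = (P + Pᴴ).trace.re + t * -(D * Dᴴ).trace.re := by
            simp [hDherm.eq]
    obtain ⟨hre, him⟩ := Complex.nonneg_iff.mp (posSemidef_self_mul_conjTranspose D).trace_nonneg
    have hD₀ : D = 0 := trace_mul_conjTranspose_self_eq_zero_iff.mp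
      (Complex.ext (le_antisymm (neg_nonneg.mp htrace) hre) him.symm)
    exact sub_eq_zero.mp ((smul_eq_zero_iff_right Complex.I_ne_zero).mp hD₀)
  refine posSemidef_of_forall_posDef_re_trace_mul_nonneg hP fun Q hQ ↦ ?_
  have := h 0 Q isHermitian_zero hQ
  rw [hP.eq, Matrix.mul_add, trace_add, trace_mul_comm Q] at this
  simpa using this

variable {n m : Type*} [Fintype n] [DecidableEq n] [Fintype m]
  {A : Matrix n n ℂ} {B : Matrix n m ℂ} {M W : Matrix (n ⊕ m) (n ⊕ m) ℂ}

theorem exists_eq_mul_conjTranspose_col_mem_kypFrequencyVectors (hW : W.PosSemidef)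
    (hcone : ∀ L ∈ kypCone A B, 0 ≤ (W * L).trace.re) :
    ∃ V : Matrix (n ⊕ m) (n ⊕ m) ℂ, W = V * Vᴴ ∧ ∀ k, V.col k ∈ kypFrequencyVectors A B := by
  classical
  obtain ⟨V, rfl⟩ := exists_eq_mul_conjTranspose_of_posSemidef_s15 hW
  obtain ⟨G, hG⟩ : ∃ G : Matrix n (n ⊕ m) ℂ, A * V.toRows₁ + B * V.toRows₂ = Complex.I • G :=
    ⟨-Complex.I • (A * V.toRows₁ + B * V.toRows₂), by simp [smul_smul]⟩
  have hHG : (V.toRows₁ * Gᴴ).PosSemidef :=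
    posSemidef_of_forall_re_trace_nonneg fun X Y hX hY ↦ by
      rw [← trace_kypTerm_mul_mul_conjTranspose hG, trace_mul_comm]
      exact hcone _ ⟨X, Y, hX, hY, rfl⟩
  obtain ⟨U, hU, hray⟩ := exists_unitary_forall_sameRay_col hHG
  refine ⟨V * U, ?_, fun k ↦ ⟨(G * U).col k, ?_, hray k⟩⟩
  · rw [conjTranspose_mul, Matrix.mul_assoc, ← Matrix.mul_assoc U, ← star_eq_conjTranspose U,
      mem_unitaryGroup_iff.mp hU, Matrix.one_mul]
  · have hGU : A * (V.toRows₁ * U) + B * (V.toRows₂ * U) = Complex.I • (G * U) := by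
      rw [← Matrix.mul_assoc, ← Matrix.mul_assoc, ← Matrix.add_mul, hG, Matrix.smul_mul]
    exact congrArg (fun Z : Matrix n (n ⊕ m) ℂ ↦ Z.col k) hGU

theorem re_trace_mul_conjTranspose_self_mul_neg {p q 𝕜 : Type*} [RCLike 𝕜] [Fintype p] [Fintype q]
    {M : Matrix p p 𝕜} {V : Matrix p q 𝕜} (hV : V ≠ 0)
    (hneg : ∀ k, V.col k ≠ 0 → RCLike.re (star (V.col k) ⬝ᵥ (M *ᵥ V.col k)) < 0) :
    RCLike.re (V * Vᴴ * M).trace < 0 := by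
  obtain ⟨k, hk⟩ : ∃ k, V.col k ≠ 0 := by
    by_contra! h
    exact hV (ext_col h)
  rw [trace_mul_comm, trace_mul_mul_conjTranspose, map_sum]
  refine Finset.sum_neg' (fun j _ ↦ ?_) ⟨k, Finset.mem_univ k, hneg k hk⟩
  by_cases hj : V.col j = 0
  · simp [hj]
  · exact (hneg j hj).le

theorem exists_posDef_neg_kypTerm_add_iff (A : Matrix n n ℂ) (B : Matrix n m ℂ)
    (hM : M.IsHermitian) :
    (∃ X Y : Matrix n n ℂ, X.IsHermitian ∧ Y.PosDef ∧ (-(kypTerm A B X Y + M)).PosDef) ↔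
      ∀ v ∈ kypFrequencyVectors A B, v ≠ 0 → (star v ⬝ᵥ (M *ᵥ v)).re < 0 := by
  constructor
  · rintro ⟨X, Y, -, hY, hneg⟩ v
    exact re_dotProduct_neg_of_posDef_neg_kypTerm_add hY.posSemidef hneg
  · intro hfreq
    by_contra! hinfeasible
    obtain ⟨W, hW, hW₀, hWM, hcone⟩ := exists_posSemidef_forall_re_trace_mul_nonneg
      (K := kypCone A B) ⟨_, 0, 1, isHermitian_zero, .one, rfl⟩
      (by rintro _ ⟨X, Y, hX, hY, rfl⟩; exact isHermitian_kypTerm hX hY.isHermitian) hM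
      (by rintro _ ⟨X, Y, hX, hY, rfl⟩; exact hinfeasible X Y hX hY)
    obtain ⟨V, rfl, hV⟩ := exists_eq_mul_conjTranspose_col_mem_kypFrequencyVectors hW hcone
    have hV₀ : V ≠ 0 := fun h ↦ hW₀ (by rw [h, Matrix.zero_mul])
    exact hWM.not_gt (re_trace_mul_conjTranspose_self_mul_neg hV₀ fun k ↦ hfreq _ (hV k))

theorem generalized_kyp_lemma_nonneg_imaginary_axis_general (A : Matrix n n ℂ) (B : Matrix n m ℂ)
    (hM : M.IsHermitian) :
    ((∀ ω : ℝ, 0 ≤ ω → ∀ x w, A *ᵥ x + B *ᵥ w = ((ω : ℂ) * Complex.I) • x →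
        Sum.elim x w ≠ 0 → (star (Sum.elim x w) ⬝ᵥ (M *ᵥ Sum.elim x w)).re < 0) ∧
      (-(M.submatrix Sum.inr Sum.inr)).PosDef) ↔
    ∃ X Y : Matrix n n ℂ, X.IsHermitian ∧ Y.IsHermitian ∧ Y.PosDef ∧
      (-((fromBlocks A B (1 : Matrix n n ℂ) 0)ᴴ *
          fromBlocks 0 (X + Complex.I • Y) (X - Complex.I • Y) 0 *
          fromBlocks A B (1 : Matrix n n ℂ) 0 + M)).PosDef := by
  rw [← forall_mem_kypFrequencyVectors_neg_iff hM, ← exists_posDef_neg_kypTerm_add_iff A B hM]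
  exact exists₂_congr fun X Y ↦ and_congr_right fun _ ↦
    ⟨fun ⟨hY, hneg⟩ ↦ ⟨hY.isHermitian, hY, hneg⟩, And.right⟩

end Duality

/-- Generalized KYP lemma for the nonnegative imaginary axis: equivalence between a
strict frequency-domain inequality for all `ω ≥ 0` (including `ω = ∞`, encoded by the
lower-right block condition) and the solvability of a linear matrix inequality with two
Hermitian unknowns `X` and `Y > 0`. -/
theorem generalized_kyp_lemma_nonneg_imaginary_axis {n m : ℕ}
    (A : Matrix (Fin n) (Fin n) ℂ) (B : Matrix (Fin n) (Fin m) ℂ)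
    (M : Matrix (Fin n ⊕ Fin m) (Fin n ⊕ Fin m) ℂ) (hM : M.IsHermitian)
    (hA : ∀ ω : ℝ, 0 ≤ ω →
      ((ω : ℂ) • Complex.I • (1 : Matrix (Fin n) (Fin n) ℂ) - A).det ≠ 0) :
    ((∀ ω : ℝ, 0 ≤ ω → (-((kypF A B ω).conjTranspose * M * kypF A B ω)).PosDef) ∧
      (-(M.submatrix Sum.inr Sum.inr)).PosDef) ↔
    ∃ X Y : Matrix (Fin n) (Fin n) ℂ, X.IsHermitian ∧ Y.IsHermitian ∧ Y.PosDef ∧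
      (-((Matrix.fromBlocks A B (1 : Matrix (Fin n) (Fin n) ℂ) 0).conjTranspose *
          Matrix.fromBlocks 0 (X + Complex.I • Y) (X - Complex.I • Y) 0 *
          Matrix.fromBlocks A B (1 : Matrix (Fin n) (Fin n) ℂ) 0 + M)).PosDef := by
  rw [← generalized_kyp_lemma_nonneg_imaginary_axis_general A B hM]
  exact and_congr_left' (forall₂_congr fun ω hω ↦ posDef_neg_kypF_iff hM (hA ω hω))
end

section
/- (Sectored real lemma, Theorem 2) Let A, B, C, D be real matrices of sizes n×n, n×m, m×n, m×m with A Hurwitz stable, (A,B) controllable (the n×(nm) matrix [B, AB, …, A^{n−1}B] has rank n) and (C,A) observable ([Cᵀ, AᵀCᵀ, …, (Aᵀ)^{n−1}Cᵀ] has rank n), let α ∈ Set.Ioc 0 (π/2), set η = π/2 − α and e = Complex.exp(η*Complex.I), and let G(s) = C(s•1 − A)⁻¹B + D over ℂ. Then the following are equivalent: (a) Φ∞(G) < α, i.e., for every ω ∈ ℝ the Hermitian matrix e • G(ω*I) + (star e) • (G(ω*I))ᴴ is positive definite, and e • (D:Matrix _ _ ℂ) + (star e) • (Dᵀ:Matrix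 _ _ ℂ) is positive definite; (b) there exists a Hermitian X ∈ Matrix (Fin n) (Fin n) ℂ with X.PosDef such that −Matrix.fromBlocks (Aᵀ*X + X*A) (X*B − (star e)•Cᵀ) (Bᵀ*X − e•C) (−(e•D + (star e)•Dᵀ)) is positive definite (all real matrices coerced to ℂ). -/
open Matrix
open scoped ComplexOrder Real

/-- The transfer function `G(s) = C (sI - A)⁻¹ B + D` of a real state-space system,
with all matrices coerced to `ℂ`. -/
noncomputable def transferFunction {n m : ℕ} (A : Matrix (Fin n) (Fin n) ℝ)
    (B : Matrix (Fin n) (Fin m) ℝ) (C : Matrix (Fin m) (Fin n) ℝ)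
    (D : Matrix (Fin m) (Fin m) ℝ) (s : ℂ) : Matrix (Fin m) (Fin m) ℂ :=
  C.map Complex.ofReal * (s • (1 : Matrix (Fin n) (Fin n) ℂ) - A.map Complex.ofReal)⁻¹ *
    B.map Complex.ofReal + D.map Complex.ofReal

/-- A real square matrix is Hurwitz stable if all its complex eigenvalues have
negative real part. -/
def IsHurwitz {n : ℕ} (A : Matrix (Fin n) (Fin n) ℝ) : Prop :=
  ∀ μ ∈ spectrum ℂ (A.map Complex.ofReal), μ.re < 0

/-- The controllability matrix `[B, AB, …, A^{n-1}B]` of the pair `(A, B)`. -/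
def ctrbMatrix {n m : ℕ} (A : Matrix (Fin n) (Fin n) ℝ) (B : Matrix (Fin n) (Fin m) ℝ) :
    Matrix (Fin n) (Fin n × Fin m) ℝ :=
  Matrix.of fun i p => (A ^ (p.1 : ℕ) * B) i p.2

/-!
Write `kypMatrix A B C D X` for the matrix of the dissipation inequality, so that its quadratic form
at `(x, u)` is `2 Re ⟪u, C x + D u⟫ - 2 Re ⟪x, X (A x + B u)⟫`. At a frequency response
`A x + B u = iω x` the second term vanishes and the form is that of `G(iω) + G(iω)ᴴ` at `u`, so the
matrix inequality implies the frequency condition.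

Conversely, the matrices `kypMatrix A B C D X` with `X` Hermitian form a convex set, and by Sion's
minimax theorem it contains a positive definite matrix as soon as every nonzero `W ≥ 0` pairs
positively with one of its members. The pairing with `W` is affine in `X`, with linear part
`X ↦ -tr (X Z)`, `Z = [1 0] W [A B]ᴴ + [A B] W [1 0]ᴴ`. If `Z ≠ 0`, take `X` to be a multiple of
`Z`. If `Z = 0`, Rantzer's lemma splits `W` into rank-one terms `w wᴴ`, where each `w` is a
response at one frequency, possibly infinite, and the frequency condition makes every term positive.
Stability of `A` finally forces `X > 0` by Lyapunov's theorem.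
-/

section TraceDuality

theorem trace_vecMulVec_star_mul {R ι : Type*} [CommSemiring R] [Star R] [Fintype ι] (v : ι → R)
    (M : Matrix ι ι R) : (vecMulVec v (star v) * M).trace = star v ⬝ᵥ M *ᵥ v := by
  rw [vecMulVec_mul, trace_vecMulVec, dotProduct_comm, ← dotProduct_mulVec]

variable {𝕜 ι : Type*} [RCLike 𝕜] [Fintype ι]

open scoped MatrixOrder in
theorem posSemidef_iff_exists_eq_mul_conjTranspose {W : Matrix ι ι 𝕜} :
    W.PosSemidef ↔ ∃ F : Matrix ι ι 𝕜, W = F * Fᴴ := by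
  classical
  rw [← Matrix.nonneg_iff_posSemidef]
  exact CStarAlgebra.nonneg_iff_eq_mul_star_self

open scoped Matrix.Norms.Frobenius in
theorem trace_mul_conjTranspose_self_eq_norm_sq {κ : Type*} [Fintype κ] (F : Matrix ι κ 𝕜) :
    (F * Fᴴ).trace = ((‖F‖ ^ 2 : ℝ) : 𝕜) := by
  have hnorm : ‖F‖ ^ 2 = ∑ i, ∑ j, ‖F i j‖ ^ 2 := by
    rw [frobenius_norm_def, ← Real.sqrt_eq_rpow, Real.sq_sqrt (by positivity)]
    norm_cast
  simp [hnorm, trace, mul_apply, RCLike.mul_conj]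

open scoped Matrix.Norms.Frobenius in
theorem isCompact_setOf_posSemidef_trace_eq_one :
    IsCompact {W : Matrix ι ι 𝕜 | W.PosSemidef ∧ W.trace = 1} := by
  have himage : {W : Matrix ι ι 𝕜 | W.PosSemidef ∧ W.trace = 1} =
      (fun F : Matrix ι ι 𝕜 => F * Fᴴ) '' Metric.sphere 0 1 := by
    ext W
    simp only [Set.mem_ofPred_eq, posSemidef_iff_exists_eq_mul_conjTranspose, Set.mem_image,
      mem_sphere_zero_iff_norm]
    have hone (F : Matrix ι ι 𝕜) : (F * Fᴴ).trace = 1 ↔ ‖F‖ = 1 := by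
      rw [trace_mul_conjTranspose_self_eq_norm_sq, ← RCLike.ofReal_one, RCLike.ofReal_inj,
        pow_eq_one_iff_of_nonneg (norm_nonneg F) two_ne_zero]
    constructor
    · rintro ⟨⟨F, rfl⟩, htrace⟩
      exact ⟨F, (hone F).mp htrace, rfl⟩
    · rintro ⟨F, hF, rfl⟩
      exact ⟨⟨F, rfl⟩, (hone F).mpr hF⟩
  have := FiniteDimensional.proper_rclike 𝕜 (Matrix ι ι 𝕜)
  rw [himage]
  exact (isCompact_sphere 0 1).image (by fun_prop)

theorem convex_setOf_posSemidef_trace_eq_one :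
    Convex ℝ {W : Matrix ι ι 𝕜 | W.PosSemidef ∧ W.trace = 1} := by
  rintro W ⟨hW, hWtr⟩ V ⟨hV, hVtr⟩ a b ha hb hab
  refine ⟨(hW.smul ha).add (hV.smul hb), ?_⟩
  rw [trace_add, trace_smul, trace_smul, hWtr, hVtr, ← add_smul, hab, one_smul]

theorem posDef_of_forall_trace_mul_pos {M : Matrix ι ι 𝕜} (hM : M.IsHermitian)
    (hpos : ∀ W : Matrix ι ι 𝕜, W.PosSemidef → W.trace = 1 → 0 < RCLike.re (W * M).trace) :
    M.PosDef := by
  refine PosDef.of_dotProduct_mulVec_pos hM fun v hv => ?_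
  obtain ⟨c, hc, hcv⟩ := RCLike.pos_iff_exists_ofReal.mp (dotProduct_star_self_pos_iff.mpr hv)
  have hv1 : (c⁻¹ • vecMulVec v (star v)).trace = 1 := by
    rw [trace_smul, trace_vecMulVec, dotProduct_comm, ← hcv, RCLike.real_smul_eq_coe_mul,
      ← RCLike.ofReal_mul, inv_mul_cancel₀ hc.ne', RCLike.ofReal_one]
  have hre := hpos _ ((posSemidef_vecMulVec_self_star v).smul (inv_nonneg.mpr hc.le)) hv1
  rw [smul_mul_assoc, trace_smul, trace_vecMulVec_star_mul, RCLike.smul_re] at hre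
  exact RCLike.pos_iff.mpr ⟨pos_of_mul_pos_right hre (inv_nonneg.mpr hc.le),
    hM.im_star_dotProduct_mulVec_self v⟩

theorem exists_posDef_of_convex {Y : Set (Matrix ι ι 𝕜)} (hconvex : Convex ℝ Y)
    (hne : Y.Nonempty) (hherm : ∀ M ∈ Y, M.IsHermitian)
    (hpos : ∀ W : Matrix ι ι 𝕜, W.PosSemidef → W ≠ 0 → ∃ M ∈ Y, 0 < RCLike.re (W * M).trace) :
    ∃ M ∈ Y, M.PosDef := by
  set S := {W : Matrix ι ι 𝕜 | W.PosSemidef ∧ W.trace = 1}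
  suffices ∃ M ∈ Y, ∀ W ∈ S, 0 < RCLike.re (W * M).trace by
    obtain ⟨M, hMY, hM⟩ := this
    exact ⟨M, hMY, posDef_of_forall_trace_mul_pos (hherm M hMY) fun W hW htr => hM W ⟨hW, htr⟩⟩
  rcases S.eq_empty_or_nonempty with hS | hS
  · obtain ⟨M, hM⟩ := hne
    exact ⟨M, hM, by simp [hS]⟩
  let pairing : Matrix ι ι 𝕜 →ₗ[ℝ] Matrix ι ι 𝕜 →ₗ[ℝ] ℝ :=
    (LinearMap.mul ℝ (Matrix ι ι 𝕜)).compr₂ (RCLike.reLm ∘ₗ traceLinearMap ι ℝ 𝕜)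
  have hcover : S ⊆ ⋃ M ∈ Y, {W | 0 < RCLike.re (W * M).trace} := fun W ⟨hW, htr⟩ => by
    simpa using hpos W hW (by rintro rfl; simp at htr)
  obtain ⟨t, htY, htfin, ht⟩ := isCompact_setOf_posSemidef_trace_eq_one.elim_finite_subcover_image
    (fun M _ => isOpen_lt continuous_const (by fun_prop)) hcover
  exact Sion.exists_lt_iInf_of_lt_iInf_of_finite (f := fun W M => pairing W M) hS
    isCompact_setOf_posSemidef_trace_eq_one
    (fun M _ => (pairing.flip M).continuous_of_finiteDimensional.continuousOn.lowerSemicontinuousOn)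
    (fun M _ => ((pairing.flip M).convexOn convex_setOf_posSemidef_trace_eq_one).quasiconvexOn)
    hconvex
    (fun W _ => (pairing W).continuous_of_finiteDimensional.continuousOn.upperSemicontinuousOn)
    (fun W _ => ((pairing W).concaveOn hconvex).quasiconcaveOn)
    convex_setOf_posSemidef_trace_eq_one htfin htY (fun W hW => by simpa using! ht hW)

theorem exists_isHermitian_re_sub_trace_mul_pos (a : 𝕜) {Z : Matrix ι ι 𝕜} (hZ : Z.IsHermitian)
    (hZ0 : Z ≠ 0) : ∃ X : Matrix ι ι 𝕜, X.IsHermitian ∧ 0 < RCLike.re (a - (X * Z).trace) := by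
  have hpos : 0 < RCLike.re (Z * Z).trace := by
    have h : 0 < (Zᴴ * Z).trace := (posSemidef_conjTranspose_mul_self Z).trace_nonneg.lt_of_ne'
      (trace_conjTranspose_mul_self_eq_zero_iff.not.mpr hZ0)
    rw [hZ.eq] at h
    exact (RCLike.pos_iff.mp h).1
  refine ⟨((RCLike.re a - 1) / RCLike.re (Z * Z).trace) • Z, hZ.smul (.all _), ?_⟩
  rw [smul_mul_assoc, trace_smul, map_sub, RCLike.smul_re, div_mul_cancel₀ _ hpos.ne',
    sub_sub_cancel]
  exact one_pos

end TraceDuality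

section RantzerSplitting

open scoped InnerProductSpace
open Module (finrank)

variable {𝕜 E F : Type*} [RCLike 𝕜] [NormedAddCommGroup E] [InnerProductSpace 𝕜 E]
  [FiniteDimensional 𝕜 E] [NormedAddCommGroup F] [InnerProductSpace 𝕜 F] [FiniteDimensional 𝕜 F]

theorem exists_skew_lift_of_comp_adjoint_eq_neg {P Q : E →ₗ[𝕜] F}
    (hPQ : P ∘ₗ Q.adjoint = -(Q ∘ₗ P.adjoint)) :
    ∃ S : P.kerᗮ →ₗ[𝕜] P.kerᗮ, (∀ x, P (S x) = Q x) ∧ ∀ x y, ⟪S x, y⟫_𝕜 = -⟪x, S y⟫_𝕜 := by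
  have hskew (w : F) : P (Q.adjoint w) = -Q (P.adjoint w) := DFunLike.congr_fun hPQ w
  have hadj (x : P.kerᗮ) : ∃ w, P.adjoint w = x := by
    rw [← LinearMap.mem_range, ← LinearMap.orthogonal_ker]
    exact x.2
  have hrange (x : P.kerᗮ) : Q x ∈ P.range := by
    obtain ⟨w, hw⟩ := hadj x
    exact ⟨-Q.adjoint w, by rw [map_neg, hskew, neg_neg, hw]⟩
  let e := P.kerComplementEquivRange P.ker.isCompl_orthogonal.symm
  let S := e.symm.toLinearMap ∘ₗ (Q.domRestrict P.kerᗮ).codRestrict P.range hrange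
  have hPS (x : P.kerᗮ) : P (S x) = Q x :=
    congrArg Subtype.val (e.apply_symm_apply ⟨Q x, hrange x⟩)
  refine ⟨S, hPS, fun x y => ?_⟩
  obtain ⟨z, hz⟩ := hadj x
  obtain ⟨w, hw⟩ := hadj y
  calc
    ⟪S x, y⟫_𝕜 = ⟪P (S x), w⟫_𝕜 := by
      rw [Submodule.coe_inner, ← hw, LinearMap.adjoint_inner_right]
    _ = ⟪z, P (Q.adjoint w)⟫_𝕜 := by
      rw [hPS, ← hz, ← LinearMap.adjoint_inner_right Q, LinearMap.adjoint_inner_left]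
    _ = -⟪z, P (S y)⟫_𝕜 := by rw [hskew, inner_neg_right, hw, hPS]
    _ = -⟪x, S y⟫_𝕜 := by rw [← LinearMap.adjoint_inner_left, hz, Submodule.coe_inner]

theorem exists_orthonormalBasis_apply_eq_mul_I_smul {E F : Type*} [NormedAddCommGroup E]
    [InnerProductSpace ℂ E] [FiniteDimensional ℂ E] [NormedAddCommGroup F] [InnerProductSpace ℂ F]
    [FiniteDimensional ℂ F] {P Q : E →ₗ[ℂ] F}
    (hPQ : P ∘ₗ Q.adjoint = -(Q ∘ₗ P.adjoint)) :
    ∃ b : OrthonormalBasis (Fin (finrank ℂ E)) ℂ E,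
      ∀ i, P (b i) = 0 ∨ ∃ ω : ℝ, Q (b i) = (ω * Complex.I) • P (b i) := by
  obtain ⟨S, hPS, hS⟩ := exists_skew_lift_of_comp_adjoint_eq_neg hPQ
  have hsymm : (Complex.I • S).IsSymmetric := fun x y => by
    simp [inner_smul_left, inner_smul_right, hS]
  let w := hsymm.eigenvectorBasis rfl
  have hw (i) : Q (w i) = ((-hsymm.eigenvalues rfl i : ℝ) * Complex.I) • P (w i) := by
    have hSw : S (w i) = ((-hsymm.eigenvalues rfl i : ℝ) * Complex.I) • w i := by
      have h : Complex.I • S (w i) = (hsymm.eigenvalues rfl i : ℂ) • w i :=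
        hsymm.apply_eigenvectorBasis rfl i
      calc
        S (w i) = -(Complex.I • Complex.I • S (w i)) := by
          rw [smul_smul, Complex.I_mul_I, neg_one_smul, neg_neg]
        _ = _ := by
          rw [h, smul_smul, ← neg_smul]
          push_cast
          ring_nf
    rw [← hPS, hSw, Submodule.coe_smul, map_smul]
  let b := ((stdOrthonormalBasis ℂ P.ker).prod w).map P.ker.orthogonalDecomposition.symm
  refine ⟨b.reindex (Fintype.equivFinOfCardEq
    (Module.finrank_eq_card_basis b.toBasis).symm), fun i => ?_⟩
  rw [OrthonormalBasis.reindex_apply]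
  generalize Equiv.symm _ i = j
  rcases j with j | j
  · left
    have : b (Sum.inl j) = stdOrthonormalBasis ℂ P.ker j := by simp [b]
    rw [this]
    simp
  · right
    have : b (Sum.inr j) = w j := by simp [b]
    rw [this]
    exact ⟨_, hw j⟩

variable {ι : Type*} [Fintype ι]

theorem sum_vecMulVec_orthonormalBasis {r : Type*} [Fintype r] [DecidableEq ι]
    (b : OrthonormalBasis r 𝕜 (EuclideanSpace 𝕜 ι)) :
    ∑ i, vecMulVec (b i).ofLp (star (b i).ofLp) = 1 := by
  refine ext_of_mulVec_single fun j => ?_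
  simp_rw [one_mulVec, sum_mulVec, vecMulVec_mulVec]
  have h := congrArg WithLp.ofLp (b.sum_repr' (WithLp.toLp 2 (Pi.single j 1)))
  simpa [EuclideanSpace.inner_eq_star_dotProduct] using h

theorem exists_eq_sum_vecMulVec_of_conj_eq_zero {κ : Type*} [Finite κ] {W : Matrix ι ι ℂ}
    (hW : W.PosSemidef) {J K : Matrix κ ι ℂ} (hJK : J * W * Kᴴ + K * W * Jᴴ = 0) :
    ∃ (r : ℕ) (w : Fin r → ι → ℂ), W = ∑ i, vecMulVec (w i) (star (w i)) ∧
      ∀ i, J *ᵥ w i = 0 ∨ ∃ ω : ℝ, K *ᵥ w i = (ω * Complex.I) • J *ᵥ w i := by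
  classical
  cases nonempty_fintype κ
  obtain ⟨F, rfl⟩ := posSemidef_iff_exists_eq_mul_conjTranspose.mp hW
  have hadj : toEuclideanLin (J * F) ∘ₗ (toEuclideanLin (K * F)).adjoint =
      -(toEuclideanLin (K * F) ∘ₗ (toEuclideanLin (J * F)).adjoint) := by
    rw [← toEuclideanLin_conjTranspose_eq_adjoint, ← toEuclideanLin_conjTranspose_eq_adjoint,
      ← toLpLin_mul, ← toLpLin_mul, ← map_neg]
    congr 1
    simpa only [conjTranspose_mul, Matrix.mul_assoc] using eq_neg_of_add_eq_zero_left hJK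
  obtain ⟨b, hb⟩ := exists_orthonormalBasis_apply_eq_mul_I_smul hadj
  refine ⟨_, fun i => F *ᵥ (b i).ofLp, ?_, fun i => ?_⟩
  · simp_rw [star_mulVec, ← mul_vecMulVec, ← vecMulVec_mul]
    rw [← Matrix.mul_sum, ← Matrix.sum_mul, sum_vecMulVec_orthonormalBasis, Matrix.one_mul]
  · simpa [← WithLp.ofLp_eq_zero 2, ← (WithLp.ofLp_injective 2).eq_iff] using hb i

end RantzerSplitting

section Lyapunov

open Module (End finrank)

section

variable {K E : Type*} [Field K] [AddCommGroup E] [Module K E]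

theorem hasEigenvalue_of_apply_eq_add_smul {T : End K E} {lam μ c : K} {e w : E}
    (he : T.HasEigenvector lam e) (hw : T w = μ • w + c • e) (hwe : w ∉ K ∙ e) :
    T.HasEigenvalue μ := by
  by_cases hμ : μ = lam
  · exact hμ ▸ Module.End.hasEigenvalue_of_hasEigenvector he
  have hne : μ - lam ≠ 0 := sub_ne_zero.mpr hμ
  have hmem : w + (c / (μ - lam)) • e ∈ T.eigenspace μ := by
    rw [Module.End.mem_eigenspace_iff, map_add, map_smul, hw, he.apply_eq_smul]
    match_scalars <;> field_simp
    ring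
  refine Module.End.hasEigenvalue_of_hasEigenvector ⟨hmem, fun h => hwe ?_⟩
  rw [Submodule.mem_span_singleton]
  exact ⟨-(c / (μ - lam)), by rw [neg_smul, ← eq_neg_of_add_eq_zero_left h]⟩

theorem exists_compression_ker {f : E →ₗ[K] K} {e : E} (hfe : f e ≠ 0) (T : End K E) :
    ∃ S : End K f.ker, ∀ w : f.ker, ∃ c : K, T w = S w + c • e := by
  let proj : E →ₗ[K] f.ker := LinearMap.codRestrict f.ker
    (LinearMap.id - (f e)⁻¹ • f.smulRight e) fun v => by simp [hfe, mul_comm (f v)]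
  refine ⟨proj ∘ₗ T.domRestrict f.ker, fun w => ⟨(f e)⁻¹ * f (T w), ?_⟩⟩
  have hproj (v : E) : (proj v : E) = v - (f e)⁻¹ • f v • e := rfl
  rw [LinearMap.comp_apply, hproj, LinearMap.domRestrict_apply, mul_smul, sub_add_cancel]

theorem hasEigenvalue_of_compression_ker {f : E →ₗ[K] K} {e : E} (hfe : f e ≠ 0) {T : End K E}
    {S : End K f.ker} {lam μ : K} (he : T.HasEigenvector lam e)
    (hS : ∀ w : f.ker, ∃ c : K, T w = S w + c • e)
    (hμ : S.HasEigenvalue μ) : T.HasEigenvalue μ := by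
  obtain ⟨w, hw⟩ := hμ.exists_hasEigenvector
  obtain ⟨c, hc⟩ := hS w
  rw [hw.apply_eq_smul] at hc
  refine hasEigenvalue_of_apply_eq_add_smul he hc fun hmem => ?_
  obtain ⟨a, ha⟩ := Submodule.mem_span_singleton.mp hmem
  have ha0 : a = 0 := by simpa [← ha, hfe] using w.2
  exact hw.2 (by simpa [ha0, eq_comm] using ha)

end

variable {E : Type*} [AddCommGroup E] [Module ℂ E]

theorem re_apply_self_pos_of_pos_on_ker {q : E →ₗ⋆[ℂ] E →ₗ[ℂ] ℂ} (hq : q.IsSymm) {e : E}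
    (he : 0 < (q e e).re) (hker : ∀ w ∈ (q e).ker, w ≠ 0 → 0 < (q w w).re) {v : E} (hv : v ≠ 0) :
    0 < (q v v).re := by
  set c := q e v / q e e
  set w := v - c • e
  have hee : q e e ≠ 0 := fun h => by simp [h] at he
  have hew : q e w = 0 := by simp [w, c, hee]
  have hwe : q w e = 0 := by rw [← hq.eq e w, hew, map_zero]
  have hvcw : v = c • e + w := by simp [w]
  have hvv : (q v v).re = ‖c‖ ^ 2 * (q e e).re + (q w w).re := by
    rw [hvcw]
    simp [hew, hwe, ← mul_assoc, Complex.conj_mul', ← Complex.ofReal_pow]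
  rw [hvv]
  by_cases hw : w = 0
  · have hc : c ≠ 0 := fun hc => hv (by rw [hvcw, hc, hw, zero_smul, zero_add])
    rw [hw, map_zero, Complex.zero_re, add_zero]
    positivity
  · exact add_pos_of_nonneg_of_pos (by positivity) (hker w hew hw)

variable [FiniteDimensional ℂ E]

theorem re_apply_self_pos_of_re_apply_neg {q : E →ₗ⋆[ℂ] E →ₗ[ℂ] ℂ} (hq : q.IsSymm)
    {T : End ℂ E} (hT : ∀ μ, T.HasEigenvalue μ → μ.re < 0)
    (hdiss : ∀ v ≠ 0, (q v (T v)).re < 0) {v : E} (hv : v ≠ 0) : 0 < (q v v).re := by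
  -- Deflation: the `q`-orthogonal complement `(q e).ker` of an eigenvector `e` need not be
  -- `T`-invariant, but compressing `T` to it along `e` changes neither `q w (T w)` for `w` in the
  -- complement nor the bound on the eigenvalues.
  induction hn : finrank ℂ E using Nat.strong_induction_on generalizing E with
  | _ n ih =>
  have := nontrivial_of_ne v 0 hv
  obtain ⟨lam, hlam⟩ := Module.End.exists_eigenvalue T
  obtain ⟨e, he⟩ := hlam.exists_hasEigenvector
  have hee : 0 < (q e e).re := by
    have hself : ((q e e).re : ℂ) = q e e := Complex.conj_eq_iff_re.mp (hq.eq e e)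
    have h := hdiss e he.2
    rw [he.apply_eq_smul, map_smul, smul_eq_mul, ← hself, Complex.re_mul_ofReal] at h
    exact pos_of_mul_neg_right h (hT lam hlam).le
  have hemem : q e e ≠ 0 := fun h => by simp [h] at hee
  obtain ⟨S, hS⟩ := exists_compression_ker hemem T
  refine re_apply_self_pos_of_pos_on_ker hq hee (fun w hw hw0 => ?_) hv
  have hlt : finrank ℂ (q e).ker < n :=
    hn ▸ Submodule.finrank_lt fun h => hemem (h ▸ Submodule.mem_top : e ∈ (q e).ker)
  refine ih _ hlt (E := (q e).ker) (q := q.domRestrict₁₂ _ _) ⟨fun x y => hq.eq x y⟩ (T := S)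
    (fun μ hμ => hT μ (hasEigenvalue_of_compression_ker hemem he hS hμ)) (fun u hu => ?_)
    (v := ⟨w, hw⟩) (by simpa using hw0) rfl
  obtain ⟨c, hc⟩ := hS u
  have hue : q u e = 0 := by rw [← hq.eq e u, u.2, map_zero]
  have h := hdiss u (by simpa using hu)
  rwa [hc, map_add, map_smul, hue, smul_zero, add_zero] at h

theorem posDef_of_posDef_neg_lyapunov {n : Type*} [Fintype n] [DecidableEq n] {A X : Matrix n n ℂ}
    (hA : ∀ μ ∈ spectrum ℂ A, μ.re < 0) (hX : X.IsHermitian)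
    (hAX : (-(Aᴴ * X + X * A)).PosDef) : X.PosDef := by
  let q : (n → ℂ) →ₗ⋆[ℂ] (n → ℂ) →ₗ[ℂ] ℂ := LinearMap.mk₂'ₛₗ (starRingEnd ℂ) (RingHom.id ℂ)
    (fun v w => star v ⬝ᵥ X *ᵥ w) (fun v v' w => by simp [add_dotProduct]) (fun c v w => by simp)
    (fun v w w' => by simp [mulVec_add]) (fun c v w => by simp [mulVec_smul])
  have hqX (v w : n → ℂ) : q v w = star v ⬝ᵥ X *ᵥ w := rfl
  have hq : q.IsSymm := ⟨fun v w => by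
    simp only [hqX, starRingEnd_apply]
    rw [star_dotProduct, star_mulVec, hX.eq, dotProduct_mulVec, star_star]⟩
  have hT (μ : ℂ) (hμ : End.HasEigenvalue (toLin' A) μ) : μ.re < 0 :=
    hA μ (by rwa [← spectrum_toLin', ← Module.End.hasEigenvalue_iff_mem_spectrum])
  have hdiss (v : n → ℂ) (hv : v ≠ 0) : (q v (toLin' A v)).re < 0 := by
    have hself : q (A *ᵥ v) v = star (q v (A *ᵥ v)) := (hq.eq _ _).symm
    have hsum : star v ⬝ᵥ -(Aᴴ * X + X * A) *ᵥ v = -(star (q v (A *ᵥ v)) + q v (A *ᵥ v)) := by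
      rw [← hself, hqX, hqX, neg_mulVec, add_mulVec, dotProduct_neg, dotProduct_add, star_mulVec,
        ← dotProduct_mulVec, mulVec_mulVec, mulVec_mulVec]
    have hpos := hAX.re_dotProduct_pos hv
    rw [hsum] at hpos
    simp only [RCLike.re_eq_complex_re, Complex.neg_re, Complex.add_re, Complex.star_def,
      Complex.conj_re] at hpos
    rw [toLin'_apply]
    linarith
  refine PosDef.of_dotProduct_mulVec_pos hX fun v hv => ?_
  exact RCLike.pos_iff.mpr ⟨re_apply_self_pos_of_re_apply_neg hq hT hdiss hv,
    hX.im_star_dotProduct_mulVec_self v⟩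

end Lyapunov

section KalmanYakubovichPopov

variable {n m : Type*} [Fintype n]

/-- The transfer function `C (sI - A)⁻¹ B + D` of a complex state-space system on arbitrary index
types. -/
noncomputable def transferMatrix [DecidableEq n] (A : Matrix n n ℂ) (B : Matrix n m ℂ)
    (C : Matrix m n ℂ) (D : Matrix m m ℂ) (s : ℂ) : Matrix m m ℂ :=
  C * (s • 1 - A)⁻¹ * B + D

/-- The matrix of the Kalman–Yakubovich–Popov inequality, signed so that the inequality reads
`(kypMatrix A B C D X).PosDef`. -/
def kypMatrix (A : Matrix n n ℂ) (B : Matrix n m ℂ) (C : Matrix m n ℂ) (D : Matrix m m ℂ)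
    (X : Matrix n n ℂ) : Matrix (n ⊕ m) (n ⊕ m) ℂ :=
  -fromBlocks (Aᴴ * X + X * A) (X * B - Cᴴ) (Bᴴ * X - C) (-(D + Dᴴ))

variable {A : Matrix n n ℂ} {B : Matrix n m ℂ} {C : Matrix m n ℂ} {D : Matrix m m ℂ}
  {X : Matrix n n ℂ} {x : n → ℂ} {u : m → ℂ}

theorem isUnit_smul_one_sub_of_re_nonneg [DecidableEq n] (hA : ∀ μ ∈ spectrum ℂ A, μ.re < 0)
    {s : ℂ} (hs : 0 ≤ s.re) : IsUnit (s • 1 - A) := by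
  rw [← Algebra.algebraMap_eq_smul_one, ← spectrum.notMem_iff]
  exact fun hmem => (hA s hmem).not_ge hs

theorem transferMatrix_smul [DecidableEq n] (A : Matrix n n ℂ) (B : Matrix n m ℂ)
    (C : Matrix m n ℂ) (D : Matrix m m ℂ) (c s : ℂ) :
    transferMatrix A B (c • C) (c • D) s = c • transferMatrix A B C D s := by
  simp only [transferMatrix, Matrix.smul_mul, smul_add]

theorem kypMatrix_isHermitian (hX : X.IsHermitian) : (kypMatrix A B C D X).IsHermitian := by
  refine IsHermitian.neg (IsHermitian.fromBlocks ?_ ?_ ?_)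
  · simp [IsHermitian, hX.eq, add_comm]
  · simp [hX.eq]
  · exact (isHermitian_add_transpose_self D).neg

theorem kypMatrix_eq_sub [DecidableEq n] (A : Matrix n n ℂ) (B : Matrix n m ℂ)
    (C : Matrix m n ℂ) (D : Matrix m m ℂ) (X : Matrix n n ℂ) :
    kypMatrix A B C D X = kypMatrix A B C D 0 -
      ((fromCols 1 0 : Matrix n (n ⊕ m) ℂ)ᴴ * X * fromCols A B +
        (fromCols A B)ᴴ * X * (fromCols 1 0 : Matrix n (n ⊕ m) ℂ)) := by
  have hblocks (P R : Matrix n n ℂ) (Q S : Matrix n m ℂ) : (fromCols P Q)ᴴ * X * fromCols R S =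
      fromBlocks (Pᴴ * X * R) (Pᴴ * X * S) (Qᴴ * X * R) (Qᴴ * X * S) := by
    rw [conjTranspose_fromCols_eq_fromRows_conjTranspose, fromRows_mul, fromRows_mul_fromCols]
  refine eq_sub_of_add_eq ?_
  rw [hblocks, hblocks, kypMatrix, kypMatrix, fromBlocks_neg, fromBlocks_neg, fromBlocks_add,
    fromBlocks_add]
  congr 1 <;> simp [add_comm, sub_eq_add_neg, add_assoc]

theorem convex_image_kypMatrix (A : Matrix n n ℂ) (B : Matrix n m ℂ) (C : Matrix m n ℂ)
    (D : Matrix m m ℂ) : Convex ℝ (kypMatrix A B C D '' {X | X.IsHermitian}) := by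
  classical
  rintro _ ⟨X, hX, rfl⟩ _ ⟨Y, hY, rfl⟩ a b - - hab
  refine ⟨a • X + b • Y, (hX.smul (.all a)).add (hY.smul (.all b)), ?_⟩
  obtain rfl : b = 1 - a := by linarith
  rw [kypMatrix_eq_sub A B C D X, kypMatrix_eq_sub A B C D Y, kypMatrix_eq_sub]
  simp only [Matrix.mul_add, Matrix.add_mul, Matrix.mul_smul, Matrix.smul_mul]
  module

section

variable [Fintype m]

theorem dotProduct_kypMatrix_mulVec (A : Matrix n n ℂ) (B : Matrix n m ℂ) (C : Matrix m n ℂ)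
    (D : Matrix m m ℂ) (X : Matrix n n ℂ) (x : n → ℂ) (u : m → ℂ) :
    star (Sum.elim x u) ⬝ᵥ kypMatrix A B C D X *ᵥ Sum.elim x u =
      (star u ⬝ᵥ (C *ᵥ x + D *ᵥ u) + star (C *ᵥ x + D *ᵥ u) ⬝ᵥ u) -
        (star x ⬝ᵥ X *ᵥ (A *ᵥ x + B *ᵥ u) + star (A *ᵥ x + B *ᵥ u) ⬝ᵥ X *ᵥ x) := by
  have hstar : star (Sum.elim x u) = Sum.elim (star x) (star u) := by
    ext (i | i) <;> rfl
  rw [hstar, kypMatrix, neg_mulVec, fromBlocks_mulVec, dotProduct_neg, Sum.elim_comp_inl,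
    Sum.elim_comp_inr, sumElim_dotProduct_sumElim]
  simp only [add_mulVec, sub_mulVec, neg_mulVec, mulVec_add, dotProduct_add, dotProduct_sub,
    dotProduct_neg, add_dotProduct, star_add, star_mulVec, ← dotProduct_mulVec, mulVec_mulVec]
  ring

theorem dotProduct_kypMatrix_mulVec_zero :
    star (Sum.elim 0 u) ⬝ᵥ kypMatrix A B C D X *ᵥ Sum.elim 0 u = star u ⬝ᵥ (D + Dᴴ) *ᵥ u := by
  rw [dotProduct_kypMatrix_mulVec, add_mulVec, dotProduct_add, mulVec_zero, zero_add,
    star_mulVec D, ← dotProduct_mulVec]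
  simp

variable [DecidableEq n]

theorem mulVec_add_eq_smul_iff {s : ℂ} (hs : IsUnit (s • 1 - A)) :
    A *ᵥ x + B *ᵥ u = s • x ↔ x = (s • 1 - A)⁻¹ *ᵥ B *ᵥ u := by
  have hdet := (isUnit_iff_isUnit_det _).mp hs
  have hsub : A *ᵥ x + B *ᵥ u = s • x ↔ (s • 1 - A) *ᵥ x = B *ᵥ u := by
    rw [sub_mulVec, smul_mulVec, one_mulVec, sub_eq_iff_eq_add', eq_comm]
  rw [hsub]
  constructor <;> intro h
  · rw [← h, mulVec_mulVec, nonsing_inv_mul _ hdet, one_mulVec]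
  · rw [h, mulVec_mulVec, mul_nonsing_inv _ hdet, one_mulVec]

theorem transferMatrix_mulVec {s : ℂ} (hs : IsUnit (s • 1 - A))
    (hx : A *ᵥ x + B *ᵥ u = s • x) : transferMatrix A B C D s *ᵥ u = C *ᵥ x + D *ᵥ u := by
  rw [(mulVec_add_eq_smul_iff hs).mp hx, transferMatrix, add_mulVec, mulVec_mulVec, mulVec_mulVec,
    Matrix.mul_assoc]

theorem dotProduct_kypMatrix_mulVec_of_frequency {ω : ℝ} (hunit : IsUnit ((ω * Complex.I) • 1 - A))
    (hx : A *ᵥ x + B *ᵥ u = (ω * Complex.I) • x) :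
    star (Sum.elim x u) ⬝ᵥ kypMatrix A B C D X *ᵥ Sum.elim x u =
      star u ⬝ᵥ (transferMatrix A B C D (ω * Complex.I) +
        (transferMatrix A B C D (ω * Complex.I))ᴴ) *ᵥ u := by
  rw [dotProduct_kypMatrix_mulVec, hx, ← transferMatrix_mulVec hunit hx, add_mulVec,
    dotProduct_add, star_mulVec, ← dotProduct_mulVec, mulVec_smul, dotProduct_smul, star_smul,
    smul_dotProduct]
  simp

theorem dotProduct_kypMatrix_mulVec_pos
    (hunit : ∀ ω : ℝ, IsUnit ((ω * Complex.I) • 1 - A))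
    (hG : ∀ ω : ℝ, (transferMatrix A B C D (ω * Complex.I) +
      (transferMatrix A B C D (ω * Complex.I))ᴴ).PosDef) (hD : (D + Dᴴ).PosDef)
    {z : n ⊕ m → ℂ} (hz : z ≠ 0)
    (hzω : (fromCols 1 0 : Matrix n (n ⊕ m) ℂ) *ᵥ z = 0 ∨
      ∃ ω : ℝ, fromCols A B *ᵥ z = (ω * Complex.I) • (fromCols 1 0 : Matrix n (n ⊕ m) ℂ) *ᵥ z) :
    0 < star z ⬝ᵥ kypMatrix A B C D X *ᵥ z := by
  obtain ⟨x, u, rfl⟩ : ∃ x u, z = Sum.elim x u := ⟨_, _, (Sum.elim_comp_inl_inr z).symm⟩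
  simp only [fromCols_mulVec_sumElim, one_mulVec, zero_mulVec, add_zero] at hzω
  obtain rfl | ⟨ω, hω⟩ := hzω
  · rw [dotProduct_kypMatrix_mulVec_zero]
    exact hD.dotProduct_mulVec_pos (by rintro rfl; exact hz (by simp))
  · rw [dotProduct_kypMatrix_mulVec_of_frequency (hunit ω) hω]
    refine (hG ω).dotProduct_mulVec_pos ?_
    rintro rfl
    have hx : x = 0 := by simpa using (mulVec_add_eq_smul_iff (hunit ω)).mp hω
    exact hz (by simp [hx])

/-- The adjoint, for the trace pairing, of the linear part of `X ↦ -kypMatrix A B C D X`;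
the blocks `[1 0]` and `[A B]` send `(x, u)` to `x` and to `A x + B u`. -/
def kypDual (A : Matrix n n ℂ) (B : Matrix n m ℂ) (W : Matrix (n ⊕ m) (n ⊕ m) ℂ) :
    Matrix n n ℂ :=
  (fromCols 1 0 : Matrix n (n ⊕ m) ℂ) * W * (fromCols A B)ᴴ +
    fromCols A B * W * (fromCols 1 0 : Matrix n (n ⊕ m) ℂ)ᴴ

theorem kypDual_isHermitian {W : Matrix (n ⊕ m) (n ⊕ m) ℂ} (hW : W.IsHermitian) :
    (kypDual A B W).IsHermitian := by
  simp [kypDual, IsHermitian, hW.eq, Matrix.mul_assoc, add_comm]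

theorem trace_mul_kypMatrix (A : Matrix n n ℂ) (B : Matrix n m ℂ) (C : Matrix m n ℂ)
    (D : Matrix m m ℂ) (X : Matrix n n ℂ) (W : Matrix (n ⊕ m) (n ⊕ m) ℂ) :
    (W * kypMatrix A B C D X).trace =
      (W * kypMatrix A B C D 0).trace - (X * kypDual A B W).trace := by
  have hcycle (J K : Matrix n (n ⊕ m) ℂ) : (W * (Jᴴ * X * K)).trace = (X * (K * W * Jᴴ)).trace := by
    rw [Matrix.mul_assoc, ← Matrix.mul_assoc, trace_mul_comm, Matrix.mul_assoc, Matrix.mul_assoc]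
  rw [kypMatrix_eq_sub, kypDual, Matrix.mul_sub, Matrix.mul_add, trace_sub, trace_add, hcycle,
    hcycle, Matrix.mul_add, trace_add, add_comm]

theorem trace_mul_kypMatrix_pos
    (hunit : ∀ ω : ℝ, IsUnit ((ω * Complex.I) • 1 - A))
    (hG : ∀ ω : ℝ, (transferMatrix A B C D (ω * Complex.I) +
      (transferMatrix A B C D (ω * Complex.I))ᴴ).PosDef) (hD : (D + Dᴴ).PosDef)
    {W : Matrix (n ⊕ m) (n ⊕ m) ℂ} (hW : W.PosSemidef) (hW0 : W ≠ 0) (hdual : kypDual A B W = 0) :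
    0 < (W * kypMatrix A B C D X).trace := by
  obtain ⟨r, w, hWw, hw⟩ := exists_eq_sum_vecMulVec_of_conj_eq_zero hW hdual
  have hpos (i : Fin r) (hi : w i ≠ 0) : 0 < star (w i) ⬝ᵥ kypMatrix A B C D X *ᵥ w i :=
    dotProduct_kypMatrix_mulVec_pos hunit hG hD hi (hw i)
  have hnonneg (i : Fin r) : 0 ≤ star (w i) ⬝ᵥ kypMatrix A B C D X *ᵥ w i := by
    rcases eq_or_ne (w i) 0 with hi | hi
    · simp [hi]
    · exact (hpos i hi).le
  obtain ⟨i, hi⟩ : ∃ i, w i ≠ 0 := by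
    by_contra! h
    exact hW0 (by simp [hWw, h])
  simp_rw [hWw, Matrix.sum_mul, trace_sum, trace_vecMulVec_star_mul]
  exact Finset.sum_pos' (fun i _ => hnonneg i) ⟨i, Finset.mem_univ i, hpos i hi⟩

theorem exists_isHermitian_trace_mul_kypMatrix_pos
    (hunit : ∀ ω : ℝ, IsUnit ((ω * Complex.I) • 1 - A))
    (hG : ∀ ω : ℝ, (transferMatrix A B C D (ω * Complex.I) +
      (transferMatrix A B C D (ω * Complex.I))ᴴ).PosDef) (hD : (D + Dᴴ).PosDef)
    {W : Matrix (n ⊕ m) (n ⊕ m) ℂ} (hW : W.PosSemidef) (hW0 : W ≠ 0) :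
    ∃ X : Matrix n n ℂ, X.IsHermitian ∧ 0 < (W * kypMatrix A B C D X).trace.re := by
  rcases eq_or_ne (kypDual A B W) 0 with hdual | hdual
  · exact ⟨0, isHermitian_zero,
      (RCLike.pos_iff.mp (trace_mul_kypMatrix_pos hunit hG hD hW hW0 hdual)).1⟩
  · obtain ⟨X, hX, hpos⟩ := exists_isHermitian_re_sub_trace_mul_pos
      (W * kypMatrix A B C D 0).trace (kypDual_isHermitian hW.isHermitian) hdual
    exact ⟨X, hX, by rwa [trace_mul_kypMatrix]⟩

end

variable [Finite m]

theorem posDef_feedthrough_add_of_kypMatrix (h : (kypMatrix A B C D X).PosDef) :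
    (D + Dᴴ).PosDef := by
  cases nonempty_fintype m
  refine .of_dotProduct_mulVec_pos (isHermitian_add_transpose_self _) fun u hu => ?_
  rw [← dotProduct_kypMatrix_mulVec_zero (A := A) (B := B) (C := C) (X := X)]
  exact h.dotProduct_mulVec_pos fun hz => hu (by simpa using congrArg (· ∘ Sum.inr) hz)

variable [DecidableEq n]

theorem posDef_transferMatrix_add_of_kypMatrix {ω : ℝ} (hunit : IsUnit ((ω * Complex.I) • 1 - A))
    (h : (kypMatrix A B C D X).PosDef) :
    (transferMatrix A B C D (ω * Complex.I) +
      (transferMatrix A B C D (ω * Complex.I))ᴴ).PosDef := by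
  cases nonempty_fintype m
  refine .of_dotProduct_mulVec_pos (isHermitian_add_transpose_self _) fun u hu => ?_
  rw [← dotProduct_kypMatrix_mulVec_of_frequency (X := X) hunit
    ((mulVec_add_eq_smul_iff hunit).mpr rfl)]
  exact h.dotProduct_mulVec_pos fun hz => hu (by simpa using congrArg (· ∘ Sum.inr) hz)

theorem kalman_yakubovich_popov (hA : ∀ μ ∈ spectrum ℂ A, μ.re < 0) :
    ((∀ ω : ℝ, (transferMatrix A B C D (ω * Complex.I) +
        (transferMatrix A B C D (ω * Complex.I))ᴴ).PosDef) ∧ (D + Dᴴ).PosDef) ↔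
      ∃ X : Matrix n n ℂ, X.PosDef ∧ (kypMatrix A B C D X).PosDef := by
  cases nonempty_fintype m
  have hunit (ω : ℝ) : IsUnit ((ω * Complex.I) • 1 - A) :=
    isUnit_smul_one_sub_of_re_nonneg hA (by simp)
  constructor
  · rintro ⟨hG, hD⟩
    obtain ⟨_, ⟨X, hX, rfl⟩, hpos⟩ := exists_posDef_of_convex (convex_image_kypMatrix A B C D)
      ⟨_, 0, isHermitian_zero, rfl⟩ (Set.forall_mem_image.mpr fun X hX => kypMatrix_isHermitian hX)
      fun W hW hW0 => by
        simpa using exists_isHermitian_trace_mul_kypMatrix_pos hunit hG hD hW hW0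
    refine ⟨X, posDef_of_posDef_neg_lyapunov hA hX ?_, hpos⟩
    exact hpos.submatrix Sum.inl_injective
  · rintro ⟨X, -, hpos⟩
    exact ⟨fun ω => posDef_transferMatrix_add_of_kypMatrix (hunit ω) hpos,
      posDef_feedthrough_add_of_kypMatrix hpos⟩

end KalmanYakubovichPopov

theorem sectored_real_lemma_general {n m : Type*} [Fintype n] [DecidableEq n] [Finite m]
    (A : Matrix n n ℂ) (B : Matrix n m ℂ) (C : Matrix m n ℂ) (D : Matrix m m ℂ)
    (hA : ∀ μ ∈ spectrum ℂ A, μ.re < 0) (e : ℂ) :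
    ((∀ ω : ℝ, (e • transferMatrix A B C D (ω * Complex.I) +
        star e • (transferMatrix A B C D (ω * Complex.I))ᴴ).PosDef) ∧
      (e • D + star e • Dᴴ).PosDef) ↔
    ∃ X : Matrix n n ℂ, X.IsHermitian ∧ X.PosDef ∧
      (-fromBlocks (Aᴴ * X + X * A) (X * B - star e • Cᴴ) (Bᴴ * X - e • C)
        (-(e • D + star e • Dᴴ))).PosDef := by
  simp_rw [← conjTranspose_smul, ← transferMatrix_smul, kalman_yakubovich_popov hA]
  exact exists_congr fun X => ⟨fun h => ⟨h.1.isHermitian, h⟩, fun h => h.2⟩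

theorem conjTranspose_map_ofReal {n m : Type*} (M : Matrix n m ℝ) :
    (M.map Complex.ofReal)ᴴ = (M.map Complex.ofReal)ᵀ := by
  ext i j
  exact Complex.conj_ofReal _

/-- Sectored real lemma: for a stable minimal realization and `α ∈ (0, π/2]`, the
frequency-domain phase bound `Φ∞(G) < α` holds if and only if an associated linear
matrix inequality has a positive definite Hermitian solution. -/
theorem sectored_real_lemma {n m : ℕ}
    (A : Matrix (Fin n) (Fin n) ℝ) (B : Matrix (Fin n) (Fin m) ℝ)
    (C : Matrix (Fin m) (Fin n) ℝ) (D : Matrix (Fin m) (Fin m) ℝ)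
    (hA : IsHurwitz A)
    (hctrb : (ctrbMatrix A B).rank = n)
    (hobsv : (ctrbMatrix A.transpose C.transpose).rank = n)
    (α : ℝ) (hα : α ∈ Set.Ioc 0 (π / 2)) :
    ((∀ ω : ℝ,
        (Complex.exp ((↑(π / 2 - α) : ℂ) * Complex.I) •
            transferFunction A B C D ((ω : ℂ) * Complex.I) +
          star (Complex.exp ((↑(π / 2 - α) : ℂ) * Complex.I)) •
            (transferFunction A B C D ((ω : ℂ) * Complex.I)).conjTranspose).PosDef) ∧
      (Complex.exp ((↑(π / 2 - α) : ℂ) * Complex.I) • D.map Complex.ofReal +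
        star (Complex.exp ((↑(π / 2 - α) : ℂ) * Complex.I)) •
          D.transpose.map Complex.ofReal).PosDef) ↔
    ∃ X : Matrix (Fin n) (Fin n) ℂ, X.IsHermitian ∧ X.PosDef ∧
      (-Matrix.fromBlocks
          ((A.map Complex.ofReal).transpose * X + X * A.map Complex.ofReal)
          (X * B.map Complex.ofReal -
            star (Complex.exp ((↑(π / 2 - α) : ℂ) * Complex.I)) •
              (C.map Complex.ofReal).transpose)
          ((B.map Complex.ofReal).transpose * X -
            Complex.exp ((↑(π / 2 - α) : ℂ) * Complex.I) • C.map Complex.ofReal)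
          (-(Complex.exp ((↑(π / 2 - α) : ℂ) * Complex.I) • D.map Complex.ofReal +
            star (Complex.exp ((↑(π / 2 - α) : ℂ) * Complex.I)) •
              D.transpose.map Complex.ofReal))).PosDef := by
  simpa only [conjTranspose_map_ofReal, transpose_map, transferMatrix, transferFunction] using
    sectored_real_lemma_general (A.map Complex.ofReal) (B.map Complex.ofReal)
      (C.map Complex.ofReal) (D.map Complex.ofReal) hA _
end

section
/- (Theorem 3, LMI characterization of half-cramped phase-bounded systems) Let A, B, C, D be real matrices of sizes n×n, n×m, m×n, m×m with A Hurwitz stable, (A,B) controllable and (C,A) observable, let α ∈ Set.Ioc (π/2) π, set η = α − π/2, and let G(s) = C(s•1 − A)⁻¹B + D over ℂ. For ε ∈ ({1, −1} : Set ℝ) write e_ε = Complex.exp(ε*η*Complex.I) and M_ε = Matrix.fromBlocks 0 (−(star e_ε)•Cᵀ) (−e_ε•C) (−(e_ε•D + (star e_ε)•Dᵀ)) (real matrices coerced to ℂ). Then the following are equivalent: (a) G is half-cramped with Φ∞(G) < α, i.e., there exists ε ∈ {1, −1} such that for all ω ≥ 0 the Hermitian matrix e_ε • G(ω*I) + (star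 e_ε) • (G(ω*I))ᴴ is positive definite and e_ε•(D:Matrix _ _ ℂ) + (star e_ε)•(Dᵀ:Matrix _ _ ℂ) is positive definite; (b) there exist ε ∈ {1, −1} and Hermitian matrices X, Y ∈ Matrix (Fin n) (Fin n) ℂ with Y.PosDef such that, with K = Matrix.fromBlocks (A:Matrix _ _ ℂ) B 1 0 and P = Matrix.fromBlocks 0 (X + Complex.I•Y) (X − Complex.I•Y) 0, the matrix −(Kᴴ * P * K + M_ε) is positive definite. -/
open Matrix
open scoped ComplexOrder Real

/-!
Write `Z ≫ 0` if `Z + Zᴴ` is positive definite. The matrices `Y - i X` with `X` Hermitian and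
`Y ≻ 0` are exactly the `Z ≫ 0`, so with `E = -i [A B]` and `F = [I 0]` the LMI asks for some
`Z ≫ 0` with `N - Eᴴ Z F ≫ 0`, where the unimodular rotation is absorbed in the output matrices
`[C D]` that form the last block row of `N`. If there is no such `Z`, the Hahn–Banach theorem gives
`W ⪰ 0`, `W ≠ 0`, with `Re tr (W N) ≤ 0` and `E W Fᴴ ⪰ 0`. The last condition splits `W` into a sum
of terms `v vᴴ` with `E v = ω F v` for some `ω ∈ [0, ∞]`; such a `v` is a state-input pair of the
system at frequency `ω`, so positivity of the transfer function there makes `Re vᴴ N v > 0`, a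
contradiction.
-/

lemma nonneg_and_nonneg_of_forall_pos_mul_add_nonneg {a b : ℝ}
    (h : ∀ t : ℝ, 0 < t → 0 ≤ t * a + b) : 0 ≤ a ∧ 0 ≤ b := by
  constructor
  · by_contra! ha
    have := h ((|b| + 1) / -a) (div_pos (by positivity) (neg_pos.2 ha))
    rw [div_mul_eq_mul_div, div_neg, mul_div_cancel_right₀ _ ha.ne] at this
    linarith [le_abs_self b]
  · refine le_of_forall_pos_lt_add fun ε hε => ?_
    have := h (ε / (|a| + 1)) (by positivity)
    have : ε / (|a| + 1) * a < ε := by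
      rw [div_mul_eq_mul_div, div_lt_iff₀ (by positivity)]
      nlinarith [le_abs_self a]
    linarith

section Accretive

variable {𝕜 ι : Type*} [RCLike 𝕜]

/-- A square matrix is strictly accretive if its Hermitian part is positive definite. -/
def IsStrictlyAccretive (Z : Matrix ι ι 𝕜) : Prop :=
  (Z + Zᴴ).PosDef

namespace IsStrictlyAccretive

lemma smul {Z : Matrix ι ι 𝕜} (hZ : IsStrictlyAccretive Z) {t : ℝ} (ht : 0 < t) :
    IsStrictlyAccretive (t • Z) := by
  simpa [IsStrictlyAccretive] using PosDef.smul hZ ht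

lemma one [DecidableEq ι] : IsStrictlyAccretive (1 : Matrix ι ι 𝕜) := by
  simpa [IsStrictlyAccretive] using PosDef.one.add PosDef.one

end IsStrictlyAccretive

section Fintype

variable [Fintype ι]

lemma re_star_dotProduct_conjTranspose_mulVec (Z : Matrix ι ι 𝕜) (x : ι → 𝕜) :
    RCLike.re (star x ⬝ᵥ Zᴴ *ᵥ x) = RCLike.re (star x ⬝ᵥ Z *ᵥ x) := by
  have : star x ⬝ᵥ Zᴴ *ᵥ x = star (star x ⬝ᵥ Z *ᵥ x) := by
    rw [star_dotProduct, star_mulVec, conjTranspose_conjTranspose, ← dotProduct_mulVec]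
  rw [this, RCLike.star_def, RCLike.conj_re]

lemma isStrictlyAccretive_iff {Z : Matrix ι ι 𝕜} :
    IsStrictlyAccretive Z ↔ ∀ x : ι → 𝕜, x ≠ 0 → 0 < RCLike.re (star x ⬝ᵥ Z *ᵥ x) := by
  have hre (x : ι → 𝕜) : RCLike.re (star x ⬝ᵥ (Z + Zᴴ) *ᵥ x) =
      2 * RCLike.re (star x ⬝ᵥ Z *ᵥ x) := by
    rw [add_mulVec, dotProduct_add, map_add, re_star_dotProduct_conjTranspose_mulVec, two_mul]
  refine ⟨fun hZ x hx => by linarith [hre x, hZ.re_dotProduct_pos hx], fun hZ => ?_⟩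
  have hherm := isHermitian_add_transpose_self Z
  refine .of_dotProduct_mulVec_pos hherm fun x hx => RCLike.pos_iff.2
    ⟨by linarith [hre x, hZ x hx], hherm.im_star_dotProduct_mulVec_self x⟩

namespace IsStrictlyAccretive

variable {Z Z' : Matrix ι ι 𝕜}

lemma re_nonneg (hZ : IsStrictlyAccretive Z) (x : ι → 𝕜) :
    0 ≤ RCLike.re (star x ⬝ᵥ Z *ᵥ x) := by
  rcases eq_or_ne x 0 with rfl | hx
  · simp
  · exact (isStrictlyAccretive_iff.1 hZ x hx).le

lemma add_of_re_nonneg (hZ : IsStrictlyAccretive Z)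
    (hZ' : ∀ x : ι → 𝕜, 0 ≤ RCLike.re (star x ⬝ᵥ Z' *ᵥ x)) : IsStrictlyAccretive (Z + Z') :=
  isStrictlyAccretive_iff.2 fun x hx => by
    simpa [add_mulVec] using add_pos_of_pos_of_nonneg (isStrictlyAccretive_iff.1 hZ x hx) (hZ' x)

end IsStrictlyAccretive

end Fintype

section Finite

variable [Finite ι]

lemma convex_setOf_isStrictlyAccretive :
    Convex ℝ {Z : Matrix ι ι 𝕜 | IsStrictlyAccretive Z} :=
  have := Fintype.ofFinite ι
  convex_iff_forall_pos.2 fun _ hZ _ hZ' _ _ ha hb _ =>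
    (hZ.smul ha).add_of_re_nonneg (hZ'.smul hb).re_nonneg

lemma isOpen_setOf_isStrictlyAccretive :
    IsOpen {Z : Matrix ι ι 𝕜 | IsStrictlyAccretive Z} := by
  have := Fintype.ofFinite ι
  -- By homogeneity it suffices to test on the unit sphere, which is compact.
  have hsphere : {Z : Matrix ι ι 𝕜 | IsStrictlyAccretive Z} =
      {Z | ∀ x ∈ Metric.sphere (0 : ι → 𝕜) 1, 0 < RCLike.re (star x ⬝ᵥ Z *ᵥ x)} := by
    ext Z
    refine isStrictlyAccretive_iff.trans ⟨fun h x hx => h x fun h0 => by simp [h0] at hx,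
      fun h x hx => ?_⟩
    have hx' : 0 < ‖x‖⁻¹ := inv_pos.2 (norm_pos_iff.2 hx)
    have := h (‖x‖⁻¹ • x) (by simp [norm_smul, hx])
    simp only [star_smul, star_trivial, mulVec_smul, dotProduct_smul, smul_dotProduct,
      RCLike.smul_re] at this
    exact pos_of_mul_pos_right (pos_of_mul_pos_right this hx'.le) hx'.le
  rw [hsphere, isOpen_iff_eventually]
  intro Z hZ
  refine (isCompact_sphere (0 : ι → 𝕜) 1).eventually_forall_of_forall_eventually fun x hx => ?_
  have hcont : Continuous fun z : Matrix ι ι 𝕜 × (ι → 𝕜) =>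
      RCLike.re (star z.2 ⬝ᵥ z.1 *ᵥ z.2) := by
    fun_prop
  exact continuousAt_const.eventually_lt hcont.continuousAt (hZ x hx)

end Finite

variable [Fintype ι]

lemma isHermitian_of_forall_re_trace_mul_nonneg {S : Matrix ι ι 𝕜}
    (hS : ∀ Z : Matrix ι ι 𝕜, (∀ x, 0 ≤ RCLike.re (star x ⬝ᵥ Z *ᵥ x)) →
      0 ≤ RCLike.re (Z * S).trace) :
    S.IsHermitian := by
  set K := S - Sᴴ with hK
  have hKh : Kᴴ = -K := by simp [hK]
  have hskew (x : ι → 𝕜) : RCLike.re (star x ⬝ᵥ K *ᵥ x) = 0 := by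
    rw [hK, sub_mulVec, dotProduct_sub, map_sub, re_star_dotProduct_conjTranspose_mulVec,
      sub_self]
  have htrace : RCLike.re (Kᴴ * K).trace = -(2 * RCLike.re (K * S).trace) := by
    have : RCLike.re (K * Sᴴ).trace = -RCLike.re (K * S).trace := by
      rw [← RCLike.conj_re, ← RCLike.star_def, ← trace_conjTranspose, conjTranspose_mul, hKh,
        conjTranspose_conjTranspose, trace_mul_comm, Matrix.neg_mul, trace_neg, map_neg]
    rw [hKh, Matrix.neg_mul, trace_neg, map_neg]
    nth_rw 2 [hK]
    rw [Matrix.mul_sub, trace_sub, map_sub, this]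
    ring
  have hnonneg := RCLike.nonneg_iff.1 (posSemidef_conjTranspose_mul_self K).trace_nonneg
  have hK0 : K = 0 := trace_conjTranspose_mul_self_eq_zero_iff.1 <| RCLike.ext
    (by linarith [hS K fun x => (hskew x).ge, map_zero (RCLike.re (K := 𝕜))])
    (by simpa using hnonneg.2)
  exact (sub_eq_zero.1 hK0).symm

lemma posSemidef_of_forall_re_trace_mul_nonneg {S : Matrix ι ι 𝕜}
    (hS : ∀ Z : Matrix ι ι 𝕜, IsStrictlyAccretive Z → 0 ≤ RCLike.re (Z * S).trace) :
    S.PosSemidef := by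
  classical
  have hclosure (Z : Matrix ι ι 𝕜) (hZ : ∀ x, 0 ≤ RCLike.re (star x ⬝ᵥ Z *ᵥ x)) :
      0 ≤ RCLike.re (Z * S).trace :=
    (nonneg_and_nonneg_of_forall_pos_mul_add_nonneg (a := RCLike.re S.trace) fun t ht => by
      simpa [Matrix.add_mul, trace_smul, RCLike.smul_re]
        using hS _ ((IsStrictlyAccretive.one.smul ht).add_of_re_nonneg hZ)).2
  have hherm := isHermitian_of_forall_re_trace_mul_nonneg hclosure
  refine .of_dotProduct_mulVec_nonneg hherm fun v =>
    RCLike.nonneg_iff.2 ⟨?_, hherm.im_star_dotProduct_mulVec_self v⟩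
  have hv : star v ⬝ᵥ S *ᵥ v = (vecMulVec v (star v) * S).trace := by
    rw [trace_mul_comm, mul_vecMulVec, trace_vecMulVec, dotProduct_comm]
  rw [hv]
  exact hclosure _ (posSemidef_vecMulVec_self_star v).re_dotProduct_nonneg

lemma exists_forall_eq_re_trace_mul (f : Matrix ι ι 𝕜 →ₗ[ℝ] ℝ) :
    ∃ W : Matrix ι ι 𝕜, ∀ N, f N = RCLike.re (W * N).trace := by
  classical
  let g : Matrix ι ι 𝕜 →ₗ[𝕜] 𝕜 := Module.Dual.extendRCLike f
  let W : Matrix ι ι 𝕜 := of fun j i => g (single i j 1)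
  have hg : g = traceLinearMap ι 𝕜 𝕜 ∘ₗ LinearMap.mulLeft 𝕜 W :=
    ext_linearMap 𝕜 fun i j => LinearMap.ext_ring <| by simp [W, trace_mul_single]
  have hfg (N) : f N = RCLike.re (g N) := (Module.Dual.re_extendRCLike_apply f N).symm
  exact ⟨W, fun N => by rw [hfg, hg]; rfl⟩

lemma exists_posSemidef_forall_re_trace_mul_nonpos {T : Set (Matrix ι ι 𝕜)} (hT : Convex ℝ T)
    (hne : T.Nonempty) (hT' : ∀ N ∈ T, ¬ IsStrictlyAccretive N) :
    ∃ W : Matrix ι ι 𝕜, W.PosSemidef ∧ W ≠ 0 ∧ ∀ N ∈ T, RCLike.re (W * N).trace ≤ 0 := by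
  classical
  obtain ⟨f, u, hf, hfT⟩ := geometric_hahn_banach_open (E := Matrix ι ι 𝕜)
    convex_setOf_isStrictlyAccretive isOpen_setOf_isStrictlyAccretive hT
    (Set.disjoint_right.2 hT')
  obtain ⟨W, hW⟩ := exists_forall_eq_re_trace_mul (-f.toLinearMap)
  have hfW (N : Matrix ι ι 𝕜) : f N = -RCLike.re (W * N).trace := by
    rw [← hW N]
    simp
  have hcone (Z : Matrix ι ι 𝕜) (hZ : IsStrictlyAccretive Z) :
      0 ≤ RCLike.re (W * Z).trace ∧ 0 ≤ u :=
    nonneg_and_nonneg_of_forall_pos_mul_add_nonneg fun t ht => by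
      have := hf _ (hZ.smul ht)
      rw [hfW, Matrix.mul_smul, trace_smul, RCLike.smul_re] at this
      linarith
  refine ⟨W, posSemidef_of_forall_re_trace_mul_nonneg fun Z hZ => ?_, ?_, fun N hN => ?_⟩
  · rw [trace_mul_comm]
    exact (hcone Z hZ).1
  · rintro rfl
    obtain ⟨N, hN⟩ := hne
    have := (hfT N hN).trans_lt' (hf 1 .one)
    simp [hfW] at this
  · linarith [hfT N hN, hfW N, (hcone 1 .one).2]

end Accretive

section Pencil

variable {𝕜 m n : Type*} [RCLike 𝕜] [Fintype n]

lemma exists_pseudoinverse_of_isHermitian {N : Matrix n n 𝕜} (hN : N.IsHermitian) :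
    ∃ Q : Matrix n n 𝕜, N * Q * N = N ∧ Q * N * Q = Q ∧ (Q * N).IsHermitian := by
  classical
  have hid : cfc (fun x : ℝ => x) N = N := cfc_id' ℝ N hN
  have hmul (f g : ℝ → ℝ) : cfc f N * cfc g N = cfc (fun x => f x * g x) N :=
    (cfc_mul f g N ((Set.toFinite _).continuousOn f) ((Set.toFinite _).continuousOn g)).symm
  set Q := cfc (fun x : ℝ => x⁻¹) N with hQ
  have hQN : Q * N = cfc (fun x : ℝ => x⁻¹ * x) N := by rw [← hmul, hid]
  refine ⟨Q, ?_, ?_, ?_⟩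
  · calc N * Q * N = cfc (fun x : ℝ => x * (x⁻¹ * x)) N := by
          rw [← hmul, hid, Matrix.mul_assoc, hQN]
      _ = N := by simpa only [← mul_assoc, mul_inv_mul_cancel] using hid
  · rw [hQN, hQ, hmul]
    congr! 2 with x
    simpa using mul_inv_mul_cancel x⁻¹
  · rw [hQN]
    exact cfc_predicate _ N

lemma exists_pseudoinverse [Fintype m] (F : Matrix m n 𝕜) :
    ∃ G : Matrix n m 𝕜, F * G * F = F ∧ G * F * G = G ∧ (G * F).IsHermitian := by
  obtain ⟨Q, hNQN, hQNQ, hQN⟩ :=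
    exists_pseudoinverse_of_isHermitian (isHermitian_conjTranspose_mul_self F)
  refine ⟨Q * Fᴴ, ?_, ?_, ?_⟩
  · classical
    have hcancel : Fᴴ * F * (Q * Fᴴ * F - 1) = 0 := by
      rw [Matrix.mul_sub, Matrix.mul_one, sub_eq_zero]
      simpa only [Matrix.mul_assoc] using hNQN
    rw [conjTranspose_mul_self_mul_eq_zero, Matrix.mul_sub, Matrix.mul_one, sub_eq_zero] at hcancel
    simpa only [Matrix.mul_assoc] using hcancel
  · simpa only [Matrix.mul_assoc] using congr($hQNQ * Fᴴ)
  · simpa only [Matrix.mul_assoc] using hQN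

lemma exists_isStarProjection_mul_eq_mul [Finite m] {E F : Matrix m n 𝕜}
    (hEF : (E * Fᴴ).PosSemidef) :
    ∃ P Q : Matrix n n 𝕜, IsStarProjection P ∧ Q.PosSemidef ∧ F * P = F ∧ P * Q = Q ∧
      E * P = F * Q := by
  cases nonempty_fintype m
  obtain ⟨G, hFGF, hGFG, hGF⟩ := exists_pseudoinverse F
  have hsymm : E * Fᴴ = F * Eᴴ := by simpa using hEF.isHermitian.eq.symm
  refine ⟨G * F, G * (E * Fᴴ) * Gᴴ, ⟨?_, hGF⟩, hEF.mul_mul_conjTranspose_same G, ?_, ?_, ?_⟩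
  · rw [IsIdempotentElem, ← Matrix.mul_assoc, hGFG]
  · rw [← Matrix.mul_assoc, hFGF]
  · simp only [← Matrix.mul_assoc, hGFG]
  · calc E * (G * F) = F * Eᴴ * Gᴴ := by
          rw [← hsymm, ← hGF.eq, conjTranspose_mul, Matrix.mul_assoc]
      _ = F * G * F * Eᴴ * Gᴴ := by rw [hFGF]
      _ = F * (G * (E * Fᴴ) * Gᴴ) := by simp only [hsymm, Matrix.mul_assoc]

lemma mulVec_eq_zero_or_of_isStarProjection [DecidableEq n] {P Q : Matrix n n 𝕜}
    (hP : IsStarProjection P) (hQ : Q.PosSemidef) (hPQ : P * Q = Q) {u : n → 𝕜} {l : ℝ}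
    (hu : (Q - (1 - P)) *ᵥ u = (l : 𝕜) • u) :
    P *ᵥ u = 0 ∨ 0 ≤ l ∧ P *ᵥ u = u ∧ Q *ᵥ u = (l : 𝕜) • u := by
  have hQu : Q *ᵥ u = (l : 𝕜) • P *ᵥ u := by
    have := congr(P *ᵥ $hu)
    rwa [mulVec_mulVec, Matrix.mul_sub, Matrix.mul_sub, Matrix.mul_one, hP.isIdempotentElem.eq,
      sub_self, sub_zero, hPQ, mulVec_smul] at this
  rcases lt_or_ge l 0 with hl | hl
  · have hPpos : P.PosSemidef := by
      simpa [← star_eq_conjTranspose, hP.isSelfAdjoint.star_eq, hP.isIdempotentElem.eq]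
        using posSemidef_conjTranspose_mul_self P
    have hQnonneg := hQ.dotProduct_mulVec_nonneg u
    rw [hQu, dotProduct_smul, smul_eq_mul] at hQnonneg
    refine .inl <| (hPpos.dotProduct_mulVec_zero_iff u).1 ?_
    exact ((hPpos.dotProduct_mulVec_nonneg u).eq_of_not_lt fun hpos =>
      (mul_neg_of_neg_of_pos (RCLike.ofReal_lt_zero.2 hl) hpos).not_ge hQnonneg).symm
  · have hPu : ((1 + l : ℝ) : 𝕜) • (P *ᵥ u - u) = 0 := by
      rw [sub_mulVec, sub_mulVec, one_mulVec, hQu] at hu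
      rw [RCLike.ofReal_add, RCLike.ofReal_one, ← sub_eq_zero.2 hu]
      module
    have hPu : P *ᵥ u = u := by
      refine sub_eq_zero.1 ((smul_eq_zero.1 hPu).resolve_left ?_)
      exact_mod_cast (by linarith : 1 + l ≠ 0)
    exact .inr ⟨hl, hPu, by rw [hQu, hPu]⟩

/-- `x` is a generalized eigenvector of the pencil `E - ω F` for some `ω ∈ [0, ∞]`, where the
eigenvalue `∞` means `F x = 0`. The zero vector is allowed. -/
def IsNonnegPencilEigenvector (E F : Matrix m n 𝕜) (x : n → 𝕜) : Prop :=
  F *ᵥ x = 0 ∨ ∃ ω : ℝ, 0 ≤ ω ∧ E *ᵥ x = (ω : 𝕜) • F *ᵥ x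

lemma exists_unitary_forall_isNonnegPencilEigenvector [Finite m] [DecidableEq n]
    {E F : Matrix m n 𝕜} (hEF : (E * Fᴴ).PosSemidef) :
    ∃ U ∈ unitaryGroup n 𝕜, ∀ k, IsNonnegPencilEigenvector E F (U.col k) := by
  obtain ⟨P, Q, hP, hQ, hFP, hPQ, hEP⟩ := exists_isStarProjection_mul_eq_mul hEF
  have hT : (Q - (1 - P)).IsHermitian := hQ.isHermitian.sub (isHermitian_one.sub hP.isSelfAdjoint)
  refine ⟨hT.eigenvectorUnitary, SetLike.coe_mem _, fun k => ?_⟩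
  rw [IsHermitian.eigenvectorUnitary_col_eq]
  have hu := hT.mulVec_eigenvectorBasis k
  rw [RCLike.real_smul_eq_coe_smul (K := 𝕜)] at hu
  set u : n → 𝕜 := ⇑(hT.eigenvectorBasis k)
  rcases mulVec_eq_zero_or_of_isStarProjection hP hQ hPQ hu with hPu | ⟨hl, hPu, hQu⟩
  · left
    rw [← hFP, ← mulVec_mulVec, hPu, mulVec_zero]
  · refine .inr ⟨_, hl, ?_⟩
    calc E *ᵥ u = (E * P) *ᵥ u := by rw [← mulVec_mulVec, hPu]
      _ = F *ᵥ Q *ᵥ u := by rw [hEP, mulVec_mulVec]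
      _ = _ := by rw [hQu, mulVec_smul]

open scoped MatrixOrder in
lemma exists_eq_mul_conjTranspose_and_forall_isNonnegPencilEigenvector [Finite m]
    {W : Matrix n n 𝕜} (hW : W.PosSemidef) {E F : Matrix m n 𝕜}
    (hEF : (E * W * Fᴴ).PosSemidef) :
    ∃ V : Matrix n n 𝕜, W = V * Vᴴ ∧ ∀ k, IsNonnegPencilEigenvector E F (V.col k) := by
  classical
  obtain ⟨V, rfl⟩ := CStarAlgebra.nonneg_iff_eq_star_mul_self.1 hW.nonneg
  obtain ⟨U, hU, hcol⟩ := exists_unitary_forall_isNonnegPencilEigenvector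
    (E := E * Vᴴ) (F := F * Vᴴ) (by
      simpa [star_eq_conjTranspose, Matrix.mul_assoc] using hEF)
  refine ⟨Vᴴ * U, ?_, fun k => ?_⟩
  · rw [conjTranspose_mul, conjTranspose_conjTranspose, Matrix.mul_assoc, ← Matrix.mul_assoc U,
      ← star_eq_conjTranspose U, mem_unitaryGroup_iff.1 hU, Matrix.one_mul, star_eq_conjTranspose]
  · have hVU : (Vᴴ * U).col k = Vᴴ *ᵥ U.col k := rfl
    simpa only [IsNonnegPencilEigenvector, hVU, mulVec_mulVec] using hcol k

end Pencil

section StrictKYP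

variable {𝕜 m n : Type*} [RCLike 𝕜] [Fintype m] [Fintype n]

lemma trace_mul_conjTranspose_mul (V : Matrix n m 𝕜) (N : Matrix n n 𝕜) :
    (V * Vᴴ * N).trace = ∑ k, star (V.col k) ⬝ᵥ N *ᵥ V.col k := by
  rw [trace_mul_cycle, trace_mul_cycle, Matrix.mul_assoc]
  rfl

lemma IsNonnegPencilEigenvector.re_star_dotProduct_mulVec_nonneg {E F : Matrix m n 𝕜} {x : n → 𝕜}
    (hx : IsNonnegPencilEigenvector E F x) {Z : Matrix m m 𝕜} (hZ : IsStrictlyAccretive Z) :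
    0 ≤ RCLike.re (star x ⬝ᵥ (Eᴴ * Z * F) *ᵥ x) := by
  rw [← mulVec_mulVec, ← mulVec_mulVec, dotProduct_mulVec, ← star_mulVec]
  rcases hx with hFx | ⟨ω, hω, hEx⟩
  · simp [hFx]
  · rw [hEx, star_smul, RCLike.star_def, RCLike.conj_ofReal, smul_dotProduct, smul_eq_mul,
      RCLike.re_ofReal_mul]
    exact mul_nonneg hω (hZ.re_nonneg _)

variable {E F : Matrix m n 𝕜} {N : Matrix n n 𝕜}

lemma exists_posSemidef_of_forall_not_isStrictlyAccretive_sub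
    (h : ∀ Z : Matrix m m 𝕜, IsStrictlyAccretive Z → ¬ IsStrictlyAccretive (N - Eᴴ * Z * F)) :
    ∃ W : Matrix n n 𝕜, W.PosSemidef ∧ W ≠ 0 ∧ (E * W * Fᴴ).PosSemidef ∧
      RCLike.re (W * N).trace ≤ 0 := by
  classical
  let φ : Matrix m m 𝕜 →ₗ[ℝ] Matrix n n 𝕜 := mulRightLinearMap n ℝ F ∘ₗ mulLeftLinearMap m ℝ Eᴴ
  let ψ : Matrix m m 𝕜 →ᵃ[ℝ] Matrix n n 𝕜 := AffineMap.const ℝ _ N - φ.toAffineMap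
  obtain ⟨W, hW, hW0, hWT⟩ := exists_posSemidef_forall_re_trace_mul_nonpos
    (convex_setOf_isStrictlyAccretive.affine_image ψ) ⟨_, 1, .one, rfl⟩
    (Set.forall_mem_image.2 h)
  have htrace (Z : Matrix m m 𝕜) : (W * ψ Z).trace = (W * N).trace - (Z * (F * W * Eᴴ)).trace := by
    have : (W * (Eᴴ * Z * F)).trace = (Z * (F * W * Eᴴ)).trace := by
      rw [← Matrix.mul_assoc, ← Matrix.mul_assoc, trace_mul_comm, ← Matrix.mul_assoc,
        ← Matrix.mul_assoc, trace_mul_comm]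
    rw [← this, ← trace_sub, ← Matrix.mul_sub]
    rfl
  have hscale (Z : Matrix m m 𝕜) (hZ : IsStrictlyAccretive Z) :
      0 ≤ RCLike.re (Z * (F * W * Eᴴ)).trace ∧ 0 ≤ -RCLike.re (W * N).trace :=
    nonneg_and_nonneg_of_forall_pos_mul_add_nonneg fun t ht => by
      have := hWT _ ⟨_, hZ.smul ht, rfl⟩
      rw [htrace, map_sub, Matrix.smul_mul, trace_smul, RCLike.smul_re] at this
      linarith
  have hFWE : (F * W * Eᴴ).PosSemidef :=
    posSemidef_of_forall_re_trace_mul_nonneg fun Z hZ => (hscale Z hZ).1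
  refine ⟨W, hW, hW0, ?_, neg_nonneg.1 (hscale 1 .one).2⟩
  simpa [hW.isHermitian.eq, Matrix.mul_assoc] using hFWE.conjTranspose

lemma exists_isStrictlyAccretive_sub
    (hN : ∀ x ≠ 0, IsNonnegPencilEigenvector E F x → 0 < RCLike.re (star x ⬝ᵥ N *ᵥ x)) :
    ∃ Z : Matrix m m 𝕜, IsStrictlyAccretive Z ∧ IsStrictlyAccretive (N - Eᴴ * Z * F) := by
  by_contra! h
  obtain ⟨W, hW, hW0, hEWF, hWN⟩ := exists_posSemidef_of_forall_not_isStrictlyAccretive_sub h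
  obtain ⟨V, rfl, hV⟩ := exists_eq_mul_conjTranspose_and_forall_isNonnegPencilEigenvector hW hEWF
  rw [trace_mul_conjTranspose_mul, map_sum] at hWN
  have hcol (k : n) : 0 ≤ RCLike.re (star (V.col k) ⬝ᵥ N *ᵥ V.col k) := by
    by_cases hk : V.col k = 0
    · simp [hk]
    · exact (hN _ hk (hV k)).le
  have hV0 : V ≠ 0 := by
    rintro rfl
    simp at hW0
  obtain ⟨i, k, hik⟩ : ∃ i k, V i k ≠ 0 := by
    simpa [← Matrix.ext_iff] using hV0
  have hk : V.col k ≠ 0 := fun h => hik congr($h i)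
  exact (Finset.sum_pos' (fun k _ => hcol k) ⟨k, Finset.mem_univ k, hN _ hk (hV k)⟩).not_ge hWN

/-- The strict Kalman–Yakubovich–Popov lemma on the half-line `ω ∈ [0, ∞]`, for a matrix pencil. -/
theorem exists_isStrictlyAccretive_sub_iff :
    (∃ Z : Matrix m m 𝕜, IsStrictlyAccretive Z ∧ IsStrictlyAccretive (N - Eᴴ * Z * F)) ↔
      ∀ x ≠ 0, IsNonnegPencilEigenvector E F x → 0 < RCLike.re (star x ⬝ᵥ N *ᵥ x) := by
  refine ⟨fun ⟨Z, hZ, hNZ⟩ x hx0 hx => ?_, exists_isStrictlyAccretive_sub⟩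
  have hpos := isStrictlyAccretive_iff.1 hNZ x hx0
  rw [sub_mulVec, dotProduct_sub, map_sub] at hpos
  linarith [hx.re_star_dotProduct_mulVec_nonneg hZ]

end StrictKYP

lemma exists_isStrictlyAccretive_iff_exists_isHermitian_posDef {n : Type*}
    {p : Matrix n n ℂ → Prop} :
    (∃ Z, IsStrictlyAccretive Z ∧ p Z) ↔
      ∃ X Y : Matrix n n ℂ, X.IsHermitian ∧ Y.PosDef ∧ p (Y - Complex.I • X) := by
  constructor
  · rintro ⟨Z, hZ, hp⟩
    refine ⟨-imaginaryPart Z, realPart Z, (imaginaryPart Z).2.neg, ?_, ?_⟩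
    · rw [realPart_apply_coe]
      exact PosDef.smul hZ (by norm_num)
    · rwa [smul_neg, sub_neg_eq_add, realPart_add_I_smul_imaginaryPart]
  · rintro ⟨X, Y, hX, hY, hp⟩
    refine ⟨_, ?_, hp⟩
    have : Y - Complex.I • X + (Y - Complex.I • X)ᴴ = Y + Y := by
      rw [conjTranspose_sub, conjTranspose_smul, hX.eq, hY.isHermitian.eq, Complex.star_def,
        Complex.conj_I]
      module
    rw [IsStrictlyAccretive, this]
    exact hY.add hY

section StateSpace

variable {n m : Type*} [Fintype n] [DecidableEq n]

/-- The transfer function `C (s I - A)⁻¹ B + D` of a complex state-space system. At an eigenvalue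
`s` of `A` the matrix inverse, hence the first summand, has the junk value `0`. -/
noncomputable def stateSpaceTransfer (A : Matrix n n ℂ) (B : Matrix n m ℂ) (C : Matrix m n ℂ)
    (D : Matrix m m ℂ) (s : ℂ) : Matrix m m ℂ :=
  C * (s • 1 - A)⁻¹ * B + D

lemma sub_add_conjTranspose_eq_neg_conjTranspose_mul_mul_add (A : Matrix n n ℂ) (B : Matrix n m ℂ)
    (C : Matrix m n ℂ) (D : Matrix m m ℂ) {X Y : Matrix n n ℂ} (hX : X.IsHermitian)
    (hY : Y.IsHermitian) :
    letI L := fromBlocks 0 0 C D -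
      (-Complex.I • fromCols A B)ᴴ * (Y - Complex.I • X) * fromCols (1 : Matrix n n ℂ) 0
    L + Lᴴ = -((fromBlocks A B (1 : Matrix n n ℂ) 0)ᴴ *
      fromBlocks 0 (X + Complex.I • Y) (X - Complex.I • Y) 0 * fromBlocks A B (1 : Matrix n n ℂ) 0 +
        fromBlocks 0 (-Cᴴ) (-C) (-(D + Dᴴ))) := by
  have hN : fromBlocks 0 (-Cᴴ) (-C) (-(D + Dᴴ)) =
      -(fromBlocks (0 : Matrix n n ℂ) 0 C D + (fromBlocks 0 0 C D)ᴴ) := by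
    simp [fromBlocks_conjTranspose, fromBlocks_add, fromBlocks_neg]
  have hP : X - Complex.I • Y = (X + Complex.I • Y)ᴴ := by
    simp [hX.eq, hY.eq, sub_eq_add_neg]
  have hZ : (-Complex.I • fromCols A B)ᴴ * (Y - Complex.I • X) =
      (fromCols A B)ᴴ * (X + Complex.I • Y) := by
    simp only [conjTranspose_smul, Matrix.smul_mul, ← Matrix.mul_smul]
    congr 1
    simp [smul_sub, smul_smul, add_comm]
  rw [hN, hZ, hP, ← fromRows_fromCols_eq_fromBlocks A]
  simp only [conjTranspose_fromRows_eq_fromCols_conjTranspose, fromCols_mul_fromBlocks,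
    fromCols_mul_fromRows, Matrix.mul_zero, zero_add, add_zero, conjTranspose_sub,
    conjTranspose_mul, conjTranspose_conjTranspose, Matrix.mul_assoc]
  abel

lemma eq_inv_mulVec_iff {R : Type*} [CommRing R] {M : Matrix n n R} (hM : IsUnit M)
    {f v : n → R} :
    f = M⁻¹ *ᵥ v ↔ M *ᵥ f = v := by
  cases hM.nonempty_invertible
  exact ⟨fun h => by simp [h], fun h => by simp [← h]⟩

lemma isNonnegPencilEigenvector_sumElim_iff [Fintype m] {A : Matrix n n ℂ} (B : Matrix n m ℂ)
    (hA : ∀ ω : ℝ, 0 ≤ ω → (ω * Complex.I : ℂ) ∉ spectrum ℂ A) (f : n → ℂ) (h : m → ℂ) :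
    IsNonnegPencilEigenvector (-Complex.I • fromCols A B) (fromCols 1 0) (Sum.elim f h) ↔
      f = 0 ∨ ∃ ω : ℝ, 0 ≤ ω ∧ f = ((ω * Complex.I : ℂ) • 1 - A)⁻¹ *ᵥ B *ᵥ h := by
  have hF : fromCols (1 : Matrix n n ℂ) (0 : Matrix n m ℂ) *ᵥ Sum.elim f h = f := by
    simp [fromCols_mulVec]
  have hE : (-Complex.I • fromCols A B) *ᵥ Sum.elim f h = -Complex.I • (A *ᵥ f + B *ᵥ h) := by
    rw [smul_mulVec, fromCols_mulVec_sumElim]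
  rw [IsNonnegPencilEigenvector, hF, hE]
  refine or_congr_right (exists_congr fun ω => and_congr_right fun hω => ?_)
  have hunit : IsUnit ((ω * Complex.I : ℂ) • 1 - A) := by
    simpa [spectrum.notMem_iff, Algebra.algebraMap_eq_smul_one] using hA ω hω
  rw [eq_inv_mulVec_iff hunit, sub_mulVec, smul_mulVec, one_mulVec, sub_eq_iff_eq_add', mul_comm,
    mul_smul, ← (smul_right_injective (n → ℂ) Complex.I_ne_zero).eq_iff, smul_smul, mul_neg,
    Complex.I_mul_I, neg_neg, one_smul, eq_comm]
  rfl

lemma forall_isNonnegPencilEigenvector_iff_forall_isStrictlyAccretive [Fintype m]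
    {A : Matrix n n ℂ} (B : Matrix n m ℂ) (C : Matrix m n ℂ) (D : Matrix m m ℂ)
    (hA : ∀ ω : ℝ, 0 ≤ ω → (ω * Complex.I : ℂ) ∉ spectrum ℂ A) :
    (∀ x ≠ 0, IsNonnegPencilEigenvector (-Complex.I • fromCols A B) (fromCols 1 0) x →
        0 < RCLike.re (star x ⬝ᵥ fromBlocks 0 0 C D *ᵥ x)) ↔
      (∀ ω : ℝ, 0 ≤ ω → IsStrictlyAccretive (stateSpaceTransfer A B C D (ω * Complex.I))) ∧
        IsStrictlyAccretive D := by
  have hform (f : n → ℂ) (h : m → ℂ) :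
      star (Sum.elim f h) ⬝ᵥ fromBlocks 0 0 C D *ᵥ Sum.elim f h =
        star h ⬝ᵥ (C *ᵥ f + D *ᵥ h) := by
    simp [fromBlocks_mulVec, Function.star_sumElim, sumElim_dotProduct_sumElim]
  have htransfer (s : ℂ) (h : m → ℂ) : stateSpaceTransfer A B C D s *ᵥ h =
      C *ᵥ (s • 1 - A)⁻¹ *ᵥ B *ᵥ h + D *ᵥ h := by
    rw [stateSpaceTransfer, add_mulVec, ← mulVec_mulVec, ← mulVec_mulVec]
  have hne {f : n → ℂ} {h : m → ℂ} (hh : h ≠ 0) : Sum.elim f h ≠ 0 := fun h0 =>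
    hh congr($h0 ∘ Sum.inr)
  constructor
  · refine fun H => ⟨fun ω hω => isStrictlyAccretive_iff.2 fun h hh => ?_,
      isStrictlyAccretive_iff.2 fun h hh => ?_⟩
    · simpa only [hform, htransfer] using H _ (hne hh)
        ((isNonnegPencilEigenvector_sumElim_iff B hA _ h).2 (.inr ⟨ω, hω, rfl⟩))
    · simpa only [hform, mulVec_zero, zero_add] using H _ (hne hh)
        ((isNonnegPencilEigenvector_sumElim_iff B hA 0 h).2 (.inl rfl))
  · rintro ⟨hG, hD⟩ x hx0 hx
    obtain ⟨f, h, rfl⟩ : ∃ f h, x = Sum.elim f h := ⟨_, _, (Sum.elim_comp_inl_inr x).symm⟩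
    rw [hform]
    rcases (isNonnegPencilEigenvector_sumElim_iff B hA f h).1 hx with rfl | ⟨ω, hω, rfl⟩
    · have hh : h ≠ 0 := by rintro rfl; simp at hx0
      simpa only [mulVec_zero, zero_add] using isStrictlyAccretive_iff.1 hD h hh
    · have hh : h ≠ 0 := by rintro rfl; simp at hx0
      simpa only [htransfer] using isStrictlyAccretive_iff.1 (hG ω hω) h hh

theorem forall_isStrictlyAccretive_stateSpaceTransfer_iff_exists_posDef [Finite m]
    {A : Matrix n n ℂ} (hA : ∀ ω : ℝ, 0 ≤ ω → (ω * Complex.I : ℂ) ∉ spectrum ℂ A)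
    (B : Matrix n m ℂ) (C : Matrix m n ℂ) (D : Matrix m m ℂ) :
    ((∀ ω : ℝ, 0 ≤ ω → IsStrictlyAccretive (stateSpaceTransfer A B C D (ω * Complex.I))) ∧
        IsStrictlyAccretive D) ↔
      ∃ X Y : Matrix n n ℂ, X.IsHermitian ∧ Y.PosDef ∧
        (-((fromBlocks A B (1 : Matrix n n ℂ) 0)ᴴ *
            fromBlocks 0 (X + Complex.I • Y) (X - Complex.I • Y) 0 *
            fromBlocks A B (1 : Matrix n n ℂ) 0 +
          fromBlocks 0 (-Cᴴ) (-C) (-(D + Dᴴ)))).PosDef := by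
  cases nonempty_fintype m
  rw [← forall_isNonnegPencilEigenvector_iff_forall_isStrictlyAccretive B C D hA,
    ← exists_isStrictlyAccretive_sub_iff, exists_isStrictlyAccretive_iff_exists_isHermitian_posDef]
  refine exists_congr fun X => exists_congr fun Y => and_congr_right fun hX =>
    and_congr_right fun hY => ?_
  rw [IsStrictlyAccretive,
    sub_add_conjTranspose_eq_neg_conjTranspose_mul_mul_add A B C D hX hY.isHermitian]

theorem halfCramped_sectored_real_lemma_general [Finite m]
    {A : Matrix n n ℂ} (hA : ∀ ω : ℝ, 0 ≤ ω → (ω * Complex.I : ℂ) ∉ spectrum ℂ A)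
    (B : Matrix n m ℂ) (C : Matrix m n ℂ) (D : Matrix m m ℂ) (e : ℂ) :
    ((∀ ω : ℝ, 0 ≤ ω → (e • stateSpaceTransfer A B C D (ω * Complex.I) +
          star e • (stateSpaceTransfer A B C D (ω * Complex.I))ᴴ).PosDef) ∧
        (e • D + star e • Dᴴ).PosDef) ↔
      ∃ X Y : Matrix n n ℂ, X.IsHermitian ∧ Y.IsHermitian ∧ Y.PosDef ∧
        (-((fromBlocks A B (1 : Matrix n n ℂ) 0)ᴴ *
            fromBlocks 0 (X + Complex.I • Y) (X - Complex.I • Y) 0 *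
            fromBlocks A B (1 : Matrix n n ℂ) 0 +
          fromBlocks 0 (-(star e • Cᴴ)) (-(e • C)) (-(e • D + star e • Dᴴ)))).PosDef := by
  have hG (s : ℂ) :
      stateSpaceTransfer A B (e • C) (e • D) s = e • stateSpaceTransfer A B C D s := by
    simp [stateSpaceTransfer]
  have hY (Y : Matrix n n ℂ) (p : Prop) : Y.IsHermitian ∧ Y.PosDef ∧ p ↔ Y.PosDef ∧ p :=
    and_iff_right_of_imp fun h => h.1.isHermitian
  simpa only [IsStrictlyAccretive, hG, conjTranspose_smul, hY] using
    forall_isStrictlyAccretive_stateSpaceTransfer_iff_exists_posDef hA B (e • C) (e • D)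

end StateSpace

lemma map_ofReal_transpose {k l : Type*} (N : Matrix k l ℝ) :
    (N.map Complex.ofReal)ᵀ = (N.map Complex.ofReal)ᴴ := by
  ext
  simp

/-- Theorem 3: LMI characterization of half-cramped systems with `Φ∞(G) < α` for
`α ∈ (π/2, π]`, via the generalized KYP lemma for the nonnegative imaginary axis. -/
theorem halfCramped_sectored_real_lemma {n m : ℕ}
    (A : Matrix (Fin n) (Fin n) ℝ) (B : Matrix (Fin n) (Fin m) ℝ)
    (C : Matrix (Fin m) (Fin n) ℝ) (D : Matrix (Fin m) (Fin m) ℝ)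
    (hA : IsHurwitz A)
    (hctrb : (ctrbMatrix A B).rank = n)
    (hobsv : (ctrbMatrix A.transpose C.transpose).rank = n)
    (α : ℝ) (hα : α ∈ Set.Ioc (π / 2) π) :
    ((∃ ε ∈ ({1, -1} : Set ℝ),
        (∀ ω : ℝ, 0 ≤ ω →
          (Complex.exp ((↑(ε * (α - π / 2)) : ℂ) * Complex.I) •
              transferFunction A B C D ((ω : ℂ) * Complex.I) +
            star (Complex.exp ((↑(ε * (α - π / 2)) : ℂ) * Complex.I)) •
              (transferFunction A B C D ((ω : ℂ) * Complex.I)).conjTranspose).PosDef) ∧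
        (Complex.exp ((↑(ε * (α - π / 2)) : ℂ) * Complex.I) • D.map Complex.ofReal +
          star (Complex.exp ((↑(ε * (α - π / 2)) : ℂ) * Complex.I)) •
            D.transpose.map Complex.ofReal).PosDef)) ↔
    ∃ ε ∈ ({1, -1} : Set ℝ), ∃ X Y : Matrix (Fin n) (Fin n) ℂ,
      X.IsHermitian ∧ Y.IsHermitian ∧ Y.PosDef ∧
      (-((Matrix.fromBlocks (A.map Complex.ofReal) (B.map Complex.ofReal)
            (1 : Matrix (Fin n) (Fin n) ℂ) 0).conjTranspose *
          Matrix.fromBlocks 0 (X + Complex.I • Y) (X - Complex.I • Y) 0 *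
          Matrix.fromBlocks (A.map Complex.ofReal) (B.map Complex.ofReal)
            (1 : Matrix (Fin n) (Fin n) ℂ) 0 +
        Matrix.fromBlocks 0
          (-(star (Complex.exp ((↑(ε * (α - π / 2)) : ℂ) * Complex.I)) •
              (C.map Complex.ofReal).transpose))
          (-(Complex.exp ((↑(ε * (α - π / 2)) : ℂ) * Complex.I) • C.map Complex.ofReal))
          (-(Complex.exp ((↑(ε * (α - π / 2)) : ℂ) * Complex.I) • D.map Complex.ofReal +
            star (Complex.exp ((↑(ε * (α - π / 2)) : ℂ) * Complex.I)) •
              D.transpose.map Complex.ofReal)))).PosDef := by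
  simp only [transpose_map, map_ofReal_transpose]
  exact exists_congr fun ε => and_congr_right fun _ =>
    halfCramped_sectored_real_lemma_general (fun ω _ h => by simpa using hA _ h) _ _ _ _
end
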